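/- Let n > 1, L ⊆ ℂᴺ compact polynomially convex, and K̃ ⊆ ℂ^{N+n} a compact polynomially convex set whose projection to ℂᴺ is contained in L, with fibres K_z = {ζ : (z,ζ) ∈ K̃}. Let f be holomorphic on a neighbourhood of L with f(z) ∉ K_z for all z ∈ L. Then there exist a neighbourhood V of L and a holomorphic map F : V × ℂⁿ → ℂⁿ such that for each z ∈ V ∩ L: F(z,0) = f(z), ζ ↦ F(z,ζ) is injective, and F({z} × ℂⁿ) ∩ K_z = ∅. -/

import Mathlib

noncomputable section
open Set Metric MvPolynomial

/-- The polynomially convex hull of a set in `ℂⁿ`. -/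
def polyHull {n : ℕ} (K : Set (EuclideanSpace ℂ (Fin n))) : Set (EuclideanSpace ℂ (Fin n)) :=
  {z | ∀ p : MvPolynomial (Fin n) ℂ,
    ‖eval (fun i => z i) p‖ ≤ sSup ((fun w => ‖eval (fun i => w i) p‖) '' K)}

/-- A compact set in `ℂⁿ` is polynomially convex if it equals its polynomial hull. -/
def IsPolyConvex {n : ℕ} (K : Set (EuclideanSpace ℂ (Fin n))) : Prop :=
  polyHull K = K

/-- Polynomial hull for subsets of a product `ℂᴺ × ℂⁿ ≅ ℂ^{N+n}`, using polynomials in the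
`N + n` coordinates. -/
def polyHull2 {N n : ℕ} (S : Set (EuclideanSpace ℂ (Fin N) × EuclideanSpace ℂ (Fin n))) :
    Set (EuclideanSpace ℂ (Fin N) × EuclideanSpace ℂ (Fin n)) :=
  {z | ∀ p : MvPolynomial (Fin N ⊕ Fin n) ℂ,
    ‖eval (Sum.elim (fun i => z.1 i) (fun j => z.2 j)) p‖ ≤
      sSup ((fun w => ‖eval (Sum.elim (fun i => w.1 i) (fun j => w.2 j)) p‖) '' S)}

def IsPolyConvex2 {N n : ℕ} (S : Set (EuclideanSpace ℂ (Fin N) × EuclideanSpace ℂ (Fin n))) :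
    Prop :=
  polyHull2 S = S

open Filter Topology

section Holomorphic

variable {E F G : Type*} [NormedAddCommGroup E] [NormedSpace ℂ E] [NormedAddCommGroup F]
  [NormedSpace ℂ F] [NormedAddCommGroup G] [NormedSpace ℂ G]

/-- `f` is complex differentiable on a neighbourhood of `x`. -/
def HolAt (f : E → F) (x : E) : Prop := ∀ᶠ y in 𝓝 x, DifferentiableAt ℂ f y

theorem HolAt.differentiableAt {f : E → F} {x : E} (h : HolAt f x) : DifferentiableAt ℂ f x :=
  h.self_of_nhds

theorem HolAt.eventually {f : E → F} {x : E} (h : HolAt f x) : ∀ᶠ y in 𝓝 x, HolAt f y :=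
  eventually_eventually_nhds.2 h

theorem HolAt.congr {f g : E → F} {x : E} (h : HolAt f x) (hfg : f =ᶠ[𝓝 x] g) : HolAt g x := by
  filter_upwards [h, hfg.eventuallyEq_nhds] with y hy hy'
  exact hy'.differentiableAt_iff.1 hy

theorem Differentiable.holAt {f : E → F} (h : Differentiable ℂ f) (x : E) : HolAt f x :=
  Eventually.of_forall h

theorem HolAt.sub {f g : E → F} {x : E} (hf : HolAt f x) (hg : HolAt g x) :
    HolAt (fun y => f y - g y) x := by
  filter_upwards [hf, hg] with y h1 h2 using h1.sub h2

theorem HolAt.mul {f g : E → ℂ} {x : E} (hf : HolAt f x) (hg : HolAt g x) :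
    HolAt (fun y => f y * g y) x := by
  filter_upwards [hf, hg] with y h1 h2 using h1.mul h2

theorem HolAt.div {f g : E → ℂ} {x : E} (hf : HolAt f x) (hg : HolAt g x) (h0 : g x ≠ 0) :
    HolAt (fun y => f y / g y) x := by
  filter_upwards [hf, hg, hg.differentiableAt.continuousAt.eventually_ne h0] with y h1 h2 h3
  simp only [div_eq_mul_inv]
  exact h1.mul (h2.inv h3)

theorem HolAt.comp {g : F → G} {f : E → F} {x : E} (hg : HolAt g (f x)) (hf : HolAt f x) :
    HolAt (fun y => g (f y)) x := by
  filter_upwards [hf.differentiableAt.continuousAt.eventually hg, hf] with y h1 h2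
  exact h1.comp y h2

/-- Cauchy's estimate for the Fréchet derivative. -/
theorem norm_fderiv_le_of_bound {f : E → F} {x : E} {r M : ℝ} (hr : 0 < r)
    (hf : DifferentiableOn ℂ f (ball x r)) (hM : ∀ y ∈ ball x r, ‖f y‖ ≤ M) :
    ‖fderiv ℂ f x‖ ≤ 2 * M / r := by
  refine Complex.norm_fderiv_le_div_of_mapsTo_ball hf (fun y hy => ?_) hr
  rw [mem_closedBall, dist_eq_norm]
  have := norm_sub_le (f y) (f x)
  linarith [hM y hy, hM x (mem_ball_self hr)]

/-- A bounded holomorphic function on a ball is Lipschitz on the concentric ball of half radius. -/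
theorem norm_sub_le_of_bound {f : E → F} {x y y' : E} {r M : ℝ} (hr : 0 < r)
    (hf : DifferentiableOn ℂ f (ball x (2 * r))) (hM : ∀ y ∈ ball x (2 * r), ‖f y‖ ≤ M)
    (hy : y ∈ ball x r) (hy' : y' ∈ ball x r) : ‖f y - f y'‖ ≤ 2 * M / r * ‖y - y'‖ := by
  have hsub : ∀ w ∈ ball x r, ball w r ⊆ ball x (2 * r) := fun w hw => by
    apply ball_subset_ball'
    linarith [mem_ball.1 hw]
  refine Convex.norm_image_sub_le_of_norm_fderiv_le (𝕜 := ℂ) (s := ball x r) (fun w hw => ?_)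
    (fun w hw => ?_) (convex_ball x r) hy' hy
  · exact hf.differentiableAt (isOpen_ball.mem_nhds (hsub w hw (mem_ball_self hr)))
  · exact norm_fderiv_le_of_bound hr (hf.mono (hsub w hw)) (fun v hv => hM v (hsub w hw hv))

/-- Uniform limits of holomorphic maps on an open set are holomorphic. -/
theorem differentiableOn_of_tendstoUniformlyOn [CompleteSpace F] {f : ℕ → E → F} {g : E → F}
    {s : Set E} (hs : IsOpen s) (hf : ∀ᶠ n in atTop, DifferentiableOn ℂ (f n) s)
    (h : TendstoUniformlyOn f g atTop s) : DifferentiableOn ℂ g s := by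
  intro x hx
  obtain ⟨r, hr, hrs⟩ := Metric.isOpen_iff.1 hs x hx
  have hr2 : 0 < r / 2 := by positivity
  have hsub : ∀ w ∈ ball x (r / 2), ball w (r / 2) ⊆ s := fun w hw => by
    refine (ball_subset_ball' ?_).trans hrs
    linarith [mem_ball.1 hw]
  have hC : UniformCauchySeqOn (fun n => fderiv ℂ (f n)) atTop (ball x (r / 2)) := by
    rw [Metric.uniformCauchySeqOn_iff]
    intro ε hε
    obtain ⟨N, hN⟩ := Metric.uniformCauchySeqOn_iff.1 h.uniformCauchySeqOn (ε * r / 8)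
      (by positivity)
    obtain ⟨N', hN'⟩ := eventually_atTop.1 hf
    refine ⟨max N N', fun m hm n hn w hw => ?_⟩
    have hw' : s ∈ 𝓝 w := hs.mem_nhds (hsub w hw (mem_ball_self hr2))
    have hdm := hN' m (le_of_max_le_right hm)
    have hdn := hN' n (le_of_max_le_right hn)
    rw [dist_eq_norm, ← fderiv_sub (hdm.differentiableAt hw') (hdn.differentiableAt hw')]
    have := norm_fderiv_le_of_bound (f := f m - f n) (M := ε * r / 8) hr2
      ((hdm.sub hdn).mono (hsub w hw)) (fun y hy => by
        rw [Pi.sub_apply, ← dist_eq_norm]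
        exact (hN m (le_of_max_le_left hm) n (le_of_max_le_left hn) y (hsub w hw hy)).le)
    refine this.trans_lt ?_
    field_simp
    norm_num
  have hlim : ∃ g' : E → E →L[ℂ] F, TendstoUniformlyOn (fun n => fderiv ℂ (f n)) g' atTop
      (ball x (r / 2)) := by
    have : ∀ w ∈ ball x (r / 2), ∃ l, Tendsto (fun n => fderiv ℂ (f n) w) atTop (𝓝 l) :=
      fun w hw => cauchySeq_tendsto_of_complete (hC.cauchySeq hw)
    choose! g' hg' using this
    exact ⟨g', hC.tendstoUniformlyOn_of_tendsto hg'⟩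
  obtain ⟨g', hg'⟩ := hlim
  have hb : ball x (r / 2) ⊆ s := (ball_subset_ball (by linarith)).trans hrs
  refine ((hasFDerivAt_of_tendstoUniformlyOnFilter (x := x) (f := f) (g := g)
    (f' := fun n => fderiv ℂ (f n)) (g' := g') (l := atTop) ?_ ?_ ?_).differentiableAt).differentiableWithinAt
  · have := hg'.tendstoUniformlyOnFilter
    exact this.mono_right (le_principal_iff.2 (ball_mem_nhds x hr2))
  · rw [eventually_prod_iff]
    refine ⟨_, hf, _, hs.mem_nhds hx, fun {n} hn {y} hy => ?_⟩
    exact (hn.differentiableAt (hs.mem_nhds hy)).hasFDerivAt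
  · filter_upwards [hs.mem_nhds hx] with y hy using h.tendsto_at hy

/-- Integrals of holomorphic functions depending continuously on a parameter are holomorphic. -/
theorem differentiableAt_intervalIntegral [ProperSpace E] {g : E → ℝ → ℂ} {x₀ : E} {r a b : ℝ}
    (hr : 0 < r) (hd : ∀ t ∈ uIcc a b, DifferentiableOn ℂ (fun x => g x t) (ball x₀ r))
    (hc : ContinuousOn (fun q : E × ℝ => g q.1 q.2) (ball x₀ r ×ˢ uIcc a b)) :
    DifferentiableAt ℂ (fun x => ∫ t in a..b, g x t) x₀ := by
  have hr2 : 0 < r / 2 := by positivity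
  have hr4 : 0 < r / 4 := by positivity
  have hK : IsCompact (closedBall x₀ (r / 2) ×ˢ uIcc a b) :=
    (isCompact_closedBall _ _).prod isCompact_uIcc
  have hcK := hc.mono (prod_mono_left (t := uIcc a b) (closedBall_subset_ball (x := x₀) (half_lt_self hr)))
  obtain ⟨M, hM⟩ := hK.exists_bound_of_continuousOn hcK
  have hslice : ∀ x ∈ closedBall x₀ (r / 2), ContinuousOn (g x) (uIcc a b) := fun x hx =>
    hcK.comp (f := fun t => (x, t)) (by fun_prop) (fun t ht => ⟨hx, ht⟩)
  have hmeas : ∀ f : ℝ → E →L[ℂ] ℂ, ContinuousOn f (uIcc a b) →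
      MeasureTheory.AEStronglyMeasurable f (MeasureTheory.volume.restrict (uIoc a b)) := fun f hf =>
    (hf.mono uIoc_subset_uIcc).aestronglyMeasurable measurableSet_uIoc
  refine (intervalIntegral.hasFDerivAt_integral_of_dominated_loc_of_lip (𝕜 := ℂ)
    (μ := MeasureTheory.volume) (F := g) (F' := fun t => fderiv ℂ (fun x => g x t) x₀)
    (bound := fun _ => 2 * M / (r / 4))
    (s := ball x₀ (r / 4)) (ball_mem_nhds _ hr4) ?_ ?_ (hmeas _ ?_) ?_ ?_ ?_).2.differentiableAt
  · filter_upwards [ball_mem_nhds x₀ hr2] with x hx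
    exact ((hslice x (ball_subset_closedBall hx)).mono uIoc_subset_uIcc).aestronglyMeasurable
      measurableSet_uIoc
  · exact (hslice x₀ (mem_closedBall_self hr2.le)).intervalIntegrable
  · have huc := hK.uniformContinuousOn_of_continuous hcK
    rw [Metric.uniformContinuousOn_iff] at huc
    rw [Metric.continuousOn_iff]
    intro t ht ε hε
    obtain ⟨δ, hδ, h⟩ := huc (ε * r / 8) (by positivity)
    refine ⟨δ, hδ, fun u hu hut => ?_⟩
    have hmem : ball x₀ (r / 2) ⊆ ball x₀ r := ball_subset_ball (by linarith)
    have h0 := ball_mem_nhds x₀ hr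
    rw [dist_eq_norm, ← fderiv_fun_sub ((hd u hu).differentiableAt h0) ((hd t ht).differentiableAt h0)]
    refine (norm_fderiv_le_of_bound (M := ε * r / 8) hr2 (((hd u hu).fun_sub (hd t ht)).mono hmem)
      (fun y hy => ?_)).trans_lt ?_
    · have hy' := ball_subset_closedBall hy
      have := h (y, u) ⟨hy', hu⟩ (y, t) ⟨hy', ht⟩ (by simpa [Prod.dist_eq, hδ] using hut)
      rw [dist_eq_norm] at this
      exact this.le
    · field_simp
      norm_num
  · refine Eventually.of_forall fun t ht => LipschitzOnWith.of_dist_le_mul fun y hy y' hy' => ?_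
    have ht' := uIoc_subset_uIcc ht
    rw [dist_eq_norm, dist_eq_norm]
    have hb : ball x₀ (2 * (r / 4)) ⊆ closedBall x₀ (r / 2) := by
      refine ball_subset_closedBall.trans (closedBall_subset_closedBall (by linarith))
    refine (norm_sub_le_of_bound hr4 ((hd t ht').mono (ball_subset_ball (by linarith)))
      (fun w hw => hM (w, t) ⟨hb hw, ht'⟩) hy hy').trans ?_
    gcongr
    exact le_abs_self _
  · exact intervalIntegrable_const
  · refine Eventually.of_forall fun t ht => ?_
    exact ((hd t (uIoc_subset_uIcc ht)).differentiableAt (ball_mem_nhds x₀ hr)).hasFDerivAt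

/-- A version of `differentiableAt_intervalIntegral` for integrands of the form `Q (x, γ t)`. -/
theorem holAt_intervalIntegral [ProperSpace E] {Q : E × ℂ → ℂ} {γ : ℝ → ℂ} {κ : ℝ → ℂ} {x₀ : E} {a b : ℝ}
    (hγ : Continuous γ) (hκ : Continuous κ) (hQ : ∀ t ∈ uIcc a b, HolAt Q (x₀, γ t)) :
    HolAt (fun x => ∫ t in a..b, κ t * Q (x, γ t)) x₀ := by
  have hev : ∀ᶠ x in 𝓝 x₀, ∀ t ∈ uIcc a b, HolAt Q (x, γ t) := by
    refine isCompact_uIcc.eventually_forall_of_forall_eventually fun t ht => ?_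
    have hc : Tendsto (fun q : E × ℝ => (q.1, γ q.2)) (𝓝 (x₀, t)) (𝓝 (x₀, γ t)) := by
      apply Continuous.tendsto'
      · fun_prop
      · rfl
    exact hc.eventually (hQ t ht).eventually
  obtain ⟨r, hr, h⟩ := Metric.eventually_nhds_iff_ball.1 hev
  refine Metric.eventually_nhds_iff_ball.2 ⟨r, hr, fun x hx => ?_⟩
  obtain ⟨r', hr', hb⟩ := Metric.isOpen_iff.1 isOpen_ball x hx
  refine differentiableAt_intervalIntegral hr' (fun t ht y hy => ?_) (fun q hq => ?_)
  · have h1 := (h y (hb hy) t ht).differentiableAt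
    exact ((h1.comp y (f := fun y => (y, γ t)) (by fun_prop)).const_mul _).differentiableWithinAt
  · have h1 := (h q.1 (hb hq.1) q.2 hq.2).differentiableAt.continuousAt
    exact (hκ.comp continuous_snd).continuousAt.continuousWithinAt.mul
      (ContinuousAt.comp (g := Q) (f := fun q : E × ℝ => (q.1, γ q.2)) h1 (by fun_prop)).continuousWithinAt

end Holomorphic

section Cousin

/-- A parabolic arc from `b` to `c` in the complex plane. -/
def arc (b c η : ℝ) (t : ℝ) : ℂ := t + ((η * ((t - b) * (c - t)) : ℝ) : ℂ) * Complex.I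

/-- The velocity of `arc`. -/
def arcDeriv (b c η : ℝ) (t : ℝ) : ℂ := 1 + ((η * (b + c - 2 * t) : ℝ) : ℂ) * Complex.I

theorem arc_re (b c η t : ℝ) : (arc b c η t).re = t := by simp [arc]

theorem arc_im (b c η t : ℝ) : (arc b c η t).im = η * ((t - b) * (c - t)) := by simp [arc]

theorem arc_left (b c η : ℝ) : arc b c η b = b := by simp [arc]

theorem arc_right (b c η : ℝ) : arc b c η c = c := by simp [arc]

theorem continuous_arc (b c η : ℝ) : Continuous (arc b c η) := by unfold arc; fun_prop

theorem continuous_arcDeriv (b c η : ℝ) : Continuous (arcDeriv b c η) := by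
  unfold arcDeriv; fun_prop

theorem hasDerivAt_arc (b c η t : ℝ) : HasDerivAt (arc b c η) (arcDeriv b c η t) t := by
  unfold arc arcDeriv
  have h1 : HasDerivAt (fun t : ℝ => η * ((t - b) * (c - t))) (η * (b + c - 2 * t)) t := by
    refine ((((hasDerivAt_id t).sub_const b).mul
      ((hasDerivAt_id t).const_sub c)).const_mul η).congr_deriv ?_
    rw [id_eq]
    ring
  exact (Complex.ofRealCLM.hasDerivAt (x := t)).add (h1.ofReal_comp.mul_const _)

theorem log_sub_log_neg_of_im_pos {A : ℂ} (h : 0 < A.im) :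
    Complex.log A - Complex.log (-A) = Real.pi * Complex.I := by
  simp only [Complex.log, norm_neg, Complex.arg_neg_eq_arg_sub_pi_of_im_pos h]
  push_cast
  ring

theorem arc_ne_of_im_lt {b c η : ℝ} {w : ℂ} (t : ℝ)
    (h : w.im ≠ η * ((w.re - b) * (c - w.re))) : arc b c η t - w ≠ 0 := by
  intro h0
  have h1 : arc b c η t = w := sub_eq_zero.1 h0
  have hre := arc_re b c η t
  have him := arc_im b c η t
  rw [h1] at hre him
  rw [hre] at h
  exact h him

/-- The winding number of the lens bounded by two arcs around an interior point is one. -/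
theorem integral_arc_sub_integral_arc {b c η : ℝ} {w : ℂ} (hb : b < w.re) (hc : w.re < c)
    (hw : |w.im| < η * ((w.re - b) * (c - w.re))) :
    (∫ t in b..c, arcDeriv b c (-η) t * (1 / (arc b c (-η) t - w))) -
      ∫ t in b..c, arcDeriv b c η t * (1 / (arc b c η t - w)) = 2 * Real.pi * Complex.I := by
  obtain ⟨hw1, hw2⟩ := abs_lt.1 hw
  have key : ∀ (σ : ℝ) (u : ℂ), u ≠ 0 → (∀ t, u * (arc b c σ t - w) ∈ Complex.slitPlane) →
      ∫ t in b..c, arcDeriv b c σ t * (1 / (arc b c σ t - w)) =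
        Complex.log (u * (c - w)) - Complex.log (u * (b - w)) := by
    intro σ u hu hs
    have hne : ∀ t, arc b c σ t - w ≠ 0 := fun t h => by
      have := Complex.slitPlane_ne_zero (hs t)
      simp [h] at this
    have := intervalIntegral.integral_eq_sub_of_hasDerivAt (a := b) (b := c)
      (f := fun t => Complex.log (u * (arc b c σ t - w)))
      (f' := fun t => arcDeriv b c σ t * (1 / (arc b c σ t - w))) (fun t _ => ?_) ?_
    · rw [this]; simp only [arc_left, arc_right]
    · have h1 := (((hasDerivAt_arc b c σ t).sub_const w).const_mul u).clog_real (hs t)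
      rw [mul_div_mul_left _ _ hu] at h1
      rwa [mul_one_div]
    · apply Continuous.intervalIntegrable
      refine (continuous_arcDeriv b c σ).mul ?_
      exact continuous_const.div ((continuous_arc b c σ).sub continuous_const) hne
  rw [key (-η) Complex.I Complex.I_ne_zero, key η (-Complex.I) (neg_ne_zero.2 Complex.I_ne_zero)]
  · have h1 := log_sub_log_neg_of_im_pos (A := Complex.I * (c - w)) (by simp; linarith)
    have h2 := log_sub_log_neg_of_im_pos (A := -(Complex.I * (b - w))) (by simp; linarith)
    rw [neg_neg] at h2
    rw [neg_mul, neg_mul]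
    linear_combination h1 + h2
  · intro t
    rw [Complex.mem_slitPlane_iff]
    by_cases h : t = w.re
    · left
      simp [arc_im, arc_re, h]
      linarith
    · right
      simpa [arc_im, arc_re, sub_eq_zero, eq_comm] using h
  · intro t
    rw [Complex.mem_slitPlane_iff]
    by_cases h : t = w.re
    · left
      simp [arc_im, arc_re, h]
      linarith
    · right
      simpa [arc_im, arc_re, sub_eq_zero] using h

/-- Cauchy's formula for the lens bounded by two arcs. -/
theorem integral_arc_sub_integral_arc_eq {b c η : ℝ} {w : ℂ} (hb : b < w.re) (hc : w.re < c)
    (hw : |w.im| < η * ((w.re - b) * (c - w.re))) {R : Set ℂ} (hR : Convex ℝ R) (hRo : IsOpen R)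
    (hwR : w ∈ R) (h1 : ∀ t ∈ Icc b c, arc b c η t ∈ R) (h2 : ∀ t ∈ Icc b c, arc b c (-η) t ∈ R)
    {g : ℂ → ℂ} (hg : DifferentiableOn ℂ g R) :
    (∫ t in b..c, arcDeriv b c (-η) t * (g (arc b c (-η) t) / (arc b c (-η) t - w))) -
      ∫ t in b..c, arcDeriv b c η t * (g (arc b c η t) / (arc b c η t - w)) =
        2 * Real.pi * Complex.I * g w := by
  obtain ⟨hw1, hw2⟩ := abs_lt.1 hw
  have hbc : b ≤ c := (hb.trans hc).le
  have hd := (Complex.differentiableOn_dslope (hRo.mem_nhds hwR)).2 hg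
  obtain ⟨P, hP⟩ := hR.exists_forall_hasDerivWithinAt hd
  have key : ∀ σ, w.im ≠ σ * ((w.re - b) * (c - w.re)) → (∀ t ∈ Icc b c, arc b c σ t ∈ R) →
      ∫ t in b..c, arcDeriv b c σ t * (g (arc b c σ t) / (arc b c σ t - w)) =
        (P c - P b) + g w * ∫ t in b..c, arcDeriv b c σ t * (1 / (arc b c σ t - w)) := by
    intro σ hσ hmem
    have hne : ∀ t, arc b c σ t - w ≠ 0 := fun t => arc_ne_of_im_lt t hσ
    have hI := intervalIntegral.integral_eq_sub_of_hasDerivAt (a := b) (b := c)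
      (f := fun t => P (arc b c σ t))
      (f' := fun t => dslope g w (arc b c σ t) * arcDeriv b c σ t) (fun t ht => ?_) ?_
    · rw [arc_left, arc_right] at hI
      rw [← hI, ← intervalIntegral.integral_const_mul, ← intervalIntegral.integral_add]
      · refine intervalIntegral.integral_congr fun t _ => ?_
        have h0 := hne t
        rw [dslope_of_ne _ (sub_ne_zero.1 h0), slope_def_field]
        field_simp
        ring
      · apply ContinuousOn.intervalIntegrable
        rw [uIcc_of_le hbc]
        exact (hd.continuousOn.comp (continuous_arc b c σ).continuousOn hmem).mul
          (continuous_arcDeriv b c σ).continuousOn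
      · apply Continuous.intervalIntegrable
        exact continuous_const.mul ((continuous_arcDeriv b c σ).mul
          (continuous_const.div ((continuous_arc b c σ).sub continuous_const) hne))
    · rw [uIcc_of_le hbc] at ht
      exact ((hP _ (hmem t ht)).hasDerivAt (hRo.mem_nhds (hmem t ht))).comp t
        (hasDerivAt_arc b c σ t)
    · apply ContinuousOn.intervalIntegrable
      rw [uIcc_of_le hbc]
      exact (hd.continuousOn.comp (continuous_arc b c σ).continuousOn hmem).mul
          (continuous_arcDeriv b c σ).continuousOn
  rw [key η hw2.ne h1, key (-η) (by linarith) h2]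
  linear_combination (g w) * integral_arc_sub_integral_arc hb hc hw

/-- The additive Cousin problem for a segment of the real axis, with parameters. -/
theorem exists_cousin_split {E : Type*} [NormedAddCommGroup E] [NormedSpace ℂ E] [ProperSpace E]
    {P : Set E} (hP : IsCompact P) {b₀ c₀ : ℝ} (hbc₀ : b₀ ≤ c₀) {Q : E × ℂ → ℂ}
    (hQ : ∀ x ∈ P, ∀ t ∈ Icc b₀ c₀, HolAt Q (x, (t : ℂ))) :
    ∃ Q₁ Q₂ : E × ℂ → ℂ,
      (∀ x ∈ P, ∀ w : ℂ, w.im ≤ 0 → (w.im = 0 → w.re ∈ Icc b₀ c₀) → HolAt Q₁ (x, w)) ∧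
      (∀ x ∈ P, ∀ w : ℂ, 0 ≤ w.im → (w.im = 0 → w.re ∈ Icc b₀ c₀) → HolAt Q₂ (x, w)) ∧
      ∀ x ∈ P, ∀ t ∈ Icc b₀ c₀, ∀ᶠ q in 𝓝 (x, (t : ℂ)), Q q = Q₁ q - Q₂ q := by
  obtain ⟨ε, hε, hhol⟩ : ∃ ε > 0, ∀ x₀ ∈ P, ∀ x ∈ ball x₀ ε, ∀ w : ℂ, b₀ - ε < w.re →
      w.re < c₀ + ε → |w.im| < ε → HolAt Q (x, w) := by
    obtain ⟨δ, hδ, h⟩ := (hP.prod ((isCompact_Icc (a := b₀) (b := c₀)).image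
      Complex.continuous_ofReal)).exists_thickening_subset_open
      (isOpen_iff_mem_nhds.2 fun x (hx : HolAt Q x) => hx.eventually)
      (t := {x | HolAt Q x}) (by
        rintro ⟨x, _⟩ ⟨hx, ⟨t, ht, rfl⟩⟩
        exact hQ x hx t ht)
    refine ⟨δ / 2, by positivity, fun x₀ hx₀ x hx w hw1 hw2 hw3 => h ?_⟩
    rw [mem_thickening_iff]
    refine ⟨(x₀, ((max b₀ (min c₀ w.re) : ℝ) : ℂ)), ⟨hx₀, mem_image_of_mem _
      ⟨le_max_left _ _, max_le hbc₀ (min_le_left _ _)⟩⟩, ?_⟩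
    rw [Prod.dist_eq, max_lt_iff]
    refine ⟨(mem_ball.1 hx).trans (by linarith), ?_⟩
    rw [dist_eq_norm]
    refine (Complex.norm_le_abs_re_add_abs_im _).trans_lt ?_
    have : |w.re - max b₀ (min c₀ w.re)| < δ / 2 := by
      rw [abs_lt]
      constructor
      · have : max b₀ (min c₀ w.re) < w.re + δ / 2 :=
          max_lt (by linarith) ((min_le_right _ _).trans_lt (by linarith))
        linarith
      · have : w.re - δ / 2 < max b₀ (min c₀ w.re) :=
          lt_max_of_lt_right (lt_min (by linarith) (by linarith))
        linarith
    simp only [Complex.sub_re, Complex.sub_im, Complex.ofReal_re, Complex.ofReal_im, sub_zero]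
    linarith
  set b := b₀ - ε / 2 with hb
  set c := c₀ + ε / 2 with hc
  have hbc : 0 < c - b := by linarith
  set η := ε / (2 * (c - b) ^ 2) with hη
  have hη0 : 0 < η := by positivity
  have hηb : ∀ t ∈ Icc b c, η * ((t - b) * (c - t)) ≤ ε / 2 := by
    intro t ht
    have : (t - b) * (c - t) ≤ (c - b) ^ 2 := by nlinarith [ht.1, ht.2]
    calc η * ((t - b) * (c - t)) ≤ η * (c - b) ^ 2 := by gcongr
      _ = ε / 2 := by rw [hη]; field_simp
  have hηn : ∀ t ∈ Icc b c, 0 ≤ η * ((t - b) * (c - t)) := fun t ht =>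
    mul_nonneg hη0.le (mul_nonneg (by linarith [ht.1]) (by linarith [ht.2]))
  have hηz : ∀ t, η * ((t - b) * (c - t)) = 0 → t ∉ Icc b₀ c₀ := by
    intro t h0 ht
    have h1 : 0 < t - b := by linarith [ht.1]
    have h2 : 0 < c - t := by linarith [ht.2]
    exact (by positivity : 0 < η * ((t - b) * (c - t))).ne' h0
  have harc1 : ∀ t ∈ Icc b c, b₀ - ε < t ∧ t < c₀ + ε ∧ |η * ((t - b) * (c - t))| < ε := by
    intro t ht
    refine ⟨by linarith [ht.1], by linarith [ht.2], ?_⟩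
    rw [abs_of_nonneg (hηn t ht)]
    linarith [hηb t ht]
  have harc2 : ∀ t ∈ Icc b c, |-η * ((t - b) * (c - t))| < ε := by
    intro t ht
    rw [neg_mul, abs_neg]
    exact (harc1 t ht).2.2
  have hHol : ∀ σ : ℝ, (∀ t ∈ Icc b c, |σ * ((t - b) * (c - t))| < ε) → ∀ x ∈ P, ∀ w : ℂ,
      (∀ t ∈ Icc b c, arc b c σ t - w ≠ 0) →
      HolAt (fun q : E × ℂ => -(2 * Real.pi * Complex.I)⁻¹ *
        ∫ t in b..c, arcDeriv b c σ t * (Q (q.1, arc b c σ t) / (arc b c σ t - q.2))) (x, w) := by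
    intro σ hσ x hx w hw
    refine HolAt.mul ((differentiable_const _).holAt _) ?_
    refine holAt_intervalIntegral (Q := fun q : (E × ℂ) × ℂ => Q (q.1.1, q.2) / (q.2 - q.1.2))
      (continuous_arc b c σ) (continuous_arcDeriv b c σ) fun t ht => ?_
    rw [uIcc_of_le (by linarith)] at ht
    refine HolAt.div (HolAt.comp (f := fun q : (E × ℂ) × ℂ => (q.1.1, q.2)) ?_
      (Differentiable.holAt (by fun_prop) _)) (Differentiable.holAt (by fun_prop) _) (hw t ht)
    exact hhol x hx x (mem_ball_self hε) (arc b c σ t) (by rw [arc_re]; exact (harc1 t ht).1)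
      (by rw [arc_re]; exact (harc1 t ht).2.1) (by rw [arc_im]; exact hσ t ht)
  refine ⟨_, _, fun x hx w hw0 hw1 => hHol η (fun t ht => (harc1 t ht).2.2) x hx w ?_,
    fun x hx w hw0 hw1 => hHol (-η) harc2 x hx w ?_, ?_⟩
  · intro t ht h0
    have h1 : arc b c η t = w := sub_eq_zero.1 h0
    have him : w.im = _ := h1 ▸ arc_im b c η t
    have hre : w.re = _ := h1 ▸ arc_re b c η t
    have h2 := hηn t ht
    have h3 : w.im = 0 := le_antisymm hw0 (him ▸ h2)
    exact hηz t (him ▸ h3) (hre ▸ hw1 h3)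
  · intro t ht h0
    have h1 : arc b c (-η) t = w := sub_eq_zero.1 h0
    have him : w.im = _ := h1 ▸ arc_im b c (-η) t
    have hre : w.re = _ := h1 ▸ arc_re b c (-η) t
    have h2 := hηn t ht
    have h3 : w.im = 0 := le_antisymm (by linarith) hw0
    exact hηz t (by linarith) (hre ▸ hw1 h3)
  · intro x hx t ht
    have hev : ∀ᶠ q in 𝓝 (x, (t : ℂ)), q.1 ∈ ball x ε ∧ b < q.2.re ∧ q.2.re < c ∧
        |q.2.im| < η * ((q.2.re - b) * (c - q.2.re)) ∧ |q.2.im| < ε := by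
      have ht1 : 0 < t - b := by linarith [ht.1]
      have ht2 : 0 < c - t := by linarith [ht.2]
      refine IsOpen.mem_nhds (s := {q : E × ℂ | q.1 ∈ ball x ε ∧ b < q.2.re ∧ q.2.re < c ∧
        |q.2.im| < η * ((q.2.re - b) * (c - q.2.re)) ∧ |q.2.im| < ε}) ?_ ?_
      · refine (isOpen_ball.preimage continuous_fst).and ?_
        have hre : Continuous fun q : E × ℂ => q.2.re := Complex.continuous_re.comp continuous_snd
        have him : Continuous fun q : E × ℂ => q.2.im := Complex.continuous_im.comp continuous_snd
        exact (isOpen_lt continuous_const hre).and ((isOpen_lt hre continuous_const).and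
          ((isOpen_lt him.abs (by fun_prop)).and (isOpen_lt him.abs continuous_const)))
      · simp only [mem_ofPred_eq, Complex.ofReal_re, Complex.ofReal_im, abs_zero]
        exact ⟨mem_ball_self hε, by linarith, by linarith, by positivity, hε⟩
    filter_upwards [hev] with q hq
    obtain ⟨hq1, hq2, hq3, hq4, hq5⟩ := hq
    set R : Set ℂ := {w | b₀ - ε < w.re} ∩ {w | w.re < c₀ + ε} ∩ {w | -ε < w.im} ∩ {w | w.im < ε}
      with hRdef
    have hR : Convex ℝ R := (((convex_halfSpace_re_gt _).inter (convex_halfSpace_re_lt _)).inter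
      (convex_halfSpace_im_gt _)).inter (convex_halfSpace_im_lt _)
    have hRo : IsOpen R := (((isOpen_lt continuous_const Complex.continuous_re).inter
      (isOpen_lt Complex.continuous_re continuous_const)).inter
      (isOpen_lt continuous_const Complex.continuous_im)).inter
      (isOpen_lt Complex.continuous_im continuous_const)
    have hmemR : ∀ w : ℂ, b₀ - ε < w.re → w.re < c₀ + ε → |w.im| < ε → w ∈ R := fun w h1 h2 h3 =>
      ⟨⟨⟨h1, h2⟩, (abs_lt.1 h3).1⟩, (abs_lt.1 h3).2⟩
    have hmain := integral_arc_sub_integral_arc_eq hq2 hq3 hq4 hR hRo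
      (hmemR _ (by linarith) (by linarith) hq5)
      (fun t ht => hmemR _ (by rw [arc_re]; exact (harc1 t ht).1)
        (by rw [arc_re]; exact (harc1 t ht).2.1) (by rw [arc_im]; exact (harc1 t ht).2.2))
      (fun t ht => hmemR _ (by rw [arc_re]; exact (harc1 t ht).1)
        (by rw [arc_re]; exact (harc1 t ht).2.1) (by rw [arc_im]; exact harc2 t ht))
      (g := fun w => Q (q.1, w)) (fun w hw => by
        have := (hhol x hx q.1 hq1 w hw.1.1.1 hw.1.1.2 (abs_lt.2 ⟨hw.1.2, hw.2⟩)).differentiableAt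
        exact (this.comp w (f := fun w => (q.1, w)) (by fun_prop)).differentiableWithinAt)
    have hpi : (2 * Real.pi * Complex.I : ℂ) ≠ 0 := Complex.two_pi_I_ne_zero
    have halg : ∀ A B v : ℂ, A - B = 2 * Real.pi * Complex.I * v →
        v = -(2 * Real.pi * Complex.I)⁻¹ * B - -(2 * Real.pi * Complex.I)⁻¹ * A := by
      intro A B v h
      linear_combination (2 * Real.pi * Complex.I : ℂ)⁻¹ * -h + (-v) * inv_mul_cancel₀ hpi
    exact halg _ _ _ hmain

end Cousin

section Oka

/-- A product of compact convex plane sets. -/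
def Brick {d : ℕ} (X : Set (Fin d → ℂ)) : Prop :=
  ∃ C : Fin d → Set ℂ, (∀ i, IsCompact (C i) ∧ Convex ℝ (C i)) ∧ X = Set.pi univ C

/-- The set where all the functions of the list `l` are bounded by one. -/
def polyhedron {E : Type*} (l : List (E → ℂ)) : Set E := {z | ∀ p ∈ l, ‖p z‖ ≤ 1}

/-- Prepend a coordinate to a complex vector. -/
def vcons {d : ℕ} (w : ℂ) (z : Fin d → ℂ) : Fin (d + 1) → ℂ := Fin.cons w z

/-- Forget the first coordinate of a complex vector. -/
def vtail {d : ℕ} (z : Fin (d + 1) → ℂ) : Fin d → ℂ := fun i => z i.succ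

theorem vcons_zero {d : ℕ} (w : ℂ) (z : Fin d → ℂ) : vcons w z 0 = w := rfl

theorem vcons_succ {d : ℕ} (w : ℂ) (z : Fin d → ℂ) (i : Fin d) : vcons w z i.succ = z i := rfl

theorem vtail_vcons {d : ℕ} (w : ℂ) (z : Fin d → ℂ) : vtail (vcons w z) = z := rfl

theorem vcons_vtail {d : ℕ} (z : Fin (d + 1) → ℂ) : vcons (z 0) (vtail z) = z :=
  Fin.cons_self_tail z

theorem differentiable_vtail {d : ℕ} : Differentiable ℂ (vtail (d := d)) :=
  differentiable_pi.2 fun i => by unfold vtail; fun_prop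

theorem differentiable_vcons {d : ℕ} : Differentiable ℂ (fun q : ℂ × (Fin d → ℂ) => vcons q.1 q.2) :=
  differentiable_pi.2 fun i => by
    refine Fin.cases ?_ (fun i => ?_) i
    · simp only [vcons_zero]; fun_prop
    · simp only [vcons_succ]; fun_prop

theorem Brick.isCompact {d : ℕ} {X : Set (Fin d → ℂ)} (h : Brick X) : IsCompact X := by
  obtain ⟨C, hC, rfl⟩ := h
  exact isCompact_univ_pi fun i => (hC i).1

theorem Brick.inter_coord {d : ℕ} {X : Set (Fin d → ℂ)} (h : Brick X) (k : Fin d) {S : Set ℂ}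
    (hS : IsClosed S) (hS' : Convex ℝ S) : Brick (X ∩ {z | z k ∈ S}) := by
  obtain ⟨C, hC, rfl⟩ := h
  refine ⟨fun i => if i = k then C i ∩ S else C i, fun i => ?_, ?_⟩
  · by_cases hi : i = k
    · simp only [hi, if_true]
      exact ⟨(hC k).1.inter_right hS, (hC k).2.inter hS'⟩
    · simp only [hi, if_false]
      exact hC i
  · ext z
    simp only [mem_inter_iff, mem_univ_pi, mem_ofPred_eq]
    constructor
    · rintro ⟨h1, h2⟩ i
      by_cases hi : i = k
      · subst hi; simpa using ⟨h1 i, h2⟩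
      · simpa [hi] using h1 i
    · intro h
      refine ⟨fun i => ?_, by simpa using (by simpa using h k : z k ∈ C k ∧ z k ∈ S).2⟩
      by_cases hi : i = k
      · subst hi; exact (by simpa using h i : z i ∈ C i ∧ z i ∈ S).1
      · simpa [hi] using h i

theorem convex_im_mul_preimage (u : ℂ) {S : Set ℝ} (hS : Convex ℝ S) :
    Convex ℝ {w : ℂ | (u * w).im ∈ S} :=
  hS.linear_preimage (Complex.imLm.comp (LinearMap.mulLeft ℝ u))

theorem Brick.inter_strip {d : ℕ} {X : Set (Fin d → ℂ)} (h : Brick X) (k : Fin d) (u : ℂ)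
    {S : Set ℝ} (hS : IsClosed S) (hS' : Convex ℝ S) :
    Brick (X ∩ {z | (u * z k).im ∈ S}) :=
  h.inter_coord k (S := {w : ℂ | (u * w).im ∈ S})
    (hS.preimage (Complex.continuous_im.comp (continuous_const.mul continuous_id)))
    (convex_im_mul_preimage u hS')

theorem Brick.cons {d : ℕ} {X : Set (Fin d → ℂ)} (h : Brick X) (R : ℝ) :
    Brick {z : Fin (d + 1) → ℂ | ‖z 0‖ ≤ R ∧ vtail z ∈ X} := by
  obtain ⟨C, hC, rfl⟩ := h
  refine ⟨Fin.cons (closedBall 0 R) C, fun i => ?_, ?_⟩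
  · refine Fin.cases ?_ (fun i => ?_) i
    · exact ⟨isCompact_closedBall _ _, convex_closedBall _ _⟩
    · exact hC i
  · ext z
    simp only [mem_ofPred_eq, mem_univ_pi, Fin.forall_fin_succ, Fin.cons_zero, Fin.cons_succ,
      mem_closedBall_zero_iff, vtail]

theorem isClosed_polyhedron {E : Type*} [TopologicalSpace E] {l : List (E → ℂ)}
    (h : ∀ p ∈ l, Continuous p) : IsClosed (polyhedron l) := by
  have : polyhedron l = ⋂ p ∈ l, {z | ‖p z‖ ≤ 1} := by ext; simp [polyhedron]
  rw [this]
  exact isClosed_biInter fun p hp => isClosed_le (h p hp).norm continuous_const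

/-- Solvability of the additive Cousin problem across real hyperplanes on bricks. -/
def SplitProp (d : ℕ) (l : List ((Fin d → ℂ) → ℂ)) : Prop :=
  ∀ X : Set (Fin d → ℂ), Brick X → ∀ (k : Fin d) (u : ℂ), u ≠ 0 → ∀ (a : ℝ) (D : (Fin d → ℂ) → ℂ),
    (∀ z ∈ X ∩ polyhedron l, (u * z k).im = a → HolAt D z) →
    ∃ D₁ D₂ : (Fin d → ℂ) → ℂ,
      (∀ z ∈ X ∩ polyhedron l, (u * z k).im ≤ a → HolAt D₁ z) ∧
      (∀ z ∈ X ∩ polyhedron l, a ≤ (u * z k).im → HolAt D₂ z) ∧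
      ∀ z ∈ X ∩ polyhedron l, (u * z k).im = a → ∀ᶠ y in 𝓝 z, D y = D₁ y - D₂ y

theorem splitProp_nil (d : ℕ) : SplitProp d [] := by
  intro X hX k u hu a D hD
  have hpoly : polyhedron ([] : List ((Fin d → ℂ) → ℂ)) = univ := by ext; simp [polyhedron]
  simp only [hpoly, inter_univ] at hD ⊢
  have hXc := hX.isCompact
  obtain ⟨C, hC, rfl⟩ := hX
  set T : Set ℝ := {t : ℝ | u⁻¹ * (t + a * Complex.I) ∈ C k} with hT
  have hline : ∀ w : ℂ, (u * w).im = a → u⁻¹ * (((u * w).re : ℂ) + a * Complex.I) = w := by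
    intro w hw
    rw [← hw, Complex.re_add_im, inv_mul_cancel_left₀ hu]
  have hlineim : ∀ t : ℝ, (u * (u⁻¹ * ((t : ℂ) + a * Complex.I))).im = a := by
    intro t
    rw [mul_inv_cancel_left₀ hu]; simp
  by_cases hne : T.Nonempty
  swap
  · refine ⟨0, 0, fun z _ _ => (differentiable_const (0 : ℂ)).holAt z,
      fun z _ _ => (differentiable_const (0 : ℂ)).holAt z, fun z hz hza => ?_⟩
    refine absurd ⟨(u * z k).re, ?_⟩ hne
    rw [hT, mem_ofPred_eq, hline _ hza]
    exact hz k (mem_univ k)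
  have hTconv : Convex ℝ T := by
    intro s hs t ht α β hα hβ hαβ
    have := (hC k).2 hs ht hα hβ hαβ
    rw [hT, mem_ofPred_eq]
    convert this using 1
    have h1 : (α : ℂ) + β = 1 := by exact_mod_cast hαβ
    simp only [smul_eq_mul, Complex.real_smul]
    push_cast
    linear_combination (-(u⁻¹ * a * Complex.I)) * h1
  have hTc : IsCompact T := by
    have : T = (fun w : ℂ => (u * w).re) '' (C k ∩ {w | (u * w).im = a}) := by
      ext t
      constructor
      · intro ht
        refine ⟨_, ⟨ht, hlineim t⟩, ?_⟩
        simp only [mul_inv_cancel_left₀ hu]; simp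
      · rintro ⟨w, ⟨hw, hw'⟩, rfl⟩
        rw [hT, mem_ofPred_eq, hline w hw']
        exact hw
    rw [this]
    have hcont : Continuous fun w : ℂ => u * w := continuous_const.mul continuous_id
    exact ((hC k).1.inter_right (isClosed_eq (Complex.continuous_im.comp hcont)
      continuous_const)).image (Complex.continuous_re.comp hcont)
  have hTI := eq_Icc_of_connected_compact ⟨hne, hTconv.isPreconnected⟩ hTc
  have hle : sInf T ≤ sSup T := by
    rw [hTI] at hne; exact nonempty_Icc.1 hne
  have hupd : Differentiable ℂ fun q : (Fin d → ℂ) × ℂ =>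
      Function.update q.1 k (u⁻¹ * (q.2 + a * Complex.I)) := by
    refine differentiable_pi.2 fun i => ?_
    by_cases hi : i = k
    · subst hi; simp only [Function.update_self]; fun_prop
    · simp only [ne_eq, hi, not_false_eq_true, Function.update_of_ne]; fun_prop
  obtain ⟨Q₁, Q₂, h1, h2, h3⟩ := exists_cousin_split hXc hle
    (Q := fun q => D (Function.update q.1 k (u⁻¹ * (q.2 + a * Complex.I)))) (fun z hz t ht => by
      refine HolAt.comp (f := fun q : (Fin d → ℂ) × ℂ =>
        Function.update q.1 k (u⁻¹ * (q.2 + a * Complex.I))) (hD _ ?_ ?_) (hupd.holAt _)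
      · intro i _
        by_cases hi : i = k
        · subst hi; rw [← hTI, hT, mem_ofPred_eq] at ht; simpa using ht
        · simpa [hi] using hz i (mem_univ i)
      · simp only [Function.update_self]
        exact hlineim t)
  have hg : Differentiable ℂ fun z : Fin d → ℂ => (z, u * z k - a * Complex.I) := by fun_prop
  have hre : ∀ z ∈ Set.pi univ C, (u * z k).im = a → (u * z k - a * Complex.I).re ∈
      Icc (sInf T) (sSup T) := by
    intro z hz hza
    rw [← hTI, hT, mem_ofPred_eq]
    simp only [Complex.sub_re, Complex.re_ofReal_mul, Complex.I_re, mul_zero, sub_zero]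
    rw [hline _ hza]
    exact hz k (mem_univ k)
  refine ⟨fun z => Q₁ (z, u * z k - a * Complex.I), fun z => Q₂ (z, u * z k - a * Complex.I),
    fun z hz hza => ?_, fun z hz hza => ?_, fun z hz hza => ?_⟩
  · refine HolAt.comp (f := fun z : Fin d → ℂ => (z, u * z k - a * Complex.I)) (h1 z hz _ ?_ ?_) (hg.holAt z)
    · simp only [Complex.sub_im, Complex.im_ofReal_mul, Complex.I_im, mul_one]; linarith
    · intro h
      simp only [Complex.sub_im, Complex.im_ofReal_mul, Complex.I_im, mul_one] at h
      exact hre z hz (by linarith)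
  · refine HolAt.comp (f := fun z : Fin d → ℂ => (z, u * z k - a * Complex.I)) (h2 z hz _ ?_ ?_) (hg.holAt z)
    · simp only [Complex.sub_im, Complex.im_ofReal_mul, Complex.I_im, mul_one]; linarith
    · intro h
      simp only [Complex.sub_im, Complex.im_ofReal_mul, Complex.I_im, mul_one] at h
      exact hre z hz (by linarith)
  · have h4 := h3 z hz _ (hre z hz hza)
    have h5 : (((u * z k - a * Complex.I).re : ℝ) : ℂ) = u * z k - a * Complex.I := by
      apply Complex.ext
      · simp
      · simp [hza]
    rw [h5] at h4
    filter_upwards [hg.continuous.continuousAt.eventually h4] with y hy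
    rw [← hy]
    simp only [sub_add_cancel, inv_mul_cancel_left₀ hu, Function.update_eq_self]

/-- Division of a holomorphic function vanishing on a graph. -/
theorem holAt_dslope_graph {E : Type*} [NormedAddCommGroup E] [NormedSpace ℂ E] [ProperSpace E]
    {G : ℂ × E → ℂ} {p : E → ℂ} {z₀ : E} (hp : Differentiable ℂ p) (hG : HolAt G (p z₀, z₀))
    (h0 : ∀ᶠ y in 𝓝 z₀, G (p y, y) = 0) :
    HolAt (fun q : ℂ × E => dslope (fun ξ => G (ξ, q.2)) (p q.2) q.1) (p z₀, z₀) := by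
  obtain ⟨r, hr, hGr⟩ := Metric.eventually_nhds_iff_ball.1 hG.eventually
  have hr2 : 0 < r / 2 := by positivity
  have hmem : ∀ ξ y, dist ξ (p z₀) < r → dist y z₀ < r → (ξ, y) ∈ ball (p z₀, z₀) r :=
    fun ξ y h1 h2 => by rw [mem_ball, Prod.dist_eq]; exact max_lt h1 h2
  have hcirc : ∀ θ, dist (circleMap (p z₀) (r / 2) θ) (p z₀) = r / 2 := fun θ => by
    rw [dist_eq_norm]; simp [circleMap, abs_of_pos hr]
  refine HolAt.congr (f := fun q : ℂ × E => (2 * Real.pi * Complex.I)⁻¹ *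
    ∫ θ in (0 : ℝ)..2 * Real.pi, (circleMap 0 (r / 2) θ * Complex.I) *
      (G (circleMap (p z₀) (r / 2) θ, q.2) / ((circleMap (p z₀) (r / 2) θ - p q.2) *
        (circleMap (p z₀) (r / 2) θ - q.1)))) ?_ ?_
  · refine HolAt.mul ((differentiable_const _).holAt _) ?_
    refine holAt_intervalIntegral (Q := fun q : (ℂ × E) × ℂ =>
      G (q.2, q.1.2) / ((q.2 - p q.1.2) * (q.2 - q.1.1))) (continuous_circleMap _ _)
      ((continuous_circleMap _ _).mul continuous_const) fun θ _ => ?_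
    refine HolAt.div (HolAt.comp (f := fun q : (ℂ × E) × ℂ => (q.2, q.1.2)) (hGr _ (hmem _ _ ?_ ?_))
      (Differentiable.holAt (by fun_prop) _)) (Differentiable.holAt (by fun_prop) _) ?_
    · exact (hcirc θ).trans_lt (by linarith)
    · simpa using hr
    · have : circleMap (p z₀) (r / 2) θ - p z₀ ≠ 0 := by
        rw [sub_ne_zero, ← dist_pos, hcirc]; exact hr2
      simpa using this
  · have hc1 : ∀ᶠ q : ℂ × E in 𝓝 (p z₀, z₀), q.1 ∈ ball (p z₀) (r / 2) :=
      continuousAt_fst.eventually (isOpen_ball.mem_nhds (mem_ball_self hr2))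
    have hc2 : ∀ᶠ q : ℂ × E in 𝓝 (p z₀, z₀), p q.2 ∈ ball (p z₀) (r / 2) :=
      (hp.continuous.comp continuous_snd).continuousAt.eventually
        (isOpen_ball.mem_nhds (mem_ball_self hr2))
    have hc3 : ∀ᶠ q : ℂ × E in 𝓝 (p z₀, z₀), q.2 ∈ ball z₀ r :=
      continuousAt_snd.eventually (isOpen_ball.mem_nhds (mem_ball_self hr))
    have hc4 : ∀ᶠ q : ℂ × E in 𝓝 (p z₀, z₀), G (p q.2, q.2) = 0 :=
      (continuous_snd.tendsto (p z₀, z₀)).eventually h0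
    filter_upwards [hc1, hc2, hc3, hc4] with q h1 h2 h3 h4
    have hd : DifferentiableOn ℂ (dslope (fun ξ => G (ξ, q.2)) (p q.2)) (ball (p z₀) r) := by
      refine (Complex.differentiableOn_dslope (isOpen_ball.mem_nhds
        (ball_subset_ball (by linarith) h2))).2 fun ξ hξ => ?_
      have := (hGr _ (hmem ξ q.2 hξ h3)).differentiableAt
      exact (this.comp ξ (f := fun ξ => (ξ, q.2)) (by fun_prop)).differentiableWithinAt
    have hcauchy := (hd.mono (closedBall_subset_ball (half_lt_self hr))).circleIntegral_sub_inv_smul h1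
    rw [circleIntegral] at hcauchy
    have hpi : (2 * Real.pi * Complex.I : ℂ) ≠ 0 := Complex.two_pi_I_ne_zero
    rw [inv_mul_eq_iff_eq_mul₀ hpi]
    rw [smul_eq_mul] at hcauchy
    rw [← hcauchy]
    refine intervalIntegral.integral_congr fun θ _ => ?_
    have hne : circleMap (p z₀) (r / 2) θ ≠ p q.2 := fun h => by
      have := hcirc θ
      rw [h] at this
      exact absurd h2 (by simp [this])
    have hne' : circleMap (p z₀) (r / 2) θ ≠ q.1 := fun h => by
      have := hcirc θ
      rw [h] at this
      exact absurd h1 (by simp [this])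
    simp only [deriv_circleMap, smul_eq_mul]
    rw [dslope_of_ne _ hne, slope_def_field, h4]
    have := sub_ne_zero.2 hne
    have := sub_ne_zero.2 hne'
    field_simp
    ring

end Oka

section OkaExtension

/-- `f` extends from the part of `X` inside the polyhedron of `p :: l`, embedded as a graph, to a
function holomorphic near the product of the unit disc and the part of `X` inside the polyhedron
of `l`. -/
def Extends {d : ℕ} (l : List ((Fin d → ℂ) → ℂ)) (p f : (Fin d → ℂ) → ℂ) (X : Set (Fin d → ℂ)) :
    Prop :=
  ∃ H : (Fin (d + 1) → ℂ) → ℂ,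
    (∀ z ∈ X ∩ polyhedron l, ∀ w : ℂ, ‖w‖ ≤ 1 → HolAt H (vcons w z)) ∧
    ∀ z ∈ X ∩ polyhedron (p :: l), ∀ᶠ y in 𝓝 z, H (vcons (p y) y) = f y

theorem mem_polyhedron_cons {E : Type*} {l : List (E → ℂ)} {p : E → ℂ} {z : E} :
    z ∈ polyhedron (p :: l) ↔ ‖p z‖ ≤ 1 ∧ z ∈ polyhedron l := by
  simp [polyhedron]

theorem mem_polyhedron_map_vtail {d : ℕ} {l : List ((Fin d → ℂ) → ℂ)} {z : Fin (d + 1) → ℂ} :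
    z ∈ polyhedron (l.map fun p z => p (vtail z)) ↔ vtail z ∈ polyhedron l := by
  simp [polyhedron]

theorem Extends.merge {d : ℕ} {l : List ((Fin d → ℂ) → ℂ)} {p f : (Fin d → ℂ) → ℂ}
    (hp : Differentiable ℂ p) (hs : SplitProp (d + 1) (l.map fun p z => p (vtail z)))
    {X : Set (Fin d → ℂ)} (hX : Brick X) (k : Fin d) {u : ℂ} (hu : u ≠ 0) (a : ℝ)
    (h₁ : Extends l p f (X ∩ {z | (u * z k).im ≤ a}))
    (h₂ : Extends l p f (X ∩ {z | a ≤ (u * z k).im})) : Extends l p f X := by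
  classical
  obtain ⟨H₁, hH₁, hf₁⟩ := h₁
  obtain ⟨H₂, hH₂, hf₂⟩ := h₂
  set D : (Fin (d + 1) → ℂ) → ℂ := fun q => if q 0 = p (vtail q) then
    deriv (fun ξ => H₁ (vcons ξ (vtail q)) - H₂ (vcons ξ (vtail q))) (q 0) else
    (H₁ q - H₂ q) / (q 0 - p (vtail q)) with hD
  have hvt : Differentiable ℂ (vtail (d := d)) := differentiable_vtail
  have hptail : Differentiable ℂ fun q : Fin (d + 1) → ℂ => q 0 - p (vtail q) := by
    have : Differentiable ℂ fun q : Fin (d + 1) → ℂ => p (vtail q) := hp.comp hvt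
    fun_prop
  have hgraph : ∀ z ∈ X ∩ polyhedron l, (u * z k).im = a → ‖p z‖ ≤ 1 →
      ∀ᶠ y in 𝓝 z, H₁ (vcons (p y) y) - H₂ (vcons (p y) y) = 0 := by
    intro z hz hza hpz
    filter_upwards [hf₁ z ⟨⟨hz.1, hza.le⟩, mem_polyhedron_cons.2 ⟨hpz, hz.2⟩⟩,
      hf₂ z ⟨⟨hz.1, hza.ge⟩, mem_polyhedron_cons.2 ⟨hpz, hz.2⟩⟩] with y h1 h2
    rw [h1, h2, sub_self]
  have hDhol : ∀ z ∈ X ∩ polyhedron l, (u * z k).im = a → ∀ w : ℂ, ‖w‖ ≤ 1 →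
      HolAt D (vcons w z) := by
    intro z hz hza w hw
    have hsub : HolAt (fun q => H₁ q - H₂ q) (vcons w z) :=
      (hH₁ z ⟨⟨hz.1, hza.le⟩, hz.2⟩ w hw).sub (hH₂ z ⟨⟨hz.1, hza.ge⟩, hz.2⟩ w hw)
    by_cases hwp : w = p z
    · subst hwp
      have h1 := holAt_dslope_graph (G := fun q : ℂ × (Fin d → ℂ) =>
        H₁ (vcons q.1 q.2) - H₂ (vcons q.1 q.2)) hp
        (HolAt.comp (g := fun q => H₁ q - H₂ q) (f := fun q : ℂ × (Fin d → ℂ) => vcons q.1 q.2) hsub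
          (differentiable_vcons.holAt (p z, z))) (hgraph z hz hza hw)
      have h2 := HolAt.comp (f := fun q : Fin (d + 1) → ℂ => (q 0, vtail q))
        (x := vcons (p z) z) h1 (Differentiable.holAt (by fun_prop) _)
      refine h2.congr ?_
      filter_upwards [(hvt.continuous.tendsto (vcons (p z) z)).eventually (hgraph z hz hza hw)]
        with q hq
      rw [hD]
      by_cases hq0 : q 0 = p (vtail q)
      · simp only [hq0, dslope_same, if_true]
      · simp only [if_neg hq0, dslope_of_ne _ hq0, slope_def_field]
        rw [hq, sub_zero, vcons_vtail]
    · refine (hsub.div (hptail.holAt _) (sub_ne_zero.2 hwp)).congr ?_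
      filter_upwards [hptail.continuous.continuousAt.eventually_ne (sub_ne_zero.2 hwp)] with q hq
      rw [hD]
      simp only [if_neg (sub_ne_zero.1 hq)]
  have hDmul : ∀ z ∈ X ∩ polyhedron l, (u * z k).im = a → ∀ w : ℂ, ‖w‖ ≤ 1 →
      ∀ᶠ q in 𝓝 (vcons w z), H₁ q - H₂ q = (q 0 - p (vtail q)) * D q := by
    intro z hz hza w hw
    have hne : ∀ q : Fin (d + 1) → ℂ, q 0 - p (vtail q) ≠ 0 →
        H₁ q - H₂ q = (q 0 - p (vtail q)) * D q := by
      intro q hq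
      rw [hD]
      simp only [if_neg (sub_ne_zero.1 hq)]
      field_simp
    by_cases hwp : w = p z
    · subst hwp
      filter_upwards [(hvt.continuous.tendsto (vcons (p z) z)).eventually (hgraph z hz hza hw)]
        with q hq
      by_cases hq0 : q 0 - p (vtail q) = 0
      · rw [← sub_eq_zero.1 hq0, vcons_vtail] at hq
        rw [hq0, hq, zero_mul]
      · exact hne q hq0
    · filter_upwards [hptail.continuous.continuousAt.eventually_ne (sub_ne_zero.2 hwp)] with q hq
      exact hne q hq
  have hmem : ∀ {q : Fin (d + 1) → ℂ}, q ∈ {q : Fin (d + 1) → ℂ | ‖q 0‖ ≤ 1 ∧ vtail q ∈ X} ∩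
      polyhedron (l.map fun p z => p (vtail z)) ↔ ‖q 0‖ ≤ 1 ∧ vtail q ∈ X ∩ polyhedron l := by
    intro q
    rw [mem_inter_iff, mem_polyhedron_map_vtail, mem_inter_iff, mem_ofPred_eq, and_assoc]
  obtain ⟨D₁, D₂, hD₁, hD₂, hD₁₂⟩ := hs _ (hX.cons 1) k.succ u hu a D (fun q hq hqa => by
    obtain ⟨h1, h2⟩ := hmem.1 hq
    have := hDhol (vtail q) h2 hqa (q 0) h1
    rwa [vcons_vtail] at this)
  have hφ : Continuous fun q : Fin (d + 1) → ℂ => (u * q k.succ).im := by fun_prop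
  have hφ' : Continuous fun q : Fin d → ℂ => (u * q k).im := by fun_prop
  set H : (Fin (d + 1) → ℂ) → ℂ := fun q => if (u * q k.succ).im ≤ a then
    H₁ q - (q 0 - p (vtail q)) * D₁ q else H₂ q - (q 0 - p (vtail q)) * D₂ q with hH
  refine ⟨H, fun z hz w hw => ?_, fun z hz => ?_⟩
  · have hq : vcons w z ∈ {q : Fin (d + 1) → ℂ | ‖q 0‖ ≤ 1 ∧ vtail q ∈ X} ∩
      polyhedron (l.map fun p z => p (vtail z)) := hmem.2 ⟨hw, hz⟩
    have hhol₁ : (u * z k).im ≤ a →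
        HolAt (fun q => H₁ q - (q 0 - p (vtail q)) * D₁ q) (vcons w z) := fun h =>
      (hH₁ z ⟨⟨hz.1, h⟩, hz.2⟩ w hw).sub ((hptail.holAt _).mul (hD₁ _ hq h))
    have hhol₂ : a ≤ (u * z k).im →
        HolAt (fun q => H₂ q - (q 0 - p (vtail q)) * D₂ q) (vcons w z) := fun h =>
      (hH₂ z ⟨⟨hz.1, h⟩, hz.2⟩ w hw).sub ((hptail.holAt _).mul (hD₂ _ hq h))
    rcases lt_trichotomy (u * z k).im a with hlt | heq | hgt
    · refine (hhol₁ hlt.le).congr ?_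
      filter_upwards [hφ.continuousAt.eventually_lt continuousAt_const hlt] with q hq
      simp only [hH, if_pos hq.le]
    · refine (hhol₁ heq.le).congr ?_
      filter_upwards [hDmul z hz heq w hw, hD₁₂ _ hq heq] with q h1 h2
      rw [hH]
      by_cases hqa : (u * q k.succ).im ≤ a
      · simp only [if_pos hqa]
      · simp only [if_neg hqa]
        rw [h2] at h1
        linear_combination h1
    · refine (hhol₂ hgt.le).congr ?_
      filter_upwards [continuousAt_const.eventually_lt hφ.continuousAt hgt] with q hq
      simp only [hH, if_neg (not_le.2 hq)]
  · obtain ⟨hzX, hzl⟩ := hz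
    have hval : ∀ y, H (vcons (p y) y) = if (u * y k).im ≤ a then H₁ (vcons (p y) y)
        else H₂ (vcons (p y) y) := by
      intro y
      rw [hH]
      simp only [vcons_succ, vcons_zero, vtail_vcons, sub_self, zero_mul, sub_zero]
    simp only [hval]
    rcases lt_trichotomy (u * z k).im a with hlt | heq | hgt
    · filter_upwards [hφ'.continuousAt.eventually_lt continuousAt_const hlt,
        hf₁ z ⟨⟨hzX, hlt.le⟩, hzl⟩] with y h1 h2
      rw [if_pos h1.le, h2]
    · filter_upwards [hf₁ z ⟨⟨hzX, heq.le⟩, hzl⟩, hf₂ z ⟨⟨hzX, heq.ge⟩, hzl⟩] with y h1 h2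
      split_ifs
      exacts [h1, h2]
    · filter_upwards [continuousAt_const.eventually_lt hφ'.continuousAt hgt,
        hf₂ z ⟨⟨hzX, hgt.le⟩, hzl⟩] with y h1 h2
      rw [if_neg (not_le.2 h1), h2]

/-- A property of bricks which is stable under gluing along real hyperplanes holds for a brick as
soon as it holds for all its thin slices. -/
theorem Brick.induction_strip {d : ℕ} {P : Set (Fin d → ℂ) → Prop} (k : Fin d) (u : ℂ)
    (hP : ∀ X, Brick X → ∀ a : ℝ, P (X ∩ {z | (u * z k).im ≤ a}) →
      P (X ∩ {z | a ≤ (u * z k).im}) → P X)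
    {δ : ℝ} (hδ : 0 < δ) {X : Set (Fin d → ℂ)} (hX : Brick X)
    (h : ∀ Y ⊆ X, Brick Y → (∀ y ∈ Y, ∀ y' ∈ Y, |(u * y k).im - (u * y' k).im| ≤ δ) → P Y) :
    P X := by
  have hφ : Continuous fun q : Fin d → ℂ => (u * q k).im := by fun_prop
  have key : ∀ (n : ℕ) (a : ℝ) (Y), Y ⊆ X → Brick Y →
      (∀ y ∈ Y, (u * y k).im ∈ Icc a (a + (n + 1) * δ)) → P Y := by
    intro n
    induction n with
    | zero =>
      intro a Y hYX hY hYa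
      refine h Y hYX hY fun y hy y' hy' => ?_
      obtain ⟨h1, h2⟩ := hYa y hy
      obtain ⟨h3, h4⟩ := hYa y' hy'
      rw [abs_le]
      push_cast at *
      constructor <;> linarith
    | succ n ih =>
      intro a Y hYX hY hYa
      refine hP Y hY (a + (n + 1) * δ) (ih a _ (inter_subset_left.trans hYX)
        (hY.inter_strip k u isClosed_Iic (convex_Iic _)) fun y hy => ⟨(hYa y hy.1).1, hy.2⟩)
        (h _ (inter_subset_left.trans hYX) (hY.inter_strip k u isClosed_Ici (convex_Ici _)) ?_)
      intro y hy y' hy'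
      have h1 := (hYa y hy.1).2
      have h2 := (hYa y' hy'.1).2
      have h3 := mem_ofPred_eq ▸ hy.2
      have h4 := mem_ofPred_eq ▸ hy'.2
      rw [abs_le]
      push_cast at *
      constructor <;> linarith
  obtain ⟨M, hM⟩ := hX.isCompact.exists_bound_of_continuousOn hφ.continuousOn
  obtain ⟨n, hn⟩ := exists_nat_gt (2 * M / δ)
  rw [div_lt_iff₀ hδ] at hn
  refine key n (-M) X Subset.rfl hX fun y hy => ?_
  obtain ⟨h1, h2⟩ := abs_le.1 (hM y hy)
  exact ⟨h1, by linarith⟩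

/-- A property of bricks which is stable under gluing along real hyperplanes holds for a brick as
soon as it holds for all its sub-bricks of small diameter. -/
theorem Brick.induction_small {d : ℕ} {P : Set (Fin d → ℂ) → Prop}
    (hP : ∀ (k : Fin d) (u : ℂ), u ≠ 0 → ∀ X, Brick X → ∀ a : ℝ, P (X ∩ {z | (u * z k).im ≤ a}) →
      P (X ∩ {z | a ≤ (u * z k).im}) → P X)
    {δ : ℝ} (hδ : 0 < δ) {X : Set (Fin d → ℂ)} (hX : Brick X)
    (h : ∀ Y ⊆ X, Brick Y → (∀ y ∈ Y, ∀ y' ∈ Y, dist y y' < δ) → P Y) : P X := by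
  have hδ3 : 0 < δ / 3 := by positivity
  have key : ∀ (T : List (Fin d × ℂ)), (∀ q ∈ T, q.2 ≠ 0) → ∀ X, Brick X →
      (∀ Y ⊆ X, Brick Y → (∀ q ∈ T, ∀ y ∈ Y, ∀ y' ∈ Y,
        |(q.2 * y q.1).im - (q.2 * y' q.1).im| ≤ δ / 3) → P Y) → P X := by
    intro T
    induction T with
    | nil => intro _ X hX h; exact h X Subset.rfl hX (by simp)
    | cons q T ih =>
      intro hT X hX h
      refine Brick.induction_strip q.1 q.2 (hP q.1 q.2 (hT q (by simp))) hδ3 hX fun Y hYX hY hYq => ?_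
      refine ih (fun q hq => hT q (by simp [hq])) Y hY fun Z hZY hZ hZT => ?_
      refine h Z (hZY.trans hYX) hZ fun q' hq' => ?_
      rcases List.mem_cons.1 hq' with rfl | hq'
      · exact fun y hy y' hy' => hYq y (hZY hy) y' (hZY hy')
      · exact hZT q' hq'
  refine key ((Finset.univ : Finset (Fin d)).toList.flatMap fun i => [(i, 1), (i, Complex.I)])
    (fun q hq => ?_) X hX fun Y hYX hY hYT => h Y hYX hY fun y hy y' hy' => ?_
  · simp only [List.mem_flatMap, List.mem_cons, List.not_mem_nil, or_false] at hq
    obtain ⟨i, _, rfl | rfl⟩ := hq <;> simp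
  · rw [dist_pi_lt_iff hδ]
    intro i
    have h1 := hYT (i, 1) (by simp) y hy y' hy'
    have h2 := hYT (i, Complex.I) (by simp) y hy y' hy'
    simp only [one_mul, Complex.I_mul_im] at h1 h2
    rw [dist_eq_norm]
    refine (Complex.norm_le_abs_re_add_abs_im _).trans_lt ?_
    rw [Complex.sub_re, Complex.sub_im]
    linarith

theorem extends_of_splitProp {d : ℕ} {l : List ((Fin d → ℂ) → ℂ)} {p f : (Fin d → ℂ) → ℂ}
    (hp : Differentiable ℂ p) (hl : ∀ q ∈ l, Differentiable ℂ q)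
    (hs : SplitProp (d + 1) (l.map fun p z => p (vtail z)))
    {X : Set (Fin d → ℂ)} (hX : Brick X) (hf : ∀ z ∈ X ∩ polyhedron (p :: l), HolAt f z) :
    Extends l p f X := by
  have hcomp : IsCompact (X ∩ polyhedron (p :: l)) := hX.isCompact.inter_right
    (isClosed_polyhedron fun q hq => by
      rcases List.mem_cons.1 hq with rfl | hq
      exacts [hp.continuous, (hl q hq).continuous])
  obtain ⟨δ, hδ, hthick⟩ := hcomp.exists_thickening_subset_open
    (isOpen_iff_mem_nhds.2 fun x (hx : HolAt f x) => hx.eventually) (t := {x | HolAt f x}) hf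
  refine Brick.induction_small (fun k u hu Y hY a h₁ h₂ => Extends.merge hp hs hY k hu a h₁ h₂)
    hδ hX fun Y hYX hY hYδ => ?_
  by_cases hne : (Y ∩ polyhedron (p :: l)).Nonempty
  · obtain ⟨y, hy, hyl⟩ := hne
    refine ⟨fun q => f (vtail q), fun z hz w hw => ?_, fun z hz => ?_⟩
    · refine HolAt.comp (f := vtail) ?_ (differentiable_vtail.holAt _)
      exact hthick (mem_thickening_iff.2 ⟨y, ⟨hYX hy, hyl⟩, hYδ z hz.1 y hy⟩)
    · exact Eventually.of_forall fun y => rfl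
  · exact ⟨0, fun z _ w _ => (differentiable_const (0 : ℂ)).holAt _,
      fun z hz => absurd ⟨z, hz⟩ hne⟩

theorem splitProp_of_differentiable : ∀ (m d : ℕ) (l : List ((Fin d → ℂ) → ℂ)), l.length = m →
    (∀ q ∈ l, Differentiable ℂ q) → SplitProp d l := by
  intro m
  induction m with
  | zero =>
    intro d l hl _
    rw [List.length_eq_zero_iff.1 hl]
    exact splitProp_nil d
  | succ m ih =>
    intro d l hlen hl
    obtain ⟨p, l, rfl⟩ := List.exists_cons_of_length_eq_add_one hlen
    have hp := hl p (by simp)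
    have hl' : ∀ q ∈ l, Differentiable ℂ q := fun q hq => hl q (by simp [hq])
    have hs : SplitProp (d + 1) (l.map fun p z => p (vtail z)) := by
      refine ih (d + 1) _ (by simpa using hlen) fun q hq => ?_
      obtain ⟨q', hq', rfl⟩ := List.mem_map.1 hq
      exact (hl' q' hq').comp differentiable_vtail
    intro X hX k u hu a D hD
    have hXa : Brick (X ∩ {z | (u * z k).im ∈ ({a} : Set ℝ)}) :=
      hX.inter_strip k u isClosed_singleton (convex_singleton a)
    obtain ⟨H, hH, hHD⟩ := extends_of_splitProp (f := D) hp hl' hs hXa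
      (fun z hz => hD z ⟨hz.1.1, hz.2⟩ hz.1.2)
    have hmem : ∀ {q : Fin (d + 1) → ℂ}, q ∈ {q : Fin (d + 1) → ℂ | ‖q 0‖ ≤ 1 ∧ vtail q ∈ X} ∩
        polyhedron (l.map fun p z => p (vtail z)) ↔ ‖q 0‖ ≤ 1 ∧ vtail q ∈ X ∩ polyhedron l := by
      intro q
      rw [mem_inter_iff, mem_polyhedron_map_vtail, mem_inter_iff, mem_ofPred_eq, and_assoc]
    obtain ⟨D₁, D₂, hD₁, hD₂, hD₁₂⟩ := hs _ (hX.cons 1) k.succ u hu a H (fun q hq hqa => by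
      obtain ⟨h1, h2⟩ := hmem.1 hq
      have := hH (vtail q) ⟨⟨h2.1, hqa⟩, h2.2⟩ (q 0) h1
      rwa [vcons_vtail] at this)
    have hg : Differentiable ℂ fun z : Fin d → ℂ => vcons (p z) z :=
      differentiable_vcons.comp (hp.prodMk differentiable_id)
    have hgm : ∀ z ∈ X ∩ polyhedron (p :: l), vcons (p z) z ∈
        {q : Fin (d + 1) → ℂ | ‖q 0‖ ≤ 1 ∧ vtail q ∈ X} ∩
        polyhedron (l.map fun p z => p (vtail z)) := fun z hz =>
      hmem.2 ⟨(mem_polyhedron_cons.1 hz.2).1, hz.1, (mem_polyhedron_cons.1 hz.2).2⟩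
    refine ⟨fun z => D₁ (vcons (p z) z), fun z => D₂ (vcons (p z) z), fun z hz hza => ?_,
      fun z hz hza => ?_, fun z hz hza => ?_⟩
    · exact HolAt.comp (f := fun z => vcons (p z) z) (hD₁ _ (hgm z hz) hza) (hg.holAt z)
    · exact HolAt.comp (f := fun z => vcons (p z) z) (hD₂ _ (hgm z hz) hza) (hg.holAt z)
    · filter_upwards [hHD z ⟨⟨hz.1, hza⟩, hz.2⟩,
        (hg.continuous.tendsto z).eventually (hD₁₂ _ (hgm z hz) hza)] with y h1 h2
      rw [← h1, h2]

/-- Oka's extension theorem for polynomial polyhedra. -/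
theorem exists_oka_extension {d : ℕ} {l : List ((Fin d → ℂ) → ℂ)} {p f : (Fin d → ℂ) → ℂ}
    (hp : Differentiable ℂ p) (hl : ∀ q ∈ l, Differentiable ℂ q)
    {X : Set (Fin d → ℂ)} (hX : Brick X) (hf : ∀ z ∈ X ∩ polyhedron (p :: l), HolAt f z) :
    Extends l p f X :=
  extends_of_splitProp hp hl (splitProp_of_differentiable _ _ _ rfl fun q hq => by
    obtain ⟨q', hq', rfl⟩ := List.mem_map.1 hq
    exact (hl q' hq').comp differentiable_vtail) hX hf

end OkaExtension

section OkaWeil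

theorem differentiableAt_eval {σ E : Type*} [NormedAddCommGroup E] [NormedSpace ℂ E]
    {g : E → σ → ℂ} {x : E} (hg : ∀ i, DifferentiableAt ℂ (fun y => g y i) x)
    (p : MvPolynomial σ ℂ) : DifferentiableAt ℂ (fun y => eval (g y) p) x := by
  induction p using MvPolynomial.induction_on with
  | C a => simp
  | add p q hp hq => simp only [map_add]; exact hp.add hq
  | mul_X p i hp => simp only [map_mul, eval_X]; exact hp.mul (hg i)

theorem differentiable_eval {d : ℕ} (p : MvPolynomial (Fin d) ℂ) :
    Differentiable ℂ fun z : Fin d → ℂ => eval z p := fun z =>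
  differentiableAt_eval (g := fun z => z) (fun i => by fun_prop) p

theorem exists_radius_of_holAt {d : ℕ} {R : ℝ} {P : Set (Fin d → ℂ)} (hP : IsCompact P)
    {f : (Fin (d + 1) → ℂ) → ℂ} (hf : ∀ w : ℂ, ‖w‖ ≤ R → ∀ z ∈ P, HolAt f (vcons w z)) :
    ∃ R' > R, ∀ w : ℂ, ‖w‖ ≤ R' → ∀ z ∈ P, HolAt f (vcons w z) := by
  have hopen : IsOpen {q : ℂ × (Fin d → ℂ) | HolAt f (vcons q.1 q.2)} :=
    (isOpen_iff_mem_nhds.2 fun x (hx : HolAt f x) => hx.eventually :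
      IsOpen {x | HolAt f x}).preimage differentiable_vcons.continuous
  by_cases hR : R < 0
  · exact ⟨R / 2, by linarith, fun w hw => absurd (norm_nonneg w) (by linarith)⟩
  obtain ⟨δ, hδ, h⟩ := ((isCompact_closedBall (0 : ℂ) R).prod hP).exists_thickening_subset_open hopen
    (fun q hq => hf q.1 (by simpa using hq.1) q.2 hq.2)
  refine ⟨R + δ / 2, by linarith, fun w hw z hz => h (a := (w, z)) ?_⟩
  have h1 : closedBall (0 : ℂ) (R + δ / 2) ⊆ thickening δ (closedBall 0 R) := by
    rw [thickening_closedBall hδ (not_lt.1 hR)]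
    exact closedBall_subset_ball (by linarith)
  obtain ⟨w', hw', hww'⟩ := mem_thickening_iff.1 (h1 (by simpa using hw : w ∈ _))
  rw [mem_thickening_iff]
  exact ⟨(w', z), ⟨hw', hz⟩, by rw [Prod.dist_eq]; simpa [hδ] using hww'⟩

theorem exists_polynomial_approx_polydisc : ∀ (d : ℕ) (R : Fin d → ℝ) (f : (Fin d → ℂ) → ℂ),
    (∀ z, (∀ i, ‖z i‖ ≤ R i) → HolAt f z) → ∀ ε > 0, ∃ g : MvPolynomial (Fin d) ℂ,
      ∀ z, (∀ i, ‖z i‖ ≤ R i) → ‖f z - eval z g‖ ≤ ε := by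
  intro d
  induction d with
  | zero =>
    intro R f _ ε hε
    refine ⟨C (f 0), fun z _ => ?_⟩
    rw [Subsingleton.elim z 0]
    simpa using hε.le
  | succ d ih =>
    intro R f hf ε hε
    set P : Set (Fin d → ℂ) := {z | ∀ i, ‖z i‖ ≤ R i.succ} with hPdef
    have hP : IsCompact P := by
      have : P = Set.pi univ fun i => closedBall (0 : ℂ) (R i.succ) := by
        ext z; simp [hPdef]
      rw [this]
      exact isCompact_univ_pi fun i => isCompact_closedBall _ _
    have hsplit : ∀ (w : ℂ) (z : Fin d → ℂ), (∀ i, ‖vcons w z i‖ ≤ R i) ↔ ‖w‖ ≤ R 0 ∧ z ∈ P :=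
      fun w z => by rw [Fin.forall_fin_succ]; rfl
    by_cases hR0 : R 0 < 0
    · refine ⟨0, fun z hz => ?_⟩
      linarith [norm_nonneg (z 0), hz 0]
    push Not at hR0
    obtain ⟨R', hR', hf'⟩ := exists_radius_of_holAt (R := R 0) hP
      (fun w hw z hz => hf _ ((hsplit w z).2 ⟨hw, hz⟩))
    have hR'0 : 0 < R' := by linarith
    have hcircle : ∀ θ, ‖circleMap 0 R' θ‖ = R' := fun θ => by simp [abs_of_pos hR'0]
    obtain ⟨M, hM⟩ := ((isCompact_closedBall (0 : ℂ) R').prod hP).exists_bound_of_continuousOn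
      (f := fun q : ℂ × (Fin d → ℂ) => f (vcons q.1 q.2)) (fun q hq => by
        have h1 := (hf' q.1 (by simpa using hq.1) q.2 hq.2).differentiableAt.continuousAt
        exact (ContinuousAt.comp (g := f) (f := fun q : ℂ × (Fin d → ℂ) => vcons q.1 q.2) h1
          differentiable_vcons.continuous.continuousAt).continuousWithinAt)
    have hfd : ∀ z ∈ P, DifferentiableOn ℂ (fun ξ => f (vcons ξ z)) (closedBall 0 R') := by
      intro z hz ξ hξ
      have h1 := (hf' ξ (by simpa using hξ) z hz).differentiableAt
      exact (h1.comp ξ (f := fun ξ => vcons ξ z) ((differentiable_vcons.comp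
        (g := fun q : ℂ × (Fin d → ℂ) => vcons q.1 q.2)
        (f := fun ξ : ℂ => (ξ, z)) (by fun_prop)) ξ)).differentiableWithinAt
    set c : ℕ → (Fin d → ℂ) → ℂ := fun k z =>
      (cauchyPowerSeries (fun ξ => f (vcons ξ z)) 0 R').coeff k with hc
    have hcterm : ∀ (k : ℕ) (z : Fin d → ℂ) (w : ℂ),
        (cauchyPowerSeries (fun ξ => f (vcons ξ z)) 0 R' k fun _ => w) = w ^ k * c k z := by
      intro k z w
      rw [FormalMultilinearSeries.apply_eq_pow_smul_coeff, smul_eq_mul]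
    have hchol : ∀ k, ∀ z, (∀ i, ‖z i‖ ≤ R i.succ) → HolAt (c k) z := by
      intro k z hz
      have hck : c k = fun z => (2 * Real.pi * Complex.I)⁻¹ * ∫ θ in (0 : ℝ)..2 * Real.pi,
          (circleMap 0 R' θ * Complex.I) * (f (vcons (circleMap 0 R' θ) z) *
            ((1 / (circleMap 0 R' θ)) ^ k * (circleMap 0 R' θ)⁻¹)) := by
        funext z
        have := hcterm k z 1
        rw [one_pow, one_mul] at this
        rw [← this, cauchyPowerSeries_apply, circleIntegral, smul_eq_mul]
        congr 1
        refine intervalIntegral.integral_congr fun θ _ => ?_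
        simp only [deriv_circleMap, smul_eq_mul, sub_zero]
        ring
      rw [hck]
      refine HolAt.mul ((differentiable_const _).holAt _) ?_
      refine holAt_intervalIntegral (Q := fun q : (Fin d → ℂ) × ℂ =>
        f (vcons q.2 q.1) * ((1 / q.2) ^ k * q.2⁻¹)) (continuous_circleMap _ _)
        ((continuous_circleMap _ _).mul continuous_const) fun θ _ => ?_
      refine HolAt.mul (HolAt.comp (g := f) (f := fun q : (Fin d → ℂ) × ℂ => vcons q.2 q.1)
        (hf' _ (hcircle θ).le z hz) ((differentiable_vcons.comp
        (g := fun q : ℂ × (Fin d → ℂ) => vcons q.1 q.2)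
        (f := fun q : (Fin d → ℂ) × ℂ => (q.2, q.1)) (by fun_prop)).holAt _)) ?_
      have hne : circleMap 0 R' θ ≠ 0 := norm_pos_iff.1 (by rw [hcircle]; exact hR'0)
      filter_upwards [(continuous_snd.continuousAt (x := (z, circleMap 0 R' θ))).eventually_ne hne]
        with q hq
      have hi : DifferentiableAt ℂ (fun q : (Fin d → ℂ) × ℂ => q.2⁻¹) q :=
        differentiableAt_snd.inv hq
      simp only [one_div]
      exact (hi.pow k).mul hi
    have hbound : ∀ (w : ℂ) (z : Fin d → ℂ), ‖w‖ ≤ R 0 → z ∈ P → ∀ K : ℕ,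
        ‖∑ k ∈ Finset.range K, w ^ k * c k z - f (vcons w z)‖ ≤
          M * (R 0 / R') ^ K / (1 - R 0 / R') := by
      intro w z hw hz K
      have hwR : ‖w‖ < R' := hw.trans_lt hR'
      have hcont : ContinuousOn (fun ξ => f (vcons ξ z)) (sphere 0 R') :=
        (hfd z hz).continuousOn.mono sphere_subset_closedBall
      have hsum := hasSum_cauchyPowerSeries_integral (c := 0) (R := R') (w := w)
        (f := fun ξ => f (vcons ξ z)) (hcont.circleIntegrable hR'0.le) hwR
      rw [zero_add, (hfd z hz).circleIntegral_sub_inv_smul (by simpa using hwR),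
        inv_smul_smul₀ Complex.two_pi_I_ne_zero] at hsum
      simp only [hcterm] at hsum
      refine norm_sub_le_of_geometric_bound_of_hasSum ((div_lt_one hR'0).2 hR') (fun k => ?_) hsum K
      rw [← hcterm]
      refine (ContinuousMultilinearMap.le_opNorm _ _).trans ?_
      simp only [Finset.prod_const, Finset.card_univ, Fintype.card_fin]
      have h1 := norm_cauchyPowerSeries_le (fun ξ => f (vcons ξ z)) 0 R' k
      have h2 : ∫ θ in (0 : ℝ)..2 * Real.pi, ‖f (vcons (circleMap 0 R' θ) z)‖ ≤ 2 * Real.pi * M := by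
        have h3 := intervalIntegral.norm_integral_le_of_norm_le_const (a := 0) (b := 2 * Real.pi)
          (C := M) (f := fun θ => ‖f (vcons (circleMap 0 R' θ) z)‖) (fun θ _ => by
            rw [norm_norm]
            exact hM (circleMap 0 R' θ, z) ⟨by simp [abs_of_pos hR'0], hz⟩)
        rw [sub_zero, abs_of_pos Real.two_pi_pos] at h3
        linarith [le_abs_self (∫ θ in (0 : ℝ)..2 * Real.pi, ‖f (vcons (circleMap 0 R' θ) z)‖),
          Real.norm_eq_abs (∫ θ in (0 : ℝ)..2 * Real.pi, ‖f (vcons (circleMap 0 R' θ) z)‖)]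
      have h4 : (2 * Real.pi)⁻¹ * ∫ θ in (0 : ℝ)..2 * Real.pi, ‖f (vcons (circleMap 0 R' θ) z)‖ ≤ M := by
        rw [inv_mul_le_iff₀ Real.two_pi_pos]; exact h2
      have hM0 : 0 ≤ M := (norm_nonneg _).trans (hM (0, z) ⟨by simpa using hR'0.le, hz⟩)
      calc _ ≤ (M * |R'|⁻¹ ^ k) * (R 0) ^ k := by
            refine mul_le_mul (h1.trans ?_) (pow_le_pow_left₀ (norm_nonneg w) hw k) (by positivity)
              (by positivity)
            gcongr
        _ = M * (R 0 / R') ^ k := by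
            rw [abs_of_pos hR'0, div_pow, inv_pow]; ring
    have hlim : Tendsto (fun K : ℕ => M * (R 0 / R') ^ K / (1 - R 0 / R')) atTop (𝓝 0) := by
      have := ((tendsto_pow_atTop_nhds_zero_of_lt_one (div_nonneg hR0 hR'0.le)
        ((div_lt_one hR'0).2 hR')).const_mul M).div_const (1 - R 0 / R')
      simpa using this
    obtain ⟨K, hK⟩ := (hlim.eventually_lt_const (half_pos hε)).exists
    set S := ∑ k ∈ Finset.range K, (R 0) ^ k with hS
    have hS0 : 0 ≤ S := Finset.sum_nonneg fun k _ => pow_nonneg hR0 k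
    have hε' : 0 < ε / 2 / (S + 1) := by positivity
    choose g hg using fun k => ih (fun i => R i.succ) (c k) (hchol k) _ hε'
    refine ⟨∑ k ∈ Finset.range K, X 0 ^ k * rename Fin.succ (g k), fun q hq => ?_⟩
    have hq' := hq
    rw [← vcons_vtail q] at hq'
    obtain ⟨hq0, hqP⟩ := (hsplit _ _).1 hq'
    have h1 := hbound (q 0) (vtail q) hq0 hqP K
    rw [vcons_vtail] at h1
    have h2 : ‖∑ k ∈ Finset.range K, q 0 ^ k * c k (vtail q) -
        eval q (∑ k ∈ Finset.range K, X 0 ^ k * rename Fin.succ (g k))‖ ≤ ε / 2 := by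
      rw [map_sum, ← Finset.sum_sub_distrib]
      calc _ ≤ ∑ k ∈ Finset.range K, (R 0) ^ k * (ε / 2 / (S + 1)) := by
            refine norm_sum_le_of_le _ fun k _ => ?_
            rw [map_mul, map_pow, eval_X, eval_rename, ← mul_sub, norm_mul, norm_pow]
            have h3 : ‖c k (vtail q) - eval (q ∘ Fin.succ) (g k)‖ ≤ ε / 2 / (S + 1) :=
              hg k (vtail q) hqP
            gcongr
        _ = S * (ε / 2 / (S + 1)) := by rw [hS, Finset.sum_mul]
        _ ≤ ε / 2 := by
            rw [mul_div_assoc', div_le_iff₀ (by positivity)]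
            nlinarith
    rw [norm_sub_rev] at h1
    calc ‖f q - _‖ = ‖(f q - ∑ k ∈ Finset.range K, q 0 ^ k * c k (vtail q)) +
          (∑ k ∈ Finset.range K, q 0 ^ k * c k (vtail q) -
            eval q (∑ k ∈ Finset.range K, X 0 ^ k * rename Fin.succ (g k)))‖ := by
            rw [sub_add_sub_cancel]
      _ ≤ ε / 2 + ε / 2 := (norm_add_le _ _).trans (add_le_add (h1.trans hK.le) h2)
      _ = ε := add_halves ε

theorem exists_polynomial_approx_polyhedron : ∀ (m d : ℕ) (R : Fin d → ℝ)
    (l : List (MvPolynomial (Fin d) ℂ)), l.length = m → ∀ f : (Fin d → ℂ) → ℂ,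
    (∀ z, (∀ i, ‖z i‖ ≤ R i) → (∀ p ∈ l, ‖eval z p‖ ≤ 1) → HolAt f z) → ∀ ε > 0,
    ∃ g : MvPolynomial (Fin d) ℂ, ∀ z, (∀ i, ‖z i‖ ≤ R i) → (∀ p ∈ l, ‖eval z p‖ ≤ 1) →
      ‖f z - eval z g‖ ≤ ε := by
  intro m
  induction m with
  | zero =>
    intro d R l hl f hf ε hε
    rw [List.length_eq_zero_iff] at hl
    subst hl
    obtain ⟨g, hg⟩ := exists_polynomial_approx_polydisc d R f (fun z hz => hf z hz (by simp)) ε hε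
    exact ⟨g, fun z hz _ => hg z hz⟩
  | succ m ih =>
    intro d R l hlen f hf ε hε
    obtain ⟨p, l, rfl⟩ := List.exists_cons_of_length_eq_add_one hlen
    have hX : Brick {z : Fin d → ℂ | ∀ i, ‖z i‖ ≤ R i} := by
      refine ⟨fun i => closedBall 0 (R i), fun i => ⟨isCompact_closedBall _ _, convex_closedBall _ _⟩, ?_⟩
      ext z; simp
    obtain ⟨H, hH, hHf⟩ := exists_oka_extension (l := l.map fun q z => eval z q)
      (p := fun z => eval z p) (f := f) (differentiable_eval p) (fun q hq => by
        obtain ⟨q', _, rfl⟩ := List.mem_map.1 hq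
        exact differentiable_eval q') hX (fun z hz => hf z hz.1 fun q hq => by
          rcases List.mem_cons.1 hq with rfl | hq
          · exact (mem_polyhedron_cons.1 hz.2).1
          · exact (mem_polyhedron_cons.1 hz.2).2 _ (List.mem_map_of_mem hq))
    obtain ⟨g, hg⟩ := ih (d + 1) (Fin.cons 1 R) (l.map (rename Fin.succ)) (by simpa using hlen) H
      (fun q hq hql => by
        rw [Fin.forall_fin_succ] at hq
        have := hH (vtail q) ⟨hq.2, fun q' hq' => by
          obtain ⟨q'', hq'', rfl⟩ := List.mem_map.1 hq'
          have := hql _ (List.mem_map_of_mem hq'')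
          rw [eval_rename] at this
          exact this⟩ (q 0) hq.1
        rwa [vcons_vtail] at this) ε hε
    refine ⟨bind₁ (Fin.cons p X : Fin (d + 1) → MvPolynomial (Fin d) ℂ) g, fun z hz hzl => ?_⟩
    have hev : eval z (bind₁ (Fin.cons p X : Fin (d + 1) → MvPolynomial (Fin d) ℂ) g) =
        eval (vcons (eval z p) z) g := by
      have := eval₂Hom_bind₁ (RingHom.id ℂ) z (Fin.cons p X : Fin (d + 1) → MvPolynomial (Fin d) ℂ) g
      refine this.trans ?_
      congr 2
      funext i
      refine Fin.cases ?_ (fun i => ?_) i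
      · rfl
      · exact eval_X (f := z) i
    have hpz := hzl p (by simp)
    rw [hev, ← (hHf z ⟨hz, mem_polyhedron_cons.2 ⟨hpz, fun q hq => by
      obtain ⟨q', hq', rfl⟩ := List.mem_map.1 hq
      exact hzl q' (by simp [hq'])⟩⟩).self_of_nhds]
    refine hg _ ?_ fun q hq => ?_
    · rw [Fin.forall_fin_succ]
      exact ⟨hpz, hz⟩
    · obtain ⟨q', hq', rfl⟩ := List.mem_map.1 hq
      rw [eval_rename]
      exact hzl q' (by simp [hq'])

theorem oka_weil_fin {d : ℕ} {K : Set (Fin d → ℂ)} (hK : IsCompact K)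
    (hsep : ∀ z ∉ K, ∃ p : MvPolynomial (Fin d) ℂ, (∀ w ∈ K, ‖eval w p‖ ≤ 1) ∧ 1 < ‖eval z p‖)
    {f : (Fin d → ℂ) → ℂ} (hf : ∀ z ∈ K, HolAt f z) {ε : ℝ} (hε : 0 < ε) :
    ∃ g : MvPolynomial (Fin d) ℂ, ∀ z ∈ K, ‖f z - eval z g‖ ≤ ε := by
  obtain ⟨R, hR0, hR⟩ := hK.isBounded.subset_closedBall_lt 0 0
  have hopen : IsOpen {x | HolAt f x} :=
    isOpen_iff_mem_nhds.2 fun x (hx : HolAt f x) => hx.eventually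
  have hcomp : IsCompact (closedBall (0 : Fin d → ℂ) R \ {x | HolAt f x}) :=
    (isCompact_closedBall _ _).diff hopen
  have hnK : ∀ z ∈ closedBall (0 : Fin d → ℂ) R \ {x | HolAt f x}, z ∉ K := fun z hz hzK =>
    hz.2 (hf z hzK)
  choose! p hp1 hp2 using hsep
  obtain ⟨t, ht, hcov⟩ := hcomp.elim_nhds_subcover (fun z => {y | 1 < ‖eval y (p z)‖}) (fun z hz =>
    (isOpen_lt continuous_const (continuous_eval (p z)).norm).mem_nhds (hp2 z (hnK z hz)))
  obtain ⟨g, hg⟩ := exists_polynomial_approx_polyhedron _ d (fun _ => R) (t.toList.map p) rfl f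
    (fun z hz hzl => by
      by_contra hcon
      have hzR : z ∈ closedBall (0 : Fin d → ℂ) R := by
        rw [mem_closedBall_zero_iff]
        exact (pi_norm_le_iff_of_nonneg hR0.le).2 hz
      obtain ⟨y, hy, hzy⟩ := mem_iUnion₂.1 (hcov ⟨hzR, hcon⟩)
      have := hzl (p y) (List.mem_map_of_mem (Finset.mem_toList.2 hy))
      exact absurd hzy (not_lt.2 this)) ε hε
  refine ⟨g, fun z hz => hg z (fun i => ?_) fun q hq => ?_⟩
  · exact (norm_le_pi_norm z i).trans (by simpa using hR hz)
  · obtain ⟨y, hy, rfl⟩ := List.mem_map.1 hq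
    exact hp1 y (hnK y (ht y (Finset.mem_toList.1 hy))) z hz

/-- The Oka–Weil theorem. -/
theorem oka_weil {σ E : Type*} [Fintype σ] [NormedAddCommGroup E] [NormedSpace ℂ E]
    (e : E ≃L[ℂ] (σ → ℂ)) {K : Set E} (hK : IsCompact K)
    (hsep : ∀ z ∉ K, ∃ p : MvPolynomial σ ℂ, (∀ w ∈ K, ‖eval (e w) p‖ ≤ 1) ∧ 1 < ‖eval (e z) p‖)
    {f : E → ℂ} (hf : ∀ z ∈ K, HolAt f z) {ε : ℝ} (hε : 0 < ε) :
    ∃ g : MvPolynomial σ ℂ, ∀ z ∈ K, ‖f z - eval (e z) g‖ ≤ ε := by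
  set i := Fintype.equivFin σ with hi
  set e' : E ≃L[ℂ] (Fin (Fintype.card σ) → ℂ) :=
    e.trans (LinearEquiv.funCongrLeft ℂ ℂ i.symm).toContinuousLinearEquiv with he'
  have he'z : ∀ z, e' z = e z ∘ i.symm := fun z => rfl
  have hev : ∀ z (p : MvPolynomial σ ℂ), eval (e' z) (rename i p) = eval (e z) p := fun z p => by
    rw [eval_rename, he'z, Function.comp_assoc, Equiv.symm_comp_self, Function.comp_id]
  obtain ⟨g, hg⟩ := oka_weil_fin (K := e' '' K) (f := fun x => f (e'.symm x))
    (hK.image e'.continuous) (fun z hz => by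
      obtain ⟨p, hp1, hp2⟩ := hsep (e'.symm z) (fun h => hz ⟨_, h, by simp⟩)
      refine ⟨rename i p, ?_, ?_⟩
      · rintro _ ⟨w, hw, rfl⟩
        rw [hev]; exact hp1 w hw
      · rwa [← hev, e'.apply_symm_apply] at hp2)
    (by
      rintro _ ⟨z, hz, rfl⟩
      refine HolAt.comp (g := f) (f := fun x => e'.symm x) ?_ (e'.symm.differentiable.holAt _)
      rw [e'.symm_apply_apply]; exact hf z hz) hε
  refine ⟨rename i.symm g, fun z hz => ?_⟩
  have := hg (e' z) ⟨z, hz, rfl⟩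
  rw [e'.symm_apply_apply] at this
  rwa [eval_rename, ← he'z]

end OkaWeil

section Separation

theorem exists_polynomial_of_not_mem_hull {σ E : Type*} [TopologicalSpace E] {ev : E → σ → ℂ}
    (hev : Continuous ev) {K : Set E} (hK : IsCompact K) {z : E}
    (hz : ¬ ∀ p : MvPolynomial σ ℂ, ‖eval (ev z) p‖ ≤ sSup ((fun w => ‖eval (ev w) p‖) '' K)) :
    ∃ p : MvPolynomial σ ℂ, (∀ w ∈ K, ‖eval (ev w) p‖ ≤ 1) ∧ 1 < ‖eval (ev z) p‖ := by
  push Not at hz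
  obtain ⟨p, hp⟩ := hz
  set S := sSup ((fun w => ‖eval (ev w) p‖) '' K) with hS
  have hS0 : 0 ≤ S := Real.sSup_nonneg (by rintro _ ⟨w, _, rfl⟩; exact norm_nonneg _)
  have hbdd : BddAbove ((fun w => ‖eval (ev w) p‖) '' K) :=
    (hK.image ((continuous_eval p).comp hev).norm).bddAbove
  set c := (S + ‖eval (ev z) p‖) / 2 with hc
  have hc0 : 0 < c := by linarith
  have hval : ∀ w, ‖eval (ev w) (C ((c : ℂ)⁻¹) * p)‖ = ‖eval (ev w) p‖ / c := fun w => by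
    rw [map_mul, eval_C, norm_mul, norm_inv, Complex.norm_real, Real.norm_of_nonneg hc0.le,
      inv_mul_eq_div]
  refine ⟨C ((c : ℂ)⁻¹) * p, fun w hw => ?_, ?_⟩
  · rw [hval, div_le_one hc0]
    have : ‖eval (ev w) p‖ ≤ S := le_csSup hbdd ⟨w, hw, rfl⟩
    linarith
  · rw [hval, lt_div_iff₀ hc0]
    linarith

variable {N n : ℕ}

/-- The coordinates of a point of `ℂᴺ × ℂⁿ`. -/
def prodCoord (N n : ℕ) :
    (EuclideanSpace ℂ (Fin N) × EuclideanSpace ℂ (Fin n)) ≃L[ℂ] (Fin N ⊕ Fin n → ℂ) :=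
  ((EuclideanSpace.equiv (Fin N) ℂ).prodCongr (EuclideanSpace.equiv (Fin n) ℂ)).trans
    (LinearEquiv.sumArrowLequivProdArrow (Fin N) (Fin n) ℂ ℂ).symm.toContinuousLinearEquiv

theorem prodCoord_apply (q : EuclideanSpace ℂ (Fin N) × EuclideanSpace ℂ (Fin n)) :
    prodCoord N n q = Sum.elim (fun i => q.1 i) (fun j => q.2 j) := by
  ext i
  cases i <;> rfl

/-- The union of a polynomially convex compact set over `L` and a holomorphic graph over `L` is
polynomially convex. -/
theorem exists_polynomial_union_graph {L : Set (EuclideanSpace ℂ (Fin N))} (hLc : IsCompact L)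
    (hL : ∀ z ∉ L, ∃ p : MvPolynomial (Fin N) ℂ, (∀ w ∈ L, ‖eval (fun i => w i) p‖ ≤ 1) ∧
      1 < ‖eval (fun i => z i) p‖)
    {Kt : Set (EuclideanSpace ℂ (Fin N) × EuclideanSpace ℂ (Fin n))} (hKtc : IsCompact Kt)
    (hKt : ∀ q ∉ Kt, ∃ p : MvPolynomial (Fin N ⊕ Fin n) ℂ,
      (∀ w ∈ Kt, ‖eval (prodCoord N n w) p‖ ≤ 1) ∧ 1 < ‖eval (prodCoord N n q) p‖)
    (hproj : ∀ q ∈ Kt, q.1 ∈ L) {f : EuclideanSpace ℂ (Fin N) → EuclideanSpace ℂ (Fin n)}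
    (hf : ∀ z ∈ L, HolAt f z) (q : EuclideanSpace ℂ (Fin N) × EuclideanSpace ℂ (Fin n))
    (hq : q ∉ Kt ∪ (fun z => (z, f z)) '' L) :
    ∃ p : MvPolynomial (Fin N ⊕ Fin n) ℂ,
      (∀ w ∈ Kt ∪ (fun z => (z, f z)) '' L, ‖eval (prodCoord N n w) p‖ ≤ 1) ∧
        1 < ‖eval (prodCoord N n q) p‖ := by
  have hinl : ∀ (w : EuclideanSpace ℂ (Fin N) × EuclideanSpace ℂ (Fin n)) (p : MvPolynomial (Fin N) ℂ),
      eval (prodCoord N n w) (rename Sum.inl p) = eval (fun i => w.1 i) p := fun w p => by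
    rw [eval_rename, prodCoord_apply]; rfl
  by_cases hqL : q.1 ∈ L
  swap
  · obtain ⟨p, hp1, hp2⟩ := hL q.1 hqL
    refine ⟨rename Sum.inl p, fun w hw => ?_, by rwa [hinl]⟩
    rw [hinl]
    rcases hw with hw | ⟨z, hz, rfl⟩
    · exact hp1 _ (hproj w hw)
    · exact hp1 _ hz
  have hqK : q ∉ Kt := fun h => hq (Or.inl h)
  have hne : q.2 ≠ f q.1 := fun h => hq (Or.inr ⟨q.1, hqL, Prod.ext rfl h.symm⟩)
  obtain ⟨j, hj⟩ : ∃ j, q.2 j ≠ f q.1 j := by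
    by_contra hcon
    push Not at hcon
    exact hne (by ext j; exact hcon j)
  obtain ⟨P, hP1, hP2⟩ := hKt q hqK
  have hfj : ∀ z ∈ L, HolAt (fun z => f z j) z := fun z hz =>
    HolAt.comp (g := fun v : EuclideanSpace ℂ (Fin n) => v j) (f := f)
      ((EuclideanSpace.proj (𝕜 := ℂ) j).differentiable.holAt _) (hf z hz)
  have hcontf : ContinuousOn f L := fun z hz =>
    (hf z hz).differentiableAt.continuousAt.continuousWithinAt
  set a := eval (prodCoord N n q) P with ha
  have ha0 : a ≠ 0 := norm_pos_iff.1 (by linarith)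
  set θ := ‖a‖⁻¹ with hθ
  have hθ1 : θ < 1 := inv_lt_one_of_one_lt₀ hP2
  have hθ0 : 0 ≤ θ := by positivity
  set D := ‖q.2 j - f q.1 j‖ with hD
  have hD0 : 0 < D := norm_pos_iff.2 (sub_ne_zero.2 hj)
  have hcP : Continuous fun w => eval (prodCoord N n w) P :=
    (continuous_eval P).comp (prodCoord N n).continuous
  obtain ⟨A, hA⟩ := hLc.exists_bound_of_continuousOn
    (f := fun z => eval (prodCoord N n (z, f z)) P * a⁻¹)
    ((hcP.comp_continuousOn (continuousOn_id.prodMk hcontf)).mul continuousOn_const)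
  obtain ⟨B, hB⟩ := hKtc.exists_bound_of_continuousOn (f := fun w => w.2 j - f w.1 j)
    (by
      refine ContinuousOn.sub ?_ ?_
      · exact ((EuclideanSpace.proj (𝕜 := ℂ) j).continuous.comp continuous_snd).continuousOn
      · exact (EuclideanSpace.proj (𝕜 := ℂ) j).continuous.comp_continuousOn
          (hcontf.comp continuous_fst.continuousOn fun w hw => hproj w hw))
  have hlim : Tendsto (fun k : ℕ => θ ^ k * (B + 1)) atTop (𝓝 0) := by
    simpa using (tendsto_pow_atTop_nhds_zero_of_lt_one hθ0 hθ1).mul_const (B + 1)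
  obtain ⟨k, hk⟩ := (hlim.eventually_lt_const (half_pos hD0)).exists
  have hη : 0 < min (min 1 (D / 4)) (D / 2 / (|A| ^ k + 1)) := by positivity
  set η := min (min 1 (D / 4)) (D / 2 / (|A| ^ k + 1)) with hηdef
  have hη1 : η ≤ 1 := (min_le_left _ _).trans (min_le_left _ _)
  have hη2 : η ≤ D / 4 := (min_le_left _ _).trans (min_le_right _ _)
  have hη3 : |A| ^ k * η ≤ D / 2 := by
    have : η ≤ D / 2 / (|A| ^ k + 1) := min_le_right _ _
    rw [le_div_iff₀ (by positivity)] at this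
    nlinarith
  obtain ⟨g, hg⟩ := oka_weil (EuclideanSpace.equiv (Fin N) ℂ) hLc hL hfj hη
  have hval : ∀ w, eval (prodCoord N n w) (C (2 / D : ℂ) * ((C a⁻¹ * P) ^ k *
      (X (Sum.inr j) - rename Sum.inl g))) = (2 / D : ℂ) * ((eval (prodCoord N n w) P * a⁻¹) ^ k *
        ((w.2 j - f w.1 j) + (f w.1 j - eval (fun i => w.1 i) g))) := by
    intro w
    simp only [map_mul, map_pow, map_sub, eval_C, eval_X, hinl, mul_comm a⁻¹]
    rw [prodCoord_apply]
    simp only [Sum.elim_inr]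
    ring
  have h2D : ‖(2 / D : ℂ)‖ = 2 / D := by
    rw [norm_div, Complex.norm_real, Real.norm_of_nonneg hD0.le, Complex.norm_ofNat]
  refine ⟨C (2 / D : ℂ) * ((C a⁻¹ * P) ^ k * (X (Sum.inr j) - rename Sum.inl g)), fun w hw => ?_, ?_⟩
  · rw [hval, norm_mul, h2D]
    suffices h : ‖(eval (prodCoord N n w) P * a⁻¹) ^ k *
        ((w.2 j - f w.1 j) + (f w.1 j - eval (fun i => w.1 i) g))‖ ≤ D / 2 by
      calc _ ≤ 2 / D * (D / 2) := by gcongr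
        _ = 1 := by field_simp
    rw [norm_mul, norm_pow]
    rcases hw with hw | ⟨z, hz, rfl⟩
    · have h1 : ‖eval (prodCoord N n w) P * a⁻¹‖ ≤ θ := by
        rw [norm_mul, norm_inv]
        exact mul_le_of_le_one_left hθ0 (hP1 w hw)
      have h2 : ‖(w.2 j - f w.1 j) + (f w.1 j - eval (fun i => w.1 i) g)‖ ≤ B + 1 :=
        (norm_add_le _ _).trans (add_le_add (hB w hw) ((hg w.1 (hproj w hw)).trans hη1))
      calc _ ≤ θ ^ k * (B + 1) := by gcongr
        _ ≤ D / 2 := hk.le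
    · simp only [sub_self, zero_add]
      have h1 : ‖eval (prodCoord N n (z, f z)) P * a⁻¹‖ ≤ |A| := (hA z hz).trans (le_abs_self A)
      have h2 : ‖f z j - eval (fun i => z i) g‖ ≤ η := hg z hz
      calc _ ≤ |A| ^ k * η := by gcongr
        _ ≤ D / 2 := hη3
  · rw [hval, ← ha, mul_inv_cancel₀ ha0, one_pow, one_mul, norm_mul, h2D]
    have h2 : ‖f q.1 j - eval (fun i => q.1 i) g‖ ≤ η := hg q.1 hqL
    have h3 := norm_sub_le ((q.2 j - f q.1 j) + (f q.1 j - eval (fun i => q.1 i) g))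
      (f q.1 j - eval (fun i => q.1 i) g)
    rw [add_sub_cancel_right] at h3
    rw [div_mul_eq_mul_div, lt_div_iff₀ hD0]
    linarith

theorem exists_separating_polynomial {L : Set (EuclideanSpace ℂ (Fin N))} (hLc : IsCompact L)
    (hL : ∀ z ∉ L, ∃ p : MvPolynomial (Fin N) ℂ, (∀ w ∈ L, ‖eval (fun i => w i) p‖ ≤ 1) ∧
      1 < ‖eval (fun i => z i) p‖)
    {Kt : Set (EuclideanSpace ℂ (Fin N) × EuclideanSpace ℂ (Fin n))} (hKtc : IsCompact Kt)
    (hKt : ∀ q ∉ Kt, ∃ p : MvPolynomial (Fin N ⊕ Fin n) ℂ,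
      (∀ w ∈ Kt, ‖eval (prodCoord N n w) p‖ ≤ 1) ∧ 1 < ‖eval (prodCoord N n q) p‖)
    (hproj : ∀ q ∈ Kt, q.1 ∈ L) {f : EuclideanSpace ℂ (Fin N) → EuclideanSpace ℂ (Fin n)}
    (hf : ∀ z ∈ L, HolAt f z) (hfK : ∀ z ∈ L, (z, f z) ∉ Kt) :
    ∃ p : MvPolynomial (Fin N ⊕ Fin n) ℂ,
      (∀ z ∈ L, ‖eval (prodCoord N n (z, f z)) p - 1‖ ≤ 1 / 8) ∧
      ∀ w ∈ Kt, ‖eval (prodCoord N n w) p‖ ≤ 1 / 8 := by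
  have hcontf : ContinuousOn f L := fun z hz =>
    (hf z hz).differentiableAt.continuousAt.continuousWithinAt
  have hΓ : IsCompact ((fun z => (z, f z)) '' L) :=
    hLc.image_of_continuousOn (continuousOn_id.prodMk hcontf)
  have hdisj : Disjoint Kt ((fun z => (z, f z)) '' L) := by
    rw [Set.disjoint_right]
    rintro _ ⟨z, hz, rfl⟩
    exact hfK z hz
  obtain ⟨W₁, W₂, hW₁, hW₂, hK₁, hΓ₂, hWd⟩ := SeparatedNhds.of_isCompact_isCompact hKtc hΓ hdisj
  set χ : EuclideanSpace ℂ (Fin N) × EuclideanSpace ℂ (Fin n) → ℂ := W₂.indicator fun _ => 1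
  have hχ₁ : ∀ w ∈ W₁, χ w = 0 := fun w hw =>
    indicator_of_notMem (Set.disjoint_left.1 hWd hw) _
  have hχ₂ : ∀ w ∈ W₂, χ w = 1 := fun w hw => indicator_of_mem hw _
  obtain ⟨p, hp⟩ := oka_weil (prodCoord N n) (hKtc.union hΓ)
    (exists_polynomial_union_graph hLc hL hKtc hKt hproj hf) (f := χ) (fun w hw => by
      rcases hw with hw | hw
      · refine ((differentiable_const (0 : ℂ)).holAt w).congr ?_
        filter_upwards [hW₁.mem_nhds (hK₁ hw)] with y hy using (hχ₁ y hy).symm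
      · refine ((differentiable_const (1 : ℂ)).holAt w).congr ?_
        filter_upwards [hW₂.mem_nhds (hΓ₂ hw)] with y hy using (hχ₂ y hy).symm)
    (ε := 1 / 8) (by norm_num)
  refine ⟨p, fun z hz => ?_, fun w hw => ?_⟩
  · have := hp (z, f z) (Or.inr ⟨z, hz, rfl⟩)
    rwa [hχ₂ _ (hΓ₂ ⟨z, hz, rfl⟩), norm_sub_rev] at this
  · have := hp w (Or.inl hw)
    rwa [hχ₁ _ (hK₁ hw), zero_sub, norm_neg] at this

end Separation

section Flow

variable {E W : Type*} [NormedAddCommGroup E] [NormedSpace ℂ E] [NormedAddCommGroup W]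
  [NormedSpace ℂ W]

/-- `Φ` and `Ψ` are mutually inverse families of holomorphic automorphisms of `W`, depending
holomorphically on a parameter in `U`. -/
structure FibreAut (U : Set E) (Φ Ψ : E × W → W) : Prop where
  diff : DifferentiableOn ℂ Φ (U ×ˢ univ)
  diff_inv : DifferentiableOn ℂ Ψ (U ×ˢ univ)
  left_inv : ∀ z ∈ U, ∀ ζ, Ψ (z, Φ (z, ζ)) = ζ
  right_inv : ∀ z ∈ U, ∀ ζ, Φ (z, Ψ (z, ζ)) = ζ

theorem DifferentiableOn.fibre_comp {U : Set E} {Φ Φ' : E × W → W}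
    (h : DifferentiableOn ℂ Φ (U ×ˢ univ)) (h' : DifferentiableOn ℂ Φ' (U ×ˢ univ)) :
    DifferentiableOn ℂ (fun q => Φ (q.1, Φ' q)) (U ×ˢ univ) :=
  h.comp (differentiableOn_fst.prodMk h') fun _ hq => ⟨hq.1, mem_univ _⟩

theorem FibreAut.comp {U : Set E} {Φ Ψ Φ' Ψ' : E × W → W} (h : FibreAut U Φ Ψ)
    (h' : FibreAut U Φ' Ψ') :
    FibreAut U (fun q => Φ (q.1, Φ' q)) (fun q => Ψ' (q.1, Ψ q)) where
  diff := h.diff.fibre_comp h'.diff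
  diff_inv := h'.diff_inv.fibre_comp h.diff_inv
  left_inv z hz ζ := by
    simp only [h.left_inv z hz, h'.left_inv z hz]
  right_inv z hz ζ := by
    simp only [h.right_inv z hz, h'.right_inv z hz]

/-- A vertical vector field on `U × W` that is the velocity at time `0` of a holomorphic family of
fibred automorphisms. -/
structure FlowOf (U : Set E) (Y : E × W → W) (Φ Ψ : ℂ → E × W → W) : Prop where
  aut : ∀ t, FibreAut U (Φ t) (Ψ t)
  diff : DifferentiableOn ℂ (fun q : ℂ × E × W => Φ q.1 q.2) (univ ×ˢ (U ×ˢ univ))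
  diff_inv : DifferentiableOn ℂ (fun q : ℂ × E × W => Ψ q.1 q.2) (univ ×ˢ (U ×ˢ univ))
  zero : ∀ z ∈ U, ∀ ζ, Φ 0 (z, ζ) = ζ
  deriv : ∀ z ∈ U, ∀ ζ, HasDerivAt (fun t => Φ t (z, ζ)) (Y (z, ζ)) 0
  deriv_inv : ∀ z ∈ U, ∀ ζ, HasDerivAt (fun t => Ψ t (z, ζ)) (-Y (z, ζ)) 0

def Flowable (U : Set E) (Y : E × W → W) : Prop := ∃ Φ Ψ : ℂ → E × W → W, FlowOf U Y Φ Ψ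

theorem FlowOf.zero_inv {U : Set E} {Y : E × W → W} {Φ Ψ : ℂ → E × W → W}
    (h : FlowOf U Y Φ Ψ) : ∀ z ∈ U, ∀ ζ, Ψ 0 (z, ζ) = ζ := fun z hz ζ => by
  conv_lhs => rw [← h.zero z hz ζ]
  exact (h.aut 0).left_inv z hz ζ

theorem Flowable.congr {U : Set E} {Y Y' : E × W → W} (h : Flowable U Y)
    (hY : ∀ z ∈ U, ∀ ζ, Y (z, ζ) = Y' (z, ζ)) : Flowable U Y' := by
  obtain ⟨Φ, Ψ, h⟩ := h
  exact ⟨Φ, Ψ, h.aut, h.diff, h.diff_inv, h.zero, fun z hz ζ => hY z hz ζ ▸ h.deriv z hz ζ,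
    fun z hz ζ => hY z hz ζ ▸ h.deriv_inv z hz ζ⟩

theorem hasDerivAt_comp_of_zero {U : Set E} (hU : IsOpen U) {Φ Φ' : ℂ → E × W → W}
    (hd : DifferentiableOn ℂ (fun q : ℂ × E × W => Φ q.1 q.2) (univ ×ˢ (U ×ˢ univ)))
    {z : E} (hz : z ∈ U) {ζ y y' : W} (h0 : ∀ ζ, Φ 0 (z, ζ) = ζ) (h0' : Φ' 0 (z, ζ) = ζ)
    (h : HasDerivAt (fun t => Φ t (z, ζ)) y 0) (h' : HasDerivAt (fun t => Φ' t (z, ζ)) y' 0) :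
    HasDerivAt (fun t => Φ t (z, Φ' t (z, ζ))) (y + y') 0 := by
  have hopen : IsOpen ((univ : Set ℂ) ×ˢ (U ×ˢ (univ : Set W))) :=
    isOpen_univ.prod (hU.prod isOpen_univ)
  have hdiff : DifferentiableAt ℂ (fun q : ℂ × W => Φ q.1 (z, q.2)) (0, ζ) :=
    (hd.differentiableAt (hopen.mem_nhds (x := (0, z, ζ)) ⟨mem_univ _, hz, mem_univ _⟩)).comp
      (0, ζ) (f := fun q : ℂ × W => (q.1, z, q.2)) (by fun_prop)
  obtain ⟨A, hA⟩ := hdiff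
  have h1 : A (1, 0) = y := by
    have : HasDerivAt (fun t : ℂ => Φ t (z, ζ)) (A (1, 0)) 0 :=
      hA.comp_hasDerivAt (f := fun t : ℂ => (t, ζ)) 0 ((hasDerivAt_id 0).prodMk (hasDerivAt_const 0 ζ))
    exact this.unique h
  have h2 : A (0, y') = y' := by
    have h3 : HasFDerivAt (fun ζ' : W => Φ 0 (z, ζ')) (A.comp (ContinuousLinearMap.inr ℂ ℂ W)) ζ :=
      hA.comp (f := fun ζ' : W => ((0 : ℂ), ζ')) ζ (hasFDerivAt_prodMk_right 0 ζ)
    have h4 : HasFDerivAt (fun ζ' : W => Φ 0 (z, ζ')) (ContinuousLinearMap.id ℂ W) ζ := by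
      simp only [h0]; exact hasFDerivAt_id ζ
    have := congrArg (fun B : W →L[ℂ] W => B y') (h3.unique h4)
    simpa using this
  have hA' : HasFDerivAt (fun q : ℂ × W => Φ q.1 (z, q.2)) A ((0 : ℂ), Φ' 0 (z, ζ)) := by
    rw [h0']; exact hA
  have := hA'.comp_hasDerivAt (f := fun t : ℂ => (t, Φ' t (z, ζ))) 0 ((hasDerivAt_id 0).prodMk h')
  refine this.congr_deriv ?_
  rw [← h1]
  nth_rewrite 2 [← h2]
  rw [← map_add]
  simp

theorem Flowable.add {U : Set E} (hU : IsOpen U) {Y Y' : E × W → W} (h : Flowable U Y)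
    (h' : Flowable U Y') : Flowable U (fun q => Y q + Y' q) := by
  obtain ⟨Φ, Ψ, h⟩ := h
  obtain ⟨Φ', Ψ', h'⟩ := h'
  refine ⟨fun t q => Φ t (q.1, Φ' t q), fun t q => Ψ' t (q.1, Ψ t q), fun t => (h.aut t).comp (h'.aut t),
    ?_, ?_, fun z hz ζ => ?_, fun z hz ζ => ?_, fun z hz ζ => ?_⟩
  · exact h.diff.comp (f := fun q : ℂ × E × W => (q.1, q.2.1, Φ' q.1 q.2))
      (differentiableOn_fst.prodMk (DifferentiableOn.prodMk (by fun_prop) h'.diff))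
      fun q hq => ⟨mem_univ _, hq.2.1, mem_univ _⟩
  · exact h'.diff_inv.comp (f := fun q : ℂ × E × W => (q.1, q.2.1, Ψ q.1 q.2))
      (differentiableOn_fst.prodMk (DifferentiableOn.prodMk (by fun_prop) h.diff_inv))
      fun q hq => ⟨mem_univ _, hq.2.1, mem_univ _⟩
  · simp only [h'.zero z hz, h.zero z hz]
  · exact hasDerivAt_comp_of_zero hU h.diff hz (h.zero z hz) (h'.zero z hz ζ) (h.deriv z hz ζ)
      (h'.deriv z hz ζ)
  · exact (hasDerivAt_comp_of_zero hU h'.diff_inv hz (h'.zero_inv z hz) (h.zero_inv z hz ζ)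
      (h'.deriv_inv z hz ζ) (h.deriv_inv z hz ζ)).congr_deriv (by simp only [neg_add_rev])

theorem flowable_zero (U : Set E) : Flowable U (fun _ : E × W => (0 : W)) := by
  refine ⟨fun _ q => q.2, fun _ q => q.2, fun t => ⟨differentiableOn_snd, differentiableOn_snd,
    fun _ _ _ => rfl, fun _ _ _ => rfl⟩, by fun_prop, by fun_prop, fun _ _ _ => rfl,
    fun z _ ζ => hasDerivAt_const 0 ζ, fun z _ ζ => ?_⟩
  simp only [neg_zero]
  exact hasDerivAt_const 0 ζ

theorem Flowable.sum {ι : Type*} {U : Set E} (hU : IsOpen U) (s : Finset ι) {Y : ι → E × W → W}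
    (h : ∀ i ∈ s, Flowable U (Y i)) : Flowable U (fun q => ∑ i ∈ s, Y i q) := by
  classical
  induction s using Finset.induction_on with
  | empty => simpa using flowable_zero U
  | insert i s hi ih =>
    simp only [Finset.sum_insert hi]
    exact (h i (by simp)).add hU (ih fun j hj => h j (by simp [hj]))

/-- The entire function `(eˣ - 1) / x`. -/
def expSlope : ℂ → ℂ := dslope Complex.exp 0

theorem differentiable_expSlope : Differentiable ℂ expSlope := by
  rw [← differentiableOn_univ]
  exact (Complex.differentiableOn_dslope univ_mem).2 Complex.differentiable_exp.differentiableOn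

theorem one_add_mul_expSlope (x : ℂ) : 1 + x * expSlope x = Complex.exp x := by
  have := sub_smul_dslope Complex.exp 0 x
  rw [sub_zero, smul_eq_mul, Complex.exp_zero] at this
  rw [expSlope, this]; ring

theorem expSlope_zero : expSlope 0 = 1 := by
  rw [expSlope, dslope_same, Complex.deriv_exp, Complex.exp_zero]

theorem exp_mul_expSlope_neg (x : ℂ) : Complex.exp x * expSlope (-x) = expSlope x := by
  rcases eq_or_ne x 0 with rfl | hx
  · simp
  · have h1 := one_add_mul_expSlope x
    have h2 := one_add_mul_expSlope (-x)
    have h3 : Complex.exp x * Complex.exp (-x) = 1 := by rw [← Complex.exp_add]; simp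
    refine mul_left_cancel₀ hx ?_
    linear_combination (-Complex.exp x) * h2 - h1 - h3

/-- Complete vector fields generating overshears along `v`. -/
theorem flowable_overshear {U : Set E} {c : E → ℂ} (hc : DifferentiableOn ℂ c U) (l m : W →L[ℂ] ℂ)
    {v : W} (hv : l v = 0) :
    Flowable U (fun q : E × W => (c q.1 * Complex.exp (l q.2) * m q.2) • v) := by
  set Φ : ℂ → E × W → W := fun t q => q.2 + (t * expSlope (t * (c q.1 * Complex.exp (l q.2) * m v)) *
    (c q.1 * Complex.exp (l q.2) * m q.2)) • v with hΦ
  have hd : DifferentiableOn ℂ (fun q : ℂ × E × W => Φ q.1 q.2) (univ ×ˢ (U ×ˢ univ)) := by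
    have h1 : DifferentiableOn ℂ (fun q : ℂ × E × W => c q.2.1) (univ ×ˢ (U ×ˢ univ)) :=
      hc.comp (f := fun q : ℂ × E × W => q.2.1) (by fun_prop) fun q hq => hq.2.1
    have h2 : Differentiable ℂ (fun q : ℂ × E × W => Complex.exp (l q.2.2)) := by fun_prop
    have h3 : DifferentiableOn ℂ (fun q : ℂ × E × W =>
        expSlope (q.1 * (c q.2.1 * Complex.exp (l q.2.2) * m v))) (univ ×ˢ (U ×ˢ univ)) :=
      differentiable_expSlope.comp_differentiableOn
        (differentiableOn_fst.mul ((h1.mul h2.differentiableOn).mul_const _))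
    have h4 : Differentiable ℂ (fun q : ℂ × E × W => m q.2.2) := by fun_prop
    exact DifferentiableOn.add (by fun_prop) (((differentiableOn_fst.mul h3).mul
      ((h1.mul h2.differentiableOn).mul h4.differentiableOn)).smul_const v)
  have hinv : ∀ t z ζ, Φ (-t) (z, Φ t (z, ζ)) = ζ := by
    intro t z ζ
    set b := c z * Complex.exp (l ζ) with hb
    have hl : l (Φ t (z, ζ)) = l ζ := by simp [hΦ, hv]
    have hm : m (Φ t (z, ζ)) = m ζ * Complex.exp (t * (b * m v)) := by
      simp only [hΦ, map_add, map_smul, smul_eq_mul]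
      rw [← hb, ← one_add_mul_expSlope (t * (b * m v))]; ring
    have h1 : Φ (-t) (z, Φ t (z, ζ)) = Φ t (z, ζ) + (-t * expSlope (-t * (b * m v)) *
        (b * (m ζ * Complex.exp (t * (b * m v))))) • v := by
      have hform : ∀ ξ, Φ (-t) (z, ξ) = ξ + (-t * expSlope (-t * (c z * Complex.exp (l ξ) * m v)) *
        (c z * Complex.exp (l ξ) * m ξ)) • v := fun ξ => rfl
      rw [hform, hl, hm, ← hb]
    rw [h1, hΦ]
    simp only [← hb]
    rw [add_assoc, ← add_smul, ← exp_mul_expSlope_neg (t * (b * m v)), neg_mul t (b * m v)]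
    have : t * (Complex.exp (t * (b * m v)) * expSlope (-(t * (b * m v)))) * (b * m ζ) +
      -t * expSlope (-(t * (b * m v))) * (b * (m ζ * Complex.exp (t * (b * m v)))) = 0 := by ring
    rw [this, zero_smul, add_zero]
  have hdt : ∀ t, DifferentiableOn ℂ (Φ t) (U ×ˢ univ) := fun t =>
    hd.comp (f := fun q : E × W => (t, q)) (by fun_prop) fun q hq => ⟨mem_univ _, hq⟩
  have hderiv : ∀ z ζ, HasDerivAt (fun t => Φ t (z, ζ))
      ((c z * Complex.exp (l ζ) * m ζ) • v) 0 := by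
    intro z ζ
    set b := c z * Complex.exp (l ζ) with hb
    have h1 : DifferentiableAt ℂ (fun t : ℂ => expSlope (t * (b * m v))) 0 :=
      (differentiable_expSlope _).comp (f := fun t : ℂ => t * (b * m v)) 0 (by fun_prop)
    have h2 := ((((hasDerivAt_id (0 : ℂ)).mul h1.hasDerivAt).mul_const (b * m ζ)).smul_const
      v).const_add ζ
    refine h2.congr_deriv ?_
    simp [expSlope_zero]
  refine ⟨Φ, fun t => Φ (-t), fun t => ⟨hdt t, hdt (-t), fun z _ ζ => hinv t z ζ, fun z _ ζ => ?_⟩,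
    hd, ?_, fun z _ ζ => by simp [hΦ], fun z _ ζ => hderiv z ζ, fun z _ ζ => ?_⟩
  · have := hinv (-t) z ζ
    rwa [neg_neg] at this
  · exact hd.comp (f := fun q : ℂ × E × W => (-q.1, q.2)) (by fun_prop)
      fun q hq => ⟨mem_univ _, hq.2⟩
  · have h1 : HasDerivAt (fun t => Φ t (z, ζ)) ((c z * Complex.exp (l ζ) * m ζ) • v) (-(0 : ℂ)) := by
      rw [neg_zero]; exact hderiv z ζ
    have := h1.scomp (0 : ℂ) (hasDerivAt_neg (0 : ℂ))
    exact this.congr_deriv (by simp)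

end Flow

section ExpSum

variable {E W : Type*} [NormedAddCommGroup E] [NormedSpace ℂ E] [NormedAddCommGroup W]
  [NormedSpace ℂ W]

/-- Finite sums of functions `c(z) e^{l(ζ)}` with `c` holomorphic on `U` and `l` linear. -/
inductive ExpSum (U : Set E) : (E × W → ℂ) → Prop
  | term (c : E → ℂ) (l : W →L[ℂ] ℂ) (hc : DifferentiableOn ℂ c U) :
      ExpSum U fun q => c q.1 * Complex.exp (l q.2)
  | add (a b : E × W → ℂ) (ha : ExpSum U a) (hb : ExpSum U b) : ExpSum U fun q => a q + b q

theorem ExpSum.mul {U : Set E} {a b : E × W → ℂ} (ha : ExpSum U a) (hb : ExpSum U b) :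
    ExpSum U fun q => a q * b q := by
  induction ha with
  | term c l hc =>
    induction hb with
    | term c' l' hc' =>
      have := ExpSum.term (fun z => c z * c' z) (l + l') (hc.mul hc')
      convert this using 2 with q
      rw [add_apply, Complex.exp_add]; ring
    | add a b _ _ iha ihb =>
      simp only [mul_add]
      exact ExpSum.add _ _ iha ihb
  | add a a' _ _ iha iha' =>
    simp only [add_mul]
    exact ExpSum.add _ _ iha iha'

theorem ExpSum.of_base {U : Set E} {c : E → ℂ} (hc : DifferentiableOn ℂ c U) :
    ExpSum U fun q : E × W => c q.1 := by
  have := ExpSum.term c (0 : W →L[ℂ] ℂ) hc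
  simpa using this

theorem ExpSum.differentiable_fibre {U : Set E} {a : E × W → ℂ} (ha : ExpSum U a) (z : E) :
    Differentiable ℂ fun ζ => a (z, ζ) := by
  induction ha with
  | term c l hc =>
    change Differentiable ℂ fun ζ => c z * Complex.exp (l ζ)
    fun_prop
  | add a b _ _ iha ihb => exact iha.add ihb

/-- Bounded functions on `Q` which are uniform limits of exponential sums. -/
structure ExpApprox (U : Set E) (Q : Set (E × W)) (g : E × W → ℂ) : Prop where
  bounded : ∃ M, ∀ q ∈ Q, ‖g q‖ ≤ M
  approx : ∀ ε > 0, ∃ a, ExpSum U a ∧ ∀ q ∈ Q, ‖a q - g q‖ ≤ ε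

theorem ExpApprox.congr {U : Set E} {Q : Set (E × W)} {g g' : E × W → ℂ} (h : ExpApprox U Q g)
    (hg : ∀ q ∈ Q, g q = g' q) : ExpApprox U Q g' := by
  refine ⟨?_, fun ε hε => ?_⟩
  · obtain ⟨M, hM⟩ := h.bounded
    exact ⟨M, fun q hq => hg q hq ▸ hM q hq⟩
  · obtain ⟨a, ha, h⟩ := h.approx ε hε
    exact ⟨a, ha, fun q hq => hg q hq ▸ h q hq⟩

theorem ExpApprox.add {U : Set E} {Q : Set (E × W)} {g g' : E × W → ℂ} (h : ExpApprox U Q g)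
    (h' : ExpApprox U Q g') : ExpApprox U Q fun q => g q + g' q := by
  refine ⟨?_, fun ε hε => ?_⟩
  · obtain ⟨M, hM⟩ := h.bounded
    obtain ⟨M', hM'⟩ := h'.bounded
    exact ⟨M + M', fun q hq => (norm_add_le _ _).trans (add_le_add (hM q hq) (hM' q hq))⟩
  · obtain ⟨a, ha, h⟩ := h.approx (ε / 2) (half_pos hε)
    obtain ⟨a', ha', h'⟩ := h'.approx (ε / 2) (half_pos hε)
    refine ⟨_, ha.add _ _ ha', fun q hq => ?_⟩
    rw [add_sub_add_comm, ← add_halves ε]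
    exact (norm_add_le _ _).trans (add_le_add (h q hq) (h' q hq))

theorem ExpApprox.mul {U : Set E} {Q : Set (E × W)} {g g' : E × W → ℂ} (h : ExpApprox U Q g)
    (h' : ExpApprox U Q g') : ExpApprox U Q fun q => g q * g' q := by
  obtain ⟨M, hM⟩ := h.bounded
  obtain ⟨M', hM'⟩ := h'.bounded
  refine ⟨⟨|M| * |M'|, fun q hq => ?_⟩, fun ε hε => ?_⟩
  · rw [norm_mul]
    exact mul_le_mul ((hM q hq).trans (le_abs_self M)) ((hM' q hq).trans (le_abs_self M'))
      (norm_nonneg _) (abs_nonneg M)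
  · have hη : 0 < min 1 (ε / (|M| + |M'| + 1)) := by positivity
    obtain ⟨a, ha, h⟩ := h.approx _ hη
    obtain ⟨a', ha', h'⟩ := h'.approx _ hη
    set η := min 1 (ε / (|M| + |M'| + 1))
    have hη1 : η ≤ 1 := min_le_left _ _
    have hη2 : η * (|M| + |M'| + 1) ≤ ε := (le_div_iff₀ (by positivity)).1 (min_le_right _ _)
    refine ⟨_, ha.mul ha', fun q hq => ?_⟩
    have h1 : ‖a' q‖ ≤ |M'| + 1 := by
      have := norm_add_le (a' q - g' q) (g' q)
      rw [sub_add_cancel] at this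
      linarith [h' q hq, hM' q hq, le_abs_self M']
    have h2 : ‖g q‖ ≤ |M| := (hM q hq).trans (le_abs_self M)
    calc ‖a q * a' q - g q * g' q‖ = ‖(a q - g q) * a' q + g q * (a' q - g' q)‖ := by ring_nf
      _ ≤ η * (|M'| + 1) + |M| * η := by
          refine (norm_add_le _ _).trans ?_
          rw [norm_mul, norm_mul]
          exact add_le_add (mul_le_mul (h q hq) h1 (norm_nonneg _) hη.le)
            (mul_le_mul h2 (h' q hq) (norm_nonneg _) (abs_nonneg _))
      _ = η * (|M| + |M'| + 1) := by ring
      _ ≤ ε := hη2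

theorem expApprox_of_base {U : Set E} {Q : Set (E × W)} (hQ : IsCompact Q) (hQU : ∀ q ∈ Q, q.1 ∈ U)
    {c : E → ℂ} (hc : DifferentiableOn ℂ c U) : ExpApprox U Q fun q => c q.1 := by
  refine ⟨hQ.exists_bound_of_continuousOn (hc.continuousOn.comp continuous_fst.continuousOn hQU),
    fun ε hε => ⟨_, ExpSum.of_base hc, fun q _ => by simpa using hε.le⟩⟩

theorem expApprox_linear {U : Set E} {Q : Set (E × W)} (hQ : IsCompact Q) (l : W →L[ℂ] ℂ) :
    ExpApprox U Q fun q => l q.2 := by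
  obtain ⟨M, hM⟩ := hQ.exists_bound_of_continuousOn (f := fun q : E × W => l q.2)
    (l.continuous.comp continuous_snd).continuousOn
  refine ⟨⟨M, hM⟩, fun ε hε => ?_⟩
  set t : ℝ := min (1 / (|M| + 1)) (ε / (|M| + 1) ^ 2) with ht
  have ht0 : 0 < t := by positivity
  have hM1 : (0 : ℝ) < |M| + 1 := by positivity
  have ht1 : t * (|M| + 1) ≤ 1 := (le_div_iff₀ hM1).1 (min_le_left _ _)
  have ht2 : t * (|M| + 1) ^ 2 ≤ ε := (le_div_iff₀ (by positivity)).1 (min_le_right _ _)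
  have htc : (t : ℂ) ≠ 0 := by exact_mod_cast ht0.ne'
  refine ⟨_, (ExpSum.term (fun _ => (t : ℂ)⁻¹) ((t : ℂ) • l) (differentiableOn_const _)).add _ _
    (ExpSum.of_base (c := fun _ => -(t : ℂ)⁻¹) (differentiableOn_const _)), fun q hq => ?_⟩
  set x : ℂ := t * l q.2 with hx
  have hl : ‖l q.2‖ ≤ |M| + 1 := by linarith [hM q hq, le_abs_self M]
  have hxn : ‖x‖ = t * ‖l q.2‖ := by
    rw [hx, norm_mul, Complex.norm_real, Real.norm_of_nonneg ht0.le]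
  have hx1 : ‖x‖ ≤ 1 := by
    rw [hxn]; exact (mul_le_mul_of_nonneg_left hl ht0.le).trans ht1
  have h1 := Complex.norm_exp_sub_one_sub_id_le hx1
  have h2 : (t : ℂ)⁻¹ * Complex.exp (((t : ℂ) • l) q.2) + -(t : ℂ)⁻¹ - l q.2 =
      (t : ℂ)⁻¹ * (Complex.exp x - 1 - x) := by
    rw [smul_apply, smul_eq_mul, ← hx]
    have : l q.2 = (t : ℂ)⁻¹ * x := by rw [hx, inv_mul_cancel_left₀ htc]
    rw [this]; ring
  rw [h2, norm_mul, norm_inv, Complex.norm_real, Real.norm_of_nonneg ht0.le, inv_mul_le_iff₀ ht0]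
  refine h1.trans ?_
  rw [hxn, mul_pow]
  have : ‖l q.2‖ ^ 2 ≤ (|M| + 1) ^ 2 := by gcongr
  nlinarith [mul_le_mul_of_nonneg_left this (sq_nonneg t)]

theorem expApprox_const {U : Set E} {Q : Set (E × W)} (c : ℂ) : ExpApprox U Q fun _ => c :=
  ⟨⟨‖c‖, fun _ _ => le_rfl⟩, fun ε hε =>
    ⟨_, ExpSum.of_base (c := fun _ => c) (differentiableOn_const _), fun q _ => by simpa using hε.le⟩⟩

theorem ExpApprox.eval {σ : Type*} {U : Set E} {Q : Set (E × W)} {g : E × W → σ → ℂ}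
    (hg : ∀ i, ExpApprox U Q fun q => g q i) (p : MvPolynomial σ ℂ) :
    ExpApprox U Q fun q => MvPolynomial.eval (g q) p := by
  induction p using MvPolynomial.induction_on with
  | C a => simpa using expApprox_const a
  | add p q hp hq => simpa using hp.add hq
  | mul_X p i hp => simpa using hp.mul (hg i)

/-- A polynomial with superattracting fixed points `0` and `1`. -/
def smoothStep (w : ℂ) : ℂ := 3 * w ^ 2 - 2 * w ^ 3

theorem norm_smoothStep_iterate_le {w : ℂ} (hw : ‖w‖ ≤ 1 / 4) (m : ℕ) :
    ‖smoothStep^[m] w‖ ≤ (7 / 8) ^ m * (1 / 4) := by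
  induction m with
  | zero => simpa using hw
  | succ m ih =>
    rw [Function.iterate_succ_apply']
    set y := smoothStep^[m] w
    have hy : ‖y‖ ≤ 1 / 4 :=
      ih.trans (mul_le_of_le_one_left (by norm_num) (pow_le_one₀ (by norm_num) (by norm_num)))
    have h1 : ‖smoothStep y‖ ≤ 3 * ‖y‖ ^ 2 + 2 * ‖y‖ ^ 3 := by
      refine (norm_sub_le _ _).trans ?_
      simp
    have h2 : 3 * ‖y‖ ^ 2 + 2 * ‖y‖ ^ 3 ≤ 7 / 8 * ‖y‖ := by
      have h0 := norm_nonneg y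
      nlinarith [mul_nonneg h0 h0]
    rw [pow_succ]
    nlinarith

theorem smoothStep_one_sub (w : ℂ) : smoothStep (1 - w) = 1 - smoothStep w := by
  simp only [smoothStep]; ring

theorem smoothStep_iterate_one_sub (w : ℂ) (m : ℕ) :
    smoothStep^[m] (1 - w) = 1 - smoothStep^[m] w := by
  induction m with
  | zero => rfl
  | succ m ih => rw [Function.iterate_succ_apply', Function.iterate_succ_apply', ih, smoothStep_one_sub]

theorem ExpApprox.smoothStep_iterate {U : Set E} {Q : Set (E × W)} {g : E × W → ℂ}
    (h : ExpApprox U Q g) (m : ℕ) : ExpApprox U Q fun q => smoothStep^[m] (g q) := by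
  induction m with
  | zero => exact h
  | succ m ih =>
    refine (((expApprox_const 3).mul (ih.mul ih)).add
      ((expApprox_const (-2)).mul (ih.mul (ih.mul ih)))).congr fun q _ => ?_
    rw [Function.iterate_succ_apply', smoothStep]; ring

theorem ExpApprox.exists_cutoff {U : Set E} {Q₁ Q₂ : Set (E × W)} {h g : E × W → ℂ}
    (hh : ExpApprox U (Q₁ ∪ Q₂) h) (h₁ : ∀ q ∈ Q₁, ‖h q - 1‖ ≤ 1 / 4) (h₂ : ∀ q ∈ Q₂, ‖h q‖ ≤ 1 / 4)
    (hg : ExpApprox U (Q₁ ∪ Q₂) g) {ε : ℝ} (hε : 0 < ε) :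
    ∃ a, ExpSum U a ∧ (∀ q ∈ Q₁, ‖a q - g q‖ ≤ ε) ∧ ∀ q ∈ Q₂, ‖a q‖ ≤ ε := by
  obtain ⟨M, hM⟩ := hg.bounded
  have hM' : ∀ q ∈ Q₁ ∪ Q₂, ‖g q‖ ≤ |M| := fun q hq => (hM q hq).trans (le_abs_self M)
  have hlim : Tendsto (fun m : ℕ => (7 / 8 : ℝ) ^ m * (1 / 4) * |M|) atTop (𝓝 0) := by
    have := ((tendsto_pow_atTop_nhds_zero_of_lt_one (r := (7 / 8 : ℝ)) (by norm_num)
      (by norm_num)).mul_const (1 / 4)).mul_const |M|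
    simpa using this
  obtain ⟨m, hm⟩ := (hlim.eventually_lt_const (half_pos hε)).exists
  obtain ⟨a, ha, hag⟩ := ((hh.smoothStep_iterate m).mul hg).approx (ε / 2) (half_pos hε)
  refine ⟨a, ha, fun q hq => ?_, fun q hq => ?_⟩
  · have h3 : ‖smoothStep^[m] (h q) - 1‖ ≤ (7 / 8) ^ m * (1 / 4) := by
      rw [norm_sub_rev, ← smoothStep_iterate_one_sub]
      exact norm_smoothStep_iterate_le (by rw [norm_sub_rev]; exact h₁ q hq) m
    calc ‖a q - g q‖ = ‖(a q - smoothStep^[m] (h q) * g q) + (smoothStep^[m] (h q) - 1) * g q‖ := by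
          ring_nf
      _ ≤ ε / 2 + (7 / 8) ^ m * (1 / 4) * |M| := by
          refine (norm_add_le _ _).trans (add_le_add (hag q (Or.inl hq)) ?_)
          rw [norm_mul]
          exact mul_le_mul h3 (hM' q (Or.inl hq)) (norm_nonneg _) (by positivity)
      _ ≤ ε := by linarith
  · have h3 := norm_smoothStep_iterate_le (h₂ q hq) m
    calc ‖a q‖ = ‖(a q - smoothStep^[m] (h q) * g q) + smoothStep^[m] (h q) * g q‖ := by ring_nf
      _ ≤ ε / 2 + (7 / 8) ^ m * (1 / 4) * |M| := by
          refine (norm_add_le _ _).trans (add_le_add (hag q (Or.inr hq)) ?_)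
          rw [norm_mul]
          exact mul_le_mul h3 (hM' q (Or.inr hq)) (norm_nonneg _) (by positivity)
      _ ≤ ε := by linarith

end ExpSum

section Thickening

/-- The vertical closed `ρ`-neighbourhood of `K`. -/
def fibreThickening {E W : Type*} [NormedAddCommGroup W] (K : Set (E × W)) (ρ : ℝ) : Set (E × W) :=
  {q | ∃ ζ, (q.1, ζ) ∈ K ∧ ‖q.2 - ζ‖ ≤ ρ}

theorem fibreThickening_mono {E W : Type*} [NormedAddCommGroup W] {K : Set (E × W)} {ρ ρ' : ℝ}
    (h : ρ ≤ ρ') : fibreThickening K ρ ⊆ fibreThickening K ρ' :=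
  fun _ ⟨ζ, hζ, hq⟩ => ⟨ζ, hζ, hq.trans h⟩

theorem mem_fibreThickening_of_norm_sub_le {E W : Type*} [NormedAddCommGroup W] {K : Set (E × W)}
    {ρ s : ℝ} {z : E} {ζ ζ' : W} (h : (z, ζ) ∈ fibreThickening K ρ) (hs : ‖ζ' - ζ‖ ≤ s) :
    (z, ζ') ∈ fibreThickening K (ρ + s) := by
  obtain ⟨ξ, hξ, hq⟩ := h
  refine ⟨ξ, hξ, ?_⟩
  have := norm_add_le (ζ' - ζ) (ζ - ξ)
  rw [sub_add_sub_cancel] at this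
  simp only at hq ⊢
  linarith

theorem isCompact_fibreThickening {E W : Type*} [TopologicalSpace E] [NormedAddCommGroup W] [ProperSpace W]
    {K : Set (E × W)} (hK : IsCompact K) (ρ : ℝ) : IsCompact (fibreThickening K ρ) := by
  have : fibreThickening K ρ =
      (fun x : (E × W) × W => (x.1.1, x.1.2 + x.2)) '' (K ×ˢ closedBall 0 ρ) := by
    ext ⟨z, ζ⟩
    constructor
    · rintro ⟨ξ, hξ, hq⟩
      exact ⟨((z, ξ), ζ - ξ), ⟨hξ, by simpa using hq⟩, by simp⟩
    · rintro ⟨⟨⟨z', ξ⟩, η⟩, ⟨hξ, hη⟩, h⟩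
      obtain ⟨rfl, rfl⟩ := Prod.ext_iff.1 h
      exact ⟨ξ, hξ, by simpa using hη⟩
  rw [this]
  exact (hK.prod (isCompact_closedBall 0 ρ)).image (by fun_prop)

end Thickening

section Field

variable {E : Type*} [NormedAddCommGroup E] [NormedSpace ℂ E] {n : ℕ}

/-- The vertical field `ζ_j (∂_j a · e_k - ∂_k a · e_j)`. -/
def shearField {E : Type*} (j k : Fin n) (a : E × EuclideanSpace ℂ (Fin n) → ℂ)
    (q : E × EuclideanSpace ℂ (Fin n)) : EuclideanSpace ℂ (Fin n) :=
  q.2 j • ((fderiv ℂ (fun ζ => a (q.1, ζ)) q.2 (EuclideanSpace.single j 1)) • EuclideanSpace.single k 1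
    - (fderiv ℂ (fun ζ => a (q.1, ζ)) q.2 (EuclideanSpace.single k 1)) • EuclideanSpace.single j (1 : ℂ))

theorem ExpSum.flowable_shearField {U : Set E} (hU : IsOpen U)
    {a : E × EuclideanSpace ℂ (Fin n) → ℂ} (ha : ExpSum U a) (j k : Fin n) :
    Flowable U (shearField j k a) := by
  induction ha with
  | term c l hc =>
    set v : EuclideanSpace ℂ (Fin n) := l (EuclideanSpace.single j 1) • EuclideanSpace.single k 1 -
      l (EuclideanSpace.single k 1) • EuclideanSpace.single j 1 with hv
    have hlv : l v = 0 := by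
      rw [hv, map_sub, map_smul, map_smul, smul_eq_mul, smul_eq_mul, mul_comm, sub_self]
    refine (flowable_overshear hc l (EuclideanSpace.proj j) hlv).congr fun z _ ζ => ?_
    have hd : fderiv ℂ (fun ζ => c z * Complex.exp (l ζ)) ζ = (c z * Complex.exp (l ζ)) • l := by
      have := ((l.hasFDerivAt (x := ζ)).cexp.const_mul (c z)).fderiv
      rw [this, smul_smul]
    have hp : (EuclideanSpace.proj j : EuclideanSpace ℂ (Fin n) →L[ℂ] ℂ) ζ = ζ j := rfl
    simp only [shearField, hd, smul_apply, smul_eq_mul, hp]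
    rw [hv, smul_sub, smul_sub]
    simp only [smul_smul]
    congr 2 <;> ring
  | add a b ha hb iha ihb =>
    refine (iha.add hU ihb).congr fun z _ ζ => ?_
    have hd : fderiv ℂ (fun ζ => a (z, ζ) + b (z, ζ)) ζ =
        fderiv ℂ (fun ζ => a (z, ζ)) ζ + fderiv ℂ (fun ζ => b (z, ζ)) ζ :=
      fderiv_fun_add (ha.differentiable_fibre z ζ) (hb.differentiable_fibre z ζ)
    simp only [shearField, hd, add_apply, add_smul]
    rw [← smul_add]
    congr 1
    abel

theorem norm_shearField_add_le {E : Type*} {a : E × EuclideanSpace ℂ (Fin n) → ℂ} {z : E}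
    {ζ : EuclideanSpace ℂ (Fin n)} {s B ε : ℝ} (hs : 0 < s) {j k : Fin n} (hjk : j ≠ k)
    (hB : ‖ζ‖ ≤ B) (hd : Differentiable ℂ fun ζ => a (z, ζ)) (c : ℂ)
    (ha : ∀ ξ ∈ ball ζ s, ‖a (z, ξ) - c * ξ k‖ ≤ ε) :
    ‖shearField j k a (z, ζ) + c • ζ j • EuclideanSpace.single j (1 : ℂ)‖ ≤ B * (4 * ε / s) := by
  set g : EuclideanSpace ℂ (Fin n) → ℂ := fun ξ => a (z, ξ) - (c • EuclideanSpace.proj (𝕜 := ℂ) k :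
    EuclideanSpace ℂ (Fin n) →L[ℂ] ℂ) ξ with hg
  have hgd : Differentiable ℂ g := hd.sub (ContinuousLinearMap.differentiable _)
  have hgb : ‖fderiv ℂ g ζ‖ ≤ 2 * ε / s := norm_fderiv_le_of_bound hs hgd.differentiableOn ha
  have hfa : fderiv ℂ (fun ξ => a (z, ξ)) ζ = fderiv ℂ g ζ + c • EuclideanSpace.proj (𝕜 := ℂ) k := by
    rw [hg, fderiv_fun_sub (hd ζ) (ContinuousLinearMap.differentiableAt _),
      ContinuousLinearMap.fderiv, sub_add_cancel]
  have he : ∀ i, ‖fderiv ℂ g ζ (EuclideanSpace.single i (1 : ℂ))‖ ≤ 2 * ε / s := fun i => by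
    have := (fderiv ℂ g ζ).le_opNorm (EuclideanSpace.single i (1 : ℂ))
    rw [PiLp.norm_single, norm_one, mul_one] at this
    exact this.trans hgb
  have hval : shearField j k a (z, ζ) + c • ζ j • EuclideanSpace.single j (1 : ℂ) =
      ζ j • (fderiv ℂ g ζ (EuclideanSpace.single j 1) • EuclideanSpace.single k (1 : ℂ)
        - fderiv ℂ g ζ (EuclideanSpace.single k 1) • EuclideanSpace.single j (1 : ℂ)) := by
    have h1 : (EuclideanSpace.proj (𝕜 := ℂ) k : EuclideanSpace ℂ (Fin n) →L[ℂ] ℂ)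
        (EuclideanSpace.single j 1) = 0 := by simp [hjk.symm]
    have h2 : (EuclideanSpace.proj (𝕜 := ℂ) k : EuclideanSpace ℂ (Fin n) →L[ℂ] ℂ)
        (EuclideanSpace.single k 1) = 1 := by simp
    simp only [shearField, hfa, add_apply, smul_apply, h1, h2]
    module
  rw [hval, norm_smul]
  have hζj : ‖ζ j‖ ≤ B := (PiLp.norm_apply_le ζ j).trans hB
  have h3 : ‖fderiv ℂ g ζ (EuclideanSpace.single j 1) • EuclideanSpace.single k (1 : ℂ)
        - fderiv ℂ g ζ (EuclideanSpace.single k 1) • EuclideanSpace.single j (1 : ℂ)‖ ≤ 4 * ε / s := by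
    refine (norm_sub_le _ _).trans ?_
    rw [norm_smul, norm_smul, PiLp.norm_single, PiLp.norm_single, norm_one,
      mul_one, mul_one]
    calc _ ≤ 2 * ε / s + 2 * ε / s := add_le_add (he j) (he k)
      _ = 4 * ε / s := by ring
  exact mul_le_mul hζj h3 (norm_nonneg _) ((norm_nonneg _).trans hζj)

theorem exists_radial_field (hn : 1 < n) {U V : Set E} (hU : IsOpen U)
    {K : Set (E × EuclideanSpace ℂ (Fin n))} {r ρ : ℝ} (hr : 0 < r) (hρ : 0 < ρ)
    (hK : IsCompact K)
    (happ : ∀ ε > 0, ∀ k : Fin n, ∃ a, ExpSum U a ∧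
      (∀ q ∈ V ×ˢ closedBall (0 : EuclideanSpace ℂ (Fin n)) (2 * r), ‖a q - q.2 k‖ ≤ ε) ∧
      ∀ q ∈ fibreThickening K (2 * ρ), ‖a q‖ ≤ ε) {ε : ℝ} (hε : 0 < ε) :
    ∃ Y : E × EuclideanSpace ℂ (Fin n) → EuclideanSpace ℂ (Fin n), Flowable U Y ∧
      (∀ z ∈ V, ∀ ζ, ‖ζ‖ ≤ r → ‖Y (z, ζ) + ζ‖ ≤ ε) ∧ ∀ q ∈ fibreThickening K ρ, ‖Y q‖ ≤ ε := by
  have : Nontrivial (Fin n) := Fin.nontrivial_iff_two_le.2 hn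
  choose κ hκ using fun j : Fin n => exists_ne j
  obtain ⟨B₀, hB₀⟩ := (isCompact_fibreThickening hK ρ).exists_bound_of_continuousOn
    (f := Prod.snd) continuous_snd.continuousOn
  set B := max r |B₀|
  have hB : 0 < B := lt_max_of_lt_left hr
  set s := min r ρ
  have hs : 0 < s := lt_min hr hρ
  set ε' := ε * s / (4 * (n * B + 1))
  have hε' : 0 < ε' := by positivity
  have hsum : (n : ℝ) * (B * (4 * ε' / s)) ≤ ε := by
    have : (n : ℝ) * (B * (4 * ε' / s)) = ε * (n * B / (n * B + 1)) := by
      simp only [ε']; field_simp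
    rw [this]
    refine mul_le_of_le_one_right hε.le ((div_le_one (by positivity)).2 (by linarith))
  choose a ha ha₁ ha₂ using happ ε' hε'
  refine ⟨fun q => ∑ j, shearField j (κ j) (a (κ j)) q,
    Flowable.sum hU _ fun j _ => (ha (κ j)).flowable_shearField hU j (κ j), fun z hz ζ hζ => ?_,
    fun q hq => ?_⟩
  · have hζsum : ζ = ∑ j, (1 : ℂ) • ζ j • EuclideanSpace.single j (1 : ℂ) := by
      ext i
      simp [Finset.sum_apply, Pi.single_apply]
    have : ∑ j, shearField j (κ j) (a (κ j)) (z, ζ) + ζ = ∑ j, (shearField j (κ j) (a (κ j)) (z, ζ) +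
        (1 : ℂ) • ζ j • EuclideanSpace.single j (1 : ℂ)) := by
      rw [Finset.sum_add_distrib, ← hζsum]
    simp only [this]
    refine (norm_sum_le_of_le _ fun j _ => norm_shearField_add_le (B := B) (ε := ε') hs (hκ j).symm
      (hζ.trans (le_max_left _ _)) ((ha (κ j)).differentiable_fibre z) 1 fun ξ hξ => ?_).trans ?_
    · rw [one_mul]
      refine ha₁ (κ j) (z, ξ) ⟨hz, ?_⟩
      rw [mem_closedBall_zero_iff]
      have h1 := norm_add_le (ξ - ζ) ζ
      rw [sub_add_cancel] at h1
      have h2 : ‖ξ - ζ‖ < s := by simpa [dist_eq_norm] using hξ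
      linarith [min_le_left r ρ]
    · simpa using hsum
  · obtain ⟨z, ζ⟩ := q
    have : ∑ j, shearField j (κ j) (a (κ j)) (z, ζ) = ∑ j, (shearField j (κ j) (a (κ j)) (z, ζ) +
        (0 : ℂ) • ζ j • EuclideanSpace.single j (1 : ℂ)) := by simp
    simp only [this]
    refine (norm_sum_le_of_le _ fun j _ => norm_shearField_add_le (B := B) (ε := ε') hs (hκ j).symm
      (((hB₀ _ hq).trans (le_abs_self _)).trans (le_max_right _ _))
      ((ha (κ j)).differentiable_fibre z) 0 fun ξ hξ => ?_).trans ?_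
    · rw [zero_mul, sub_zero]
      refine ha₂ (κ j) (z, ξ) (fibreThickening_mono ?_ (mem_fibreThickening_of_norm_sub_le hq
        (s := s) ?_))
      · linarith [min_le_right r ρ]
      · simpa [dist_eq_norm] using (mem_ball.1 hξ).le
    · simpa using hsum

end Field

section Euler

variable {E W : Type*} [NormedAddCommGroup E] [NormedSpace ℂ E] [NormedAddCommGroup W]
  [NormedSpace ℂ W]

theorem FibreAut.iterate {U : Set E} {Φ Ψ : E × W → W} (h : FibreAut U Φ Ψ) (m : ℕ) :
    FibreAut U (fun q => (fun ζ => Φ (q.1, ζ))^[m] q.2) (fun q => (fun ζ => Ψ (q.1, ζ))^[m] q.2) := by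
  induction m with
  | zero => exact ⟨differentiableOn_snd, differentiableOn_snd, fun _ _ _ => rfl, fun _ _ _ => rfl⟩
  | succ m ih =>
    have := h.comp ih
    simp only [Function.iterate_succ_apply' (fun ζ => Φ (_, ζ)),
      Function.iterate_succ_apply (fun ζ => Ψ (_, ζ))]
    exact this

theorem norm_sub_sub_smul_le_of_bound {g : ℂ → W} {y : W} {M : ℝ}
    (hg : DifferentiableOn ℂ g (ball 0 1)) (hM : ∀ t ∈ ball (0 : ℂ) 1, ‖g t‖ ≤ M)
    (hy : HasDerivAt g y 0) {t : ℂ} (ht : ‖t‖ < 1) :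
    ‖g t - g 0 - t • y‖ ≤ 4 * M * ‖t‖ ^ 2 := by
  have hyM : ‖y‖ ≤ 2 * M := by
    have h1 := norm_fderiv_le_of_bound one_pos hg hM
    rw [div_one, hy.hasFDerivAt.fderiv] at h1
    have h2 := ContinuousLinearMap.le_opNorm (ContinuousLinearMap.toSpanSingleton ℂ y) 1
    rw [ContinuousLinearMap.toSpanSingleton_apply, one_smul, norm_one, mul_one] at h2
    exact h2.trans h1
  set h : ℂ → W := fun t => g t - g 0 - t • y with hh
  have hh0 : h 0 = 0 := by simp [hh]
  have hhd : DifferentiableOn ℂ h (ball 0 1) :=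
    (hg.sub_const _).sub (differentiableOn_id.smul_const y)
  have := Complex.dist_le_mul_div_pow_of_mapsTo_ball_of_isLittleO (n := 1) (R₂ := 4 * M) hhd
    (fun s hs => by
      rw [hh0, mem_closedBall_zero_iff, hh]
      have h1 := norm_sub_le (g s - g 0) (s • y)
      have h2 := norm_sub_le (g s) (g 0)
      have hs1 : ‖s‖ ≤ 1 := (mem_ball_zero_iff.1 hs).le
      have h3 : ‖s • y‖ ≤ 2 * M := by
        rw [norm_smul]
        exact (mul_le_of_le_one_left (norm_nonneg y) hs1).trans hyM
      linarith [hM s hs, hM 0 (mem_ball_self one_pos)])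
    (by
      have h1 := hasDerivAt_iff_isLittleO.1 hy
      simp only [sub_zero] at h1
      simp only [hh0, sub_zero, pow_one]
      exact h1.norm_right) (mem_ball_zero_iff.2 ht)
  rw [hh0, dist_zero_right, dist_zero_right, div_one] at this
  exact this

theorem exists_quadratic_bound {U : Set E} {Y : E × W → W} {Φ : ℂ → E × W → W}
    (hd : DifferentiableOn ℂ (fun q : ℂ × E × W => Φ q.1 q.2) (univ ×ˢ (U ×ˢ univ)))
    (h0 : ∀ z ∈ U, ∀ ζ, Φ 0 (z, ζ) = ζ)
    (hY : ∀ z ∈ U, ∀ ζ, HasDerivAt (fun t => Φ t (z, ζ)) (Y (z, ζ)) 0)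
    {Q : Set (E × W)} (hQ : IsCompact Q) (hQU : ∀ q ∈ Q, q.1 ∈ U) :
    ∃ C, 0 ≤ C ∧ ∀ q ∈ Q, ∀ t : ℂ, ‖t‖ < 1 → ‖Φ t q - q.2 - t • Y q‖ ≤ C * ‖t‖ ^ 2 := by
  obtain ⟨M, hM⟩ := ((isCompact_closedBall (0 : ℂ) 1).prod hQ).exists_bound_of_continuousOn
    (f := fun q : ℂ × E × W => Φ q.1 q.2)
    (hd.continuousOn.mono fun q hq => ⟨mem_univ _, hQU _ hq.2, mem_univ _⟩)
  refine ⟨4 * |M|, by positivity, fun q hq t ht => ?_⟩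
  have := norm_sub_sub_smul_le_of_bound (g := fun t => Φ t q) (M := |M|)
    (hd.comp (f := fun t : ℂ => (t, q)) (by fun_prop) fun t _ => ⟨mem_univ _, hQU q hq, mem_univ _⟩)
    (fun t ht => (hM (t, q) ⟨ball_subset_closedBall ht, hq⟩).trans (le_abs_self M))
    (hY q.1 (hQU q hq) q.2) ht
  have h1 : Φ 0 q = q.2 := h0 q.1 (hQU q hq) q.2
  rw [h1] at this
  exact this

theorem norm_iterate_sub_le {W : Type*} [NormedAddCommGroup W] {g : W → W} {x : W}
    {η : ℝ} (hη : 0 ≤ η) {m : ℕ} (h : ∀ ξ, ‖ξ - x‖ ≤ m * η → ‖g ξ - ξ‖ ≤ η) :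
    ∀ i ≤ m, ‖g^[i] x - x‖ ≤ i * η := by
  intro i
  induction i with
  | zero => simp
  | succ i ih =>
    intro hi
    have h1 := ih (by omega)
    have h2 : (i : ℝ) * η ≤ m * η := by
      have : (i : ℝ) ≤ m := by exact_mod_cast (by omega)
      gcongr
    have h3 := h _ (h1.trans h2)
    rw [Function.iterate_succ_apply']
    have := norm_add_le (g (g^[i] x) - g^[i] x) (g^[i] x - x)
    rw [sub_add_sub_cancel] at this
    push_cast
    linarith

theorem norm_iterate_sub_pow_smul_le {g : W → W} {x : W} {t η r : ℝ} (ht : 0 ≤ t) (hη : 0 ≤ η)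
    {m : ℕ} (hr : (1 + t) ^ m * (‖x‖ + m * η) ≤ r)
    (h : ∀ ξ, ‖ξ‖ ≤ r → ‖g ξ - ((1 + t : ℝ) : ℂ) • ξ‖ ≤ η) :
    ∀ i ≤ m, ‖g^[i] x - (((1 + t) ^ i : ℝ) : ℂ) • x‖ ≤ (1 + t) ^ i * (i * η) := by
  intro i
  have hnorm : ∀ i : ℕ, ‖(((1 + t) ^ i : ℝ) : ℂ)‖ = (1 + t) ^ i := fun i => by
    rw [Complex.norm_real, Real.norm_of_nonneg (by positivity)]
  induction i with
  | zero => simp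
  | succ i ih =>
    intro hi
    have h1 := ih (by omega)
    set y := g^[i] x
    have hy : ‖y‖ ≤ r := by
      have h2 := norm_add_le (y - (((1 + t) ^ i : ℝ) : ℂ) • x) ((((1 + t) ^ i : ℝ) : ℂ) • x)
      rw [sub_add_cancel, norm_smul, hnorm] at h2
      have h3 : (1 + t) ^ i ≤ (1 + t) ^ m := pow_le_pow_right₀ (by linarith) (by omega)
      have h4 : (i : ℝ) ≤ m := by exact_mod_cast (by omega)
      calc ‖y‖ ≤ (1 + t) ^ i * (‖x‖ + i * η) := by rw [mul_add]; linarith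
        _ ≤ (1 + t) ^ m * (‖x‖ + m * η) := by gcongr
        _ ≤ r := hr
    have h5 := h y hy
    rw [Function.iterate_succ_apply']
    have h6 : g y - (((1 + t) ^ (i + 1) : ℝ) : ℂ) • x = (g y - ((1 + t : ℝ) : ℂ) • y) +
        ((1 + t : ℝ) : ℂ) • (y - (((1 + t) ^ i : ℝ) : ℂ) • x) := by
      rw [smul_sub, smul_smul, ← Complex.ofReal_mul, ← pow_succ']
      abel
    rw [h6]
    refine (norm_add_le _ _).trans ?_
    rw [norm_smul, Complex.norm_real, Real.norm_of_nonneg (by positivity)]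
    have h7 : 1 ≤ (1 + t) ^ (i + 1) := one_le_pow₀ (by linarith)
    calc _ ≤ η + (1 + t) * ((1 + t) ^ i * (i * η)) := by gcongr
      _ ≤ (1 + t) ^ (i + 1) * η + (1 + t) * ((1 + t) ^ i * (i * η)) := by
          gcongr; exact le_mul_of_one_le_left hη h7
      _ = (1 + t) ^ (i + 1) * (((i + 1 : ℕ) : ℝ) * η) := by push_cast; ring

theorem exists_expanding_aut [ProperSpace W] {U V : Set E} (hV : IsCompact V) (hVU : V ⊆ U)
    {K : Set (E × W)} (hK : IsCompact K) (hKU : ∀ q ∈ K, q.1 ∈ U) {r ρ : ℝ} (hr : 0 < r)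
    (hρ : 0 < ρ)
    (hY : ∀ ε > 0, ∃ Y : E × W → W, Flowable U Y ∧
      (∀ z ∈ V, ∀ ζ, ‖ζ‖ ≤ r → ‖Y (z, ζ) + ζ‖ ≤ ε) ∧ ∀ q ∈ fibreThickening K ρ, ‖Y q‖ ≤ ε)
    {δ : ℝ} (hδ : 0 < δ) :
    ∃ Φ Ψ : E × W → W, FibreAut U Φ Ψ ∧
      (∀ z ∈ V, ∀ ζ, ‖ζ‖ ≤ r / (2 * Real.exp 1) → ‖Ψ (z, ζ) - ((Real.exp 1 : ℝ) : ℂ) • ζ‖ ≤ δ) ∧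
      ∀ q ∈ fibreThickening K (ρ / 2), ‖Φ q - q.2‖ ≤ δ := by
  set e := Real.exp 1 with he
  have he1 : 1 ≤ e := Real.one_le_exp zero_le_one
  have he0 : 0 < e := by linarith
  set d := min δ (min r ρ) with hd
  have hd0 : 0 < d := lt_min hδ (lt_min hr hρ)
  have hdδ : d ≤ δ := min_le_left _ _
  have hdr : d ≤ r := (min_le_right _ _).trans (min_le_left _ _)
  have hdρ : d ≤ ρ := (min_le_right _ _).trans (min_le_right _ _)
  set ε := d / (4 * e) with hε
  have hε0 : 0 < ε := by positivity
  have hεd : e * (2 * ε) = d / 2 := by rw [hε]; field_simp; norm_num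
  have h2ε : 2 * ε ≤ d / 2 := by rw [← hεd]; exact le_mul_of_one_le_left (by positivity) he1
  obtain ⟨Y, ⟨Φ, Ψ, hΦΨ⟩, hY₁, hY₂⟩ := hY ε hε0
  obtain ⟨C₁, hC₁, hb₁⟩ := exists_quadratic_bound hΦΨ.diff hΦΨ.zero hΦΨ.deriv
    (isCompact_fibreThickening hK ρ) (fun q ⟨ζ, hζ, _⟩ => hKU (q.1, ζ) hζ)
  obtain ⟨C₂, hC₂, hb₂⟩ := exists_quadratic_bound (Y := fun q => -Y q) hΦΨ.diff_inv hΦΨ.zero_inv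
    hΦΨ.deriv_inv (hV.prod (isCompact_closedBall (0 : W) r)) (fun q hq => hVU hq.1)
  have hlim₁ : Tendsto (fun m : ℕ => (C₁ + C₂) / (m : ℝ)) atTop (𝓝 0) :=
    tendsto_const_div_atTop_nhds_zero_nat _
  have hlim₂ : Tendsto (fun m : ℕ => |(1 + 1 / (m : ℝ)) ^ m - e| * r) atTop (𝓝 0) := by
    have := (((Real.tendsto_one_add_div_pow_exp 1).sub_const e).abs).mul_const r
    simpa [he] using this
  obtain ⟨m, hm₁, hm₂, hm3⟩ := ((hlim₁.eventually_lt_const hε0).and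
    ((hlim₂.eventually_lt_const (half_pos hδ)).and (eventually_gt_atTop 1))).exists
  have hm0 : (0 : ℝ) < m := by positivity
  set t : ℝ := 1 / m with ht
  have ht0 : 0 < t := by positivity
  have ht1 : t < 1 := by rw [ht, div_lt_one hm0]; exact_mod_cast hm3
  have hmt : m * t = 1 := by rw [ht]; field_simp
  have htn : ‖(t : ℂ)‖ = t := by rw [Complex.norm_real, Real.norm_of_nonneg ht0.le]
  have hCt : (C₁ + C₂) * t ≤ ε := by rw [ht, mul_one_div]; exact hm₁.le
  set η := t * (2 * ε) with hη
  have hη0 : 0 ≤ η := by positivity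
  have hmη : m * η = 2 * ε := by rw [hη, ← mul_assoc, hmt, one_mul]
  have hpow : (1 + t) ^ m ≤ e := by
    calc (1 + t) ^ m ≤ (Real.exp t) ^ m := by
          gcongr
          linarith [Real.add_one_le_exp t]
      _ = e := by rw [← Real.exp_nat_mul, hmt]
  refine ⟨_, _, (hΦΨ.aut t).iterate m, fun z hz ζ hζ => ?_, fun q hq => ?_⟩
  · have hx : (1 + t) ^ m * (‖ζ‖ + m * η) ≤ r := by
      rw [hmη]
      calc _ ≤ e * (r / (2 * e) + 2 * ε) := by gcongr
        _ = r / 2 + d / 2 := by rw [mul_add, hεd]; field_simp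
        _ ≤ r := by linarith
    have h1 := norm_iterate_sub_pow_smul_le (g := fun ζ => Ψ t (z, ζ)) ht0.le hη0 hx (fun ξ hξ => by
      have h2 := hb₂ (z, ξ) ⟨hz, by simpa using hξ⟩ t (by rwa [htn])
      have h3 := hY₁ z hz ξ hξ
      have h4 : Ψ t (z, ξ) - ((1 + t : ℝ) : ℂ) • ξ =
          (Ψ t (z, ξ) - ξ - (t : ℂ) • -Y (z, ξ)) - (t : ℂ) • (Y (z, ξ) + ξ) := by
        push_cast; module
      rw [h4]
      refine (norm_sub_le _ _).trans ?_
      rw [norm_smul, htn]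
      rw [htn] at h2
      simp only at h2
      calc _ ≤ C₂ * t ^ 2 + t * ε := by gcongr
        _ ≤ η := by rw [hη]; nlinarith) m le_rfl
    rw [hmη] at h1
    have h5 : ‖((((1 + t) ^ m : ℝ) : ℂ) - (e : ℂ)) • ζ‖ ≤ δ / 2 := by
      rw [norm_smul, ← Complex.ofReal_sub, Complex.norm_real, Real.norm_eq_abs]
      have h6 : ‖ζ‖ ≤ r := hζ.trans (div_le_self hr.le (by linarith))
      exact (mul_le_mul_of_nonneg_left h6 (abs_nonneg _)).trans hm₂.le
    calc _ = ‖((fun ζ => Ψ t (z, ζ))^[m] ζ - (((1 + t) ^ m : ℝ) : ℂ) • ζ) +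
          ((((1 + t) ^ m : ℝ) : ℂ) - (e : ℂ)) • ζ‖ := by
            rw [sub_smul, sub_add_sub_cancel]
      _ ≤ (1 + t) ^ m * (2 * ε) + δ / 2 := (norm_add_le _ _).trans (add_le_add h1 h5)
      _ ≤ e * (2 * ε) + δ / 2 := by gcongr
      _ ≤ δ := by rw [hεd]; linarith
  · obtain ⟨z, ζ⟩ := q
    have h1 := norm_iterate_sub_le (g := fun ζ => Φ t (z, ζ)) (x := ζ) hη0 (m := m) (fun ξ hξ => by
      rw [hmη] at hξ
      have hmem : (z, ξ) ∈ fibreThickening K ρ :=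
        fibreThickening_mono (by linarith) (mem_fibreThickening_of_norm_sub_le hq hξ)
      have h2 := hb₁ (z, ξ) hmem t (by rwa [htn])
      have h3 := hY₂ _ hmem
      have h4 : Φ t (z, ξ) - ξ = (Φ t (z, ξ) - ξ - (t : ℂ) • Y (z, ξ)) + (t : ℂ) • Y (z, ξ) := by
        abel
      rw [h4]
      refine (norm_add_le _ _).trans ?_
      rw [norm_smul, htn]
      rw [htn] at h2
      calc _ ≤ C₁ * t ^ 2 + t * ε := by gcongr
        _ ≤ η := by rw [hη]; nlinarith) m le_rfl
    rw [hmη] at h1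
    exact h1.trans (by linarith)

theorem FibreAut.recentre {U : Set E} {Φ Ψ : E × W → W} (h : FibreAut U Φ Ψ) :
    FibreAut U (fun q => Φ (q.1, q.2 + Ψ (q.1, 0))) (fun q => Ψ q - Ψ (q.1, 0)) := by
  have h0 : DifferentiableOn ℂ (fun q : E × W => Ψ (q.1, 0)) (U ×ˢ univ) :=
    h.diff_inv.comp (f := fun q : E × W => (q.1, 0)) (by fun_prop) fun q hq => ⟨hq.1, mem_univ _⟩
  exact ⟨h.diff.fibre_comp (differentiableOn_snd.add h0), h.diff_inv.sub h0,
    fun z hz ζ => by simp only [h.left_inv z hz, add_sub_cancel_right],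
    fun z hz ζ => by simp only [sub_add_cancel, h.right_inv z hz]⟩

theorem exists_expanding_aut_fixing_zero [ProperSpace W] {U V : Set E} (hV : IsCompact V)
    (hVU : V ⊆ U) {K : Set (E × W)} (hK : IsCompact K) (hKV : ∀ q ∈ K, q.1 ∈ V) {r ρ : ℝ}
    (hr : 0 < r) (hρ : 0 < ρ)
    (hY : ∀ ε > 0, ∃ Y : E × W → W, Flowable U Y ∧
      (∀ z ∈ V, ∀ ζ, ‖ζ‖ ≤ r → ‖Y (z, ζ) + ζ‖ ≤ ε) ∧ ∀ q ∈ fibreThickening K ρ, ‖Y q‖ ≤ ε)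
    {δ : ℝ} (hδ : 0 < δ) :
    ∃ Φ Ψ : E × W → W, FibreAut U Φ Ψ ∧ (∀ z, Ψ (z, 0) = 0) ∧
      (∀ z ∈ V, ∀ ζ, ‖ζ‖ ≤ r / (2 * Real.exp 1) → ‖Ψ (z, ζ) - ((Real.exp 1 : ℝ) : ℂ) • ζ‖ ≤ δ) ∧
      ∀ q ∈ fibreThickening K (ρ / 4), ‖Φ q - q.2‖ ≤ δ := by
  have hd : 0 < min (δ / 2) (ρ / 4) := by positivity
  obtain ⟨Φ, Ψ, hA, hΨ, hΦ⟩ := exists_expanding_aut hV hVU hK (fun q hq => hVU (hKV q hq)) hr hρ hY hd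
  have hdδ := min_le_left (δ / 2) (ρ / 4)
  have hdρ := min_le_right (δ / 2) (ρ / 4)
  have h0 : ∀ z ∈ V, ‖Ψ (z, 0)‖ ≤ min (δ / 2) (ρ / 4) := fun z hz => by
    have := hΨ z hz 0 (by rw [norm_zero]; positivity)
    rwa [smul_zero, sub_zero] at this
  refine ⟨_, _, hA.recentre, fun z => sub_self _, fun z hz ζ hζ => ?_, fun q hq => ?_⟩
  · have h1 := norm_sub_le (Ψ (z, ζ) - ((Real.exp 1 : ℝ) : ℂ) • ζ) (Ψ (z, 0))
    rw [sub_right_comm] at h1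
    linarith [hΨ z hz ζ hζ, h0 z hz]
  · obtain ⟨z, ζ⟩ := q
    have hz : z ∈ V := by obtain ⟨ξ, hξ, _⟩ := hq; exact hKV _ hξ
    have hmem : (z, ζ + Ψ (z, 0)) ∈ fibreThickening K (ρ / 2) :=
      fibreThickening_mono (by linarith) (mem_fibreThickening_of_norm_sub_le hq
        (s := ρ / 4) (by rw [add_sub_cancel_left]; exact (h0 z hz).trans hdρ))
    have h1 := hΦ _ hmem
    have h2 := norm_add_le (Φ (z, ζ + Ψ (z, 0)) - (ζ + Ψ (z, 0))) (Ψ (z, 0))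
    have h3 : Φ (z, ζ + Ψ (z, 0)) - (ζ + Ψ (z, 0)) + Ψ (z, 0) = Φ (z, ζ + Ψ (z, 0)) - ζ := by abel
    rw [h3] at h2
    simp only at h1 ⊢
    linarith [h0 z hz]

end Euler

section Basin

/-- The fibrewise composition `ψ k ∘ ψ (k + 1) ∘ ⋯ ∘ ψ (k + j - 1)`. -/
def fibreComps {E W : Type*} (ψ : ℕ → E × W → W) : ℕ → ℕ → E × W → W
  | _, 0, q => q.2
  | k, j + 1, q => ψ k (q.1, fibreComps ψ (k + 1) j q)

theorem fibreComps_add {E W : Type*} (ψ : ℕ → E × W → W) (k i j : ℕ) (q : E × W) :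
    fibreComps ψ k (i + j) q = fibreComps ψ k i (q.1, fibreComps ψ (k + i) j q) := by
  induction i generalizing k with
  | zero => rw [Nat.zero_add]; rfl
  | succ i ih =>
    rw [Nat.succ_add]
    simp only [fibreComps]
    rw [ih, Nat.add_assoc, Nat.add_comm 1 i]

theorem fibreComps_succ {E W : Type*} (ψ : ℕ → E × W → W) (k j : ℕ) (q : E × W) :
    fibreComps ψ k (j + 1) q = fibreComps ψ k j (q.1, ψ (k + j) q) :=
  fibreComps_add ψ k j 1 q

theorem norm_fibreComps_sub_le {E W : Type*} [NormedAddCommGroup W] {O : Set E}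
    {ψ : ℕ → E × W → W} {R : ℕ → ℝ} (hR : Monotone R)
    (hψ : ∀ k, ∀ z ∈ O, ∀ ζ, ‖ζ‖ ≤ R k → ‖ψ k (z, ζ) - ζ‖ ≤ (1 / 2) ^ (k + 2) * ‖ζ‖)
    (k j : ℕ) {z : E} (hz : z ∈ O) {ζ : W} (hζ : 2 * ‖ζ‖ ≤ R k) :
    ‖fibreComps ψ k j (z, ζ) - ζ‖ ≤ (1 / 2) ^ k * ‖ζ‖ := by
  induction j generalizing k with
  | zero => simp only [fibreComps, sub_self, norm_zero]; positivity
  | succ j ih =>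
    have h1 := ih (k + 1) (hζ.trans (hR (Nat.le_succ k)))
    set ξ := fibreComps ψ (k + 1) j (z, ζ) with hξ
    have hp : (1 / 2 : ℝ) ^ (k + 1) ≤ 1 := pow_le_one₀ (by norm_num) (by norm_num)
    have h2 : ‖ξ‖ ≤ 2 * ‖ζ‖ := by
      have := norm_add_le (ξ - ζ) ζ
      rw [sub_add_cancel] at this
      nlinarith [norm_nonneg ζ]
    have h3 := hψ k z hz ξ (h2.trans hζ)
    have h4 : fibreComps ψ k (j + 1) (z, ζ) - ζ = (ψ k (z, ξ) - ξ) + (ξ - ζ) := by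
      rw [sub_add_sub_cancel]; rfl
    rw [h4]
    refine (norm_add_le _ _).trans ?_
    calc _ ≤ (1 / 2) ^ (k + 2) * (2 * ‖ζ‖) + (1 / 2) ^ (k + 1) * ‖ζ‖ := by
          gcongr
          exact h3.trans (by gcongr)
      _ = (1 / 2) ^ k * ‖ζ‖ := by ring

variable {E W : Type*} [NormedAddCommGroup E] [NormedSpace ℂ E] [NormedAddCommGroup W]
  [NormedSpace ℂ W]

theorem differentiableOn_fibreComps {O : Set E} {ψ : ℕ → E × W → W}
    (hψ : ∀ k, DifferentiableOn ℂ (ψ k) (O ×ˢ univ)) (k j : ℕ) :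
    DifferentiableOn ℂ (fibreComps ψ k j) (O ×ˢ univ) := by
  induction j generalizing k with
  | zero => exact differentiableOn_snd
  | succ j ih => exact (hψ k).fibre_comp (ih (k + 1))

/-- The compositions `ψ k ∘ ⋯ ∘ ψ (k + j - 1)` converge locally uniformly on a ball. -/
theorem exists_limit_fibreComps_on_ball [CompleteSpace W] {O : Set E} (hO : IsOpen O)
    {ψ : ℕ → E × W → W} {R : ℕ → ℝ} (hR : Monotone R)
    (hdiff : ∀ k, DifferentiableOn ℂ (ψ k) (O ×ˢ univ))
    (hψ : ∀ k, ∀ z ∈ O, ∀ ζ, ‖ζ‖ ≤ R k → ‖ψ k (z, ζ) - ζ‖ ≤ (1 / 2) ^ (k + 2) * ‖ζ‖)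
    {k : ℕ} (hk : 0 < R k) :
    ∃ t : E × W → W, DifferentiableOn ℂ t (O ×ˢ ball 0 (R k / 8)) ∧
      ∀ q ∈ O ×ˢ ball (0 : W) (R k / 8),
        Tendsto (fun j => fibreComps ψ k j q) atTop (𝓝 (t q)) := by
  have hstep : ∀ q ∈ O ×ˢ ball (0 : W) (R k / 8), ∀ j,
      dist (fibreComps ψ k j q) (fibreComps ψ k (j + 1) q) ≤ R k / 2 / 2 ^ j := by
    rintro ⟨z, ζ⟩ ⟨hz, hζ⟩ j
    have hζ' : ‖ζ‖ < R k / 8 := by simpa using hζ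
    have h1 := hψ (k + j) z hz ζ (by linarith [hR (Nat.le_add_right k j)])
    have hp : (1 / 2 : ℝ) ^ (k + j + 2) ≤ 1 := pow_le_one₀ (by norm_num) (by norm_num)
    have h2 : ‖ψ (k + j) (z, ζ)‖ < R k / 4 := by
      have := norm_add_le (ψ (k + j) (z, ζ) - ζ) ζ
      rw [sub_add_cancel] at this
      nlinarith [norm_nonneg ζ]
    have hd : DifferentiableOn ℂ (fun ξ => fibreComps ψ k j (z, ξ)) (ball 0 (2 * (R k / 4))) :=
      (differentiableOn_fibreComps hdiff k j).comp (f := fun ξ : W => (z, ξ)) (by fun_prop)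
        fun ξ _ => ⟨hz, mem_univ _⟩
    have h3 := norm_sub_le_of_bound (y := ζ) (y' := ψ (k + j) (z, ζ)) (M := R k) (r := R k / 4)
      (by positivity) hd (fun ξ hξ => by
        have hξ' : ‖ξ‖ < 2 * (R k / 4) := by simpa using hξ
        have h4 := norm_fibreComps_sub_le hR hψ k j hz (ζ := ξ) (by linarith)
        have h5 := norm_add_le (fibreComps ψ k j (z, ξ) - ξ) ξ
        rw [sub_add_cancel] at h5
        have hp : (1 / 2 : ℝ) ^ k ≤ 1 := pow_le_one₀ (by norm_num) (by norm_num)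
        nlinarith [norm_nonneg ξ]) (by simpa using hζ'.trans (by linarith)) (by simpa using h2)
    rw [fibreComps_succ, dist_eq_norm]
    refine h3.trans ?_
    rw [norm_sub_rev]
    calc 2 * R k / (R k / 4) * ‖ψ (k + j) (z, ζ) - ζ‖ ≤ 8 * ((1 / 2) ^ (j + 2) * (R k / 8)) := by
          have : 2 * R k / (R k / 4) = 8 := by field_simp; norm_num
          rw [this]
          have hk2 : (1 / 2 : ℝ) ^ (k + j + 2) ≤ (1 / 2) ^ (j + 2) :=
            pow_le_pow_of_le_one (by norm_num) (by norm_num) (by omega)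
          refine mul_le_mul_of_nonneg_left (h1.trans ?_) (by norm_num)
          gcongr
      _ = (1 / 2) ^ j * (R k / 4) := by ring
      _ ≤ (1 / 2) ^ j * (R k / 2) := by gcongr; linarith
      _ = R k / 2 / 2 ^ j := by rw [one_div, inv_pow]; field_simp
  have hlim : ∀ q ∈ O ×ˢ ball (0 : W) (R k / 8), ∃ l,
      Tendsto (fun j => fibreComps ψ k j q) atTop (𝓝 l) := fun q hq =>
    cauchySeq_tendsto_of_complete (cauchySeq_of_le_geometric_two (C := R k) (hstep q hq))
  choose! t ht using hlim
  refine ⟨t, differentiableOn_of_tendstoUniformlyOn (f := fun j => fibreComps ψ k j)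
    (hO.prod isOpen_ball) (Eventually.of_forall fun j =>
      (differentiableOn_fibreComps hdiff k j).mono fun q hq => ⟨hq.1, mem_univ _⟩) ?_, ht⟩
  rw [Metric.tendstoUniformlyOn_iff]
  intro ε hε
  have hz : Tendsto (fun j : ℕ => R k / 2 ^ j) atTop (𝓝 0) := by
    have := (tendsto_pow_atTop_nhds_zero_of_lt_one (r := (1 / 2 : ℝ)) (by norm_num)
      (by norm_num)).const_mul (R k)
    rw [mul_zero] at this
    refine this.congr fun j => ?_
    rw [one_div, inv_pow, div_eq_mul_inv]
  filter_upwards [hz.eventually (gt_mem_nhds hε)] with j hj q hq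
  rw [dist_comm]
  exact (dist_le_of_le_geometric_two_of_tendsto (C := R k) (hstep q hq) (ht q hq) j).trans_lt hj

theorem exists_limit_fibreComps [CompleteSpace W] {O : Set E} (hO : IsOpen O)
    {ψ : ℕ → E × W → W} {R : ℕ → ℝ} (hR : Monotone R) (hR0 : ∀ k, 0 < R k)
    (hRtop : Tendsto R atTop atTop)
    (hdiff : ∀ k, DifferentiableOn ℂ (ψ k) (O ×ˢ univ))
    (hψ : ∀ k, ∀ z ∈ O, ∀ ζ, ‖ζ‖ ≤ R k → ‖ψ k (z, ζ) - ζ‖ ≤ (1 / 2) ^ (k + 2) * ‖ζ‖) :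
    ∃ F : E × W → W, DifferentiableOn ℂ F (O ×ˢ univ) ∧
      ∀ z ∈ O, ∀ ζ, ∀ᶠ k in atTop, ∃ ξ, ‖ξ - ζ‖ ≤ (1 / 2) ^ k * ‖ζ‖ ∧
        F (z, ζ) = fibreComps ψ 0 k (z, ξ) := by
  choose t htd ht using fun k => exists_limit_fibreComps_on_ball hO hR hdiff hψ (hR0 k)
  have hcomp : ∀ k, ∀ q ∈ O ×ˢ ball (0 : W) (R k / 8),
      Tendsto (fun j => fibreComps ψ 0 j q) atTop (𝓝 (fibreComps ψ 0 k (q.1, t k q))) := by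
    intro k q hq
    have hc : ContinuousAt (fun ξ => fibreComps ψ 0 k (q.1, ξ)) (t k q) := by
      have h1 := ((differentiableOn_fibreComps hdiff 0 k).differentiableAt
        ((hO.prod isOpen_univ).mem_nhds (x := (q.1, t k q)) ⟨hq.1, mem_univ _⟩)).continuousAt
      exact ContinuousAt.comp (f := fun ξ : W => (q.1, ξ)) h1 (by fun_prop)
    rw [← tendsto_add_atTop_iff_nat k]
    refine (hc.tendsto.comp (ht k q hq)).congr fun j => ?_
    rw [Nat.add_comm j k, fibreComps_add, Nat.zero_add]
    rfl
  have hev : ∀ ζ : W, ∀ᶠ k in atTop, ζ ∈ ball (0 : W) (R k / 8) := fun ζ => by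
    filter_upwards [hRtop.eventually_gt_atTop (8 * ‖ζ‖)] with k hk
    rw [mem_ball_zero_iff]
    linarith
  have hlim : ∀ q ∈ O ×ˢ (univ : Set W), ∃ l, Tendsto (fun j => fibreComps ψ 0 j q) atTop (𝓝 l) :=
    fun q hq => by
      obtain ⟨k, hk⟩ := (hev q.2).exists
      exact ⟨_, hcomp k q ⟨hq.1, hk⟩⟩
  choose! F hF using hlim
  have hFeq : ∀ k, ∀ q ∈ O ×ˢ ball (0 : W) (R k / 8), F q = fibreComps ψ 0 k (q.1, t k q) :=
    fun k q hq => tendsto_nhds_unique (hF q ⟨hq.1, mem_univ _⟩) (hcomp k q hq)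
  refine ⟨F, fun q hq => ?_, fun z hz ζ => ?_⟩
  · obtain ⟨k, hk⟩ := (hev q.2).exists
    have hmem : O ×ˢ ball (0 : W) (R k / 8) ∈ 𝓝 q := (hO.prod isOpen_ball).mem_nhds ⟨hq.1, hk⟩
    have hd : DifferentiableOn ℂ (fun q => fibreComps ψ 0 k (q.1, t k q))
        (O ×ˢ ball (0 : W) (R k / 8)) :=
      (differentiableOn_fibreComps hdiff 0 k).comp (differentiableOn_fst.prodMk (htd k))
        fun q hq => ⟨hq.1, mem_univ _⟩
    exact ((hd.congr (hFeq k)).differentiableAt hmem).differentiableWithinAt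
  · filter_upwards [hev ζ] with k hk
    have hk' : ‖ζ‖ < R k / 8 := mem_ball_zero_iff.1 hk
    refine ⟨t k (z, ζ), ?_, hFeq k (z, ζ) ⟨hz, hk⟩⟩
    refine le_of_tendsto (((ht k (z, ζ) ⟨hz, hk⟩).sub_const ζ).norm) (Eventually.of_forall fun j => ?_)
    exact norm_fibreComps_sub_le hR hψ k j hz (by linarith [norm_nonneg ζ])

/-- Orbits of the fibre under a sequence of maps. -/
def fibreOrbit {E W : Type*} (Φ : ℕ → E × W → W) (z : E) (x : W) : ℕ → W
  | 0 => x
  | k + 1 => Φ k (z, fibreOrbit Φ z x k)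

theorem fibreOrbit_fibreComps {U : Set E} {Φ Ψ : ℕ → E × W → W}
    (h : ∀ k, FibreAut U (Φ k) (Ψ k)) {c : ℂ} (hc : c ≠ 0) {z : E} (hz : z ∈ U) (k : ℕ) (ξ : W) :
    fibreOrbit Φ z (fibreComps (fun k q => c ^ k • Ψ k (q.1, (c ^ (k + 1))⁻¹ • q.2)) 0 k (z, ξ)) k =
      (c ^ k)⁻¹ • ξ := by
  induction k generalizing ξ with
  | zero => simp [fibreOrbit, fibreComps]
  | succ k ih =>
    rw [fibreComps_succ, fibreOrbit, ih]
    simp only [Nat.zero_add]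
    rw [inv_smul_smul₀ (pow_ne_zero k hc), (h k).right_inv z hz]

theorem fibreOrbit_mem_fibreThickening {E W : Type*} [NormedAddCommGroup W]
    {K : Set (E × W)} {ρ : ℝ} (hρ : 0 ≤ ρ) {Φ : ℕ → E × W → W}
    (hΦ : ∀ k, ∀ q ∈ fibreThickening K ρ, ‖Φ k q - q.2‖ ≤ ρ * (1 / 2) ^ (k + 1)) {z : E} {x : W}
    (hx : (z, x) ∈ K) (k : ℕ) : (z, fibreOrbit Φ z x k) ∈ fibreThickening K ρ := by
  suffices h : ‖fibreOrbit Φ z x k - x‖ ≤ ρ * (1 - (1 / 2) ^ k) by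
    refine ⟨x, hx, h.trans ?_⟩
    have : (0 : ℝ) ≤ (1 / 2) ^ k := by positivity
    nlinarith
  induction k with
  | zero => simp [fibreOrbit]
  | succ k ih =>
    have hp : (0 : ℝ) ≤ (1 / 2) ^ k := by positivity
    have h1 := hΦ k (z, fibreOrbit Φ z x k) ⟨x, hx, ih.trans (by nlinarith)⟩
    have h2 := norm_add_le (Φ k (z, fibreOrbit Φ z x k) - fibreOrbit Φ z x k)
      (fibreOrbit Φ z x k - x)
    rw [sub_add_sub_cancel] at h2
    simp only at h1
    rw [pow_succ] at h1 ⊢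
    rw [fibreOrbit]
    linarith

theorem norm_sub_smul_le_mul_norm {O : Set E} {Ψ : E × W → W} {c : ℂ} {r δ : ℝ}
    (hd : DifferentiableOn ℂ Ψ (O ×ˢ univ)) {z : E} (hz : z ∈ O) (h0 : Ψ (z, 0) = 0)
    (hb : ∀ ζ, ‖ζ‖ ≤ r → ‖Ψ (z, ζ) - c • ζ‖ ≤ δ) {ζ : W} (hζ : ‖ζ‖ < r) :
    ‖Ψ (z, ζ) - c • ζ‖ ≤ δ / r * ‖ζ‖ := by
  have hd' : DifferentiableOn ℂ (fun ζ => Ψ (z, ζ) - c • ζ) (ball 0 r) :=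
    (hd.comp (f := fun ζ : W => (z, ζ)) (by fun_prop) fun ζ _ => ⟨hz, mem_univ _⟩).sub
      (by fun_prop)
  have h := Complex.dist_le_div_mul_dist_of_mapsTo_ball (R₂ := δ) (z := ζ) hd' (fun ξ hξ => by
    simp only [h0, smul_zero, sub_zero, mem_closedBall, dist_zero_right]
    exact hb ξ (mem_ball_zero_iff.1 hξ).le) (mem_ball_zero_iff.2 hζ)
  simpa only [h0, smul_zero, sub_zero, dist_zero_right] using h

/-- If fibred automorphisms expand a neighbourhood of the zero section at the rate `μ` while being
arbitrarily close to the identity on a thickening of `K`, then the zero section is contained in a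
family of Fatou–Bieberbach domains avoiding `K`. -/
theorem exists_fatouBieberbach [CompleteSpace W] {U O : Set E} (hO : IsOpen O) (hOU : O ⊆ U)
    {K : Set (E × W)} {r ρ μ : ℝ} (hr : 0 < r) (hρ : 0 < ρ) (hμ : 1 < μ)
    (hK : ∀ q ∈ fibreThickening K ρ, r ≤ ‖q.2‖)
    (h : ∀ δ > 0, ∃ Φ Ψ : E × W → W, FibreAut U Φ Ψ ∧ (∀ z, Ψ (z, 0) = 0) ∧
      (∀ z ∈ O, ∀ ζ, ‖ζ‖ ≤ r → ‖Ψ (z, ζ) - (μ : ℂ) • ζ‖ ≤ δ) ∧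
      ∀ q ∈ fibreThickening K ρ, ‖Φ q - q.2‖ ≤ δ) :
    ∃ F : E × W → W, DifferentiableOn ℂ F (O ×ˢ univ) ∧
      ∀ z ∈ O, F (z, 0) = 0 ∧ Function.Injective (fun ζ => F (z, ζ)) ∧ ∀ ζ, (z, F (z, ζ)) ∉ K := by
  have hμ0 : 0 < μ := by linarith
  choose Φ Ψ hA hΨ0 hΨ hΦ using fun k : ℕ =>
    h (min (r * (1 / 2) ^ (k + 2)) (ρ * (1 / 2) ^ (k + 1))) (by positivity)
  set c : ℂ := (μ : ℂ) with hc
  have hcn : ‖c‖ = μ := by rw [hc, Complex.norm_real, Real.norm_of_nonneg hμ0.le]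
  have hc0 : c ≠ 0 := by rw [← norm_ne_zero_iff, hcn]; exact hμ0.ne'
  set ψ : ℕ → E × W → W := fun k q => c ^ k • Ψ k (q.1, (c ^ (k + 1))⁻¹ • q.2) with hψ
  have hdiff : ∀ k, DifferentiableOn ℂ (ψ k) (O ×ˢ univ) := fun k => by
    refine DifferentiableOn.const_smul ?_ _
    exact (hA k).diff_inv.comp (f := fun q : E × W => (q.1, (c ^ (k + 1))⁻¹ • q.2)) (by fun_prop)
      fun q hq => ⟨hOU hq.1, mem_univ _⟩
  have hest : ∀ k, ∀ z ∈ O, ∀ ζ, ‖ζ‖ ≤ μ ^ k * r →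
      ‖ψ k (z, ζ) - ζ‖ ≤ (1 / 2) ^ (k + 2) * ‖ζ‖ := fun k z hz ζ hζ => by
    have hn : ‖(c ^ (k + 1))⁻¹ • ζ‖ = ‖ζ‖ / μ ^ (k + 1) := by
      rw [norm_smul, norm_inv, norm_pow, hcn, inv_mul_eq_div]
    have hlt : ‖(c ^ (k + 1))⁻¹ • ζ‖ < r := by
      rw [hn, div_lt_iff₀ (by positivity)]
      calc ‖ζ‖ ≤ μ ^ k * r := hζ
        _ < μ ^ (k + 1) * r := by gcongr; omega
        _ = r * μ ^ (k + 1) := mul_comm _ _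
    have h1 := norm_sub_smul_le_mul_norm (hA k).diff_inv (hOU hz) (hΨ0 k z)
      (fun ζ hζ => (hΨ k z hz ζ hζ).trans (min_le_left _ _)) hlt
    have h2 : ψ k (z, ζ) - ζ =
        c ^ k • (Ψ k (z, (c ^ (k + 1))⁻¹ • ζ) - c • (c ^ (k + 1))⁻¹ • ζ) := by
      rw [smul_sub, smul_smul (c ^ k) c, ← pow_succ, smul_inv_smul₀ (pow_ne_zero _ hc0)]
    rw [h2, norm_smul, norm_pow, hcn]
    refine (mul_le_mul_of_nonneg_left h1 (by positivity)).trans ?_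
    rw [hn, mul_div_cancel_left₀ _ hr.ne', pow_succ μ]
    have : μ ^ k * ((1 / 2) ^ (k + 2) * (‖ζ‖ / (μ ^ k * μ))) = (1 / 2) ^ (k + 2) * (‖ζ‖ / μ) := by
      field_simp
    rw [this]
    gcongr
    exact div_le_self (norm_nonneg _) hμ.le
  obtain ⟨F, hF, hlim⟩ := exists_limit_fibreComps hO (R := fun k => μ ^ k * r)
    (fun i j hij => by simp only; gcongr; exact hμ.le) (fun k => by positivity)
    ((tendsto_pow_atTop_atTop_of_one_lt hμ).atTop_mul_const hr) hdiff hest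
  have horb : ∀ z ∈ O, ∀ k ξ, fibreOrbit Φ z (fibreComps ψ 0 k (z, ξ)) k = (c ^ k)⁻¹ • ξ :=
    fun z hz k ξ => fibreOrbit_fibreComps hA hc0 (hOU hz) k ξ
  have hhalf : Tendsto (fun k : ℕ => (1 / 2 : ℝ) ^ k) atTop (𝓝 0) :=
    tendsto_pow_atTop_nhds_zero_of_lt_one (by norm_num) (by norm_num)
  refine ⟨F, hF, fun z hz => ⟨?_, fun ζ ζ' hζ => ?_, fun ζ hmem => ?_⟩⟩
  · have h0 : ∀ j k, fibreComps ψ k j (z, 0) = 0 := fun j => by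
      induction j with
      | zero => exact fun k => rfl
      | succ j ih => intro k; rw [fibreComps, ih]; simp only [hψ, smul_zero, hΨ0]
    obtain ⟨k, ξ, hξ, hk⟩ := (hlim z hz 0).exists
    rw [norm_zero, mul_zero, sub_zero, norm_le_zero_iff] at hξ
    rw [hk, hξ, h0]
  · have hle : ∀ᶠ k : ℕ in atTop, ‖ζ - ζ'‖ ≤ (1 / 2) ^ k * (‖ζ‖ + ‖ζ'‖) := by
      filter_upwards [hlim z hz ζ, hlim z hz ζ'] with k ⟨ξ, hξ, hk⟩ ⟨ξ', hξ', hk'⟩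
      have heq : ξ = ξ' := by
        have h1 := horb z hz k ξ
        rw [← hk, show F (z, ζ) = F (z, ζ') from hζ, hk', horb z hz k ξ'] at h1
        exact (smul_right_injective W (inv_ne_zero (pow_ne_zero k hc0)) h1).symm
      subst heq
      rw [norm_sub_rev] at hξ
      calc ‖ζ - ζ'‖ ≤ ‖ζ - ξ‖ + ‖ξ - ζ'‖ := norm_sub_le_norm_sub_add_norm_sub _ _ _
        _ ≤ (1 / 2) ^ k * (‖ζ‖ + ‖ζ'‖) := by linarith
    have h0 := ge_of_tendsto (hhalf.mul_const (‖ζ‖ + ‖ζ'‖)) hle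
    rw [zero_mul, norm_le_zero_iff] at h0
    exact sub_eq_zero.1 h0
  · have hle : ∀ᶠ k : ℕ in atTop, r ≤ (μ ^ k)⁻¹ * (2 * ‖ζ‖) := by
      filter_upwards [hlim z hz ζ] with k ⟨ξ, hξ, hk⟩
      have h1 := hK _ (fibreOrbit_mem_fibreThickening hρ.le
        (fun k q hq => (hΦ k q hq).trans (min_le_right _ _)) hmem k)
      simp only at h1
      rw [hk, horb z hz k ξ, norm_smul, norm_inv, norm_pow, hcn] at h1
      refine h1.trans ?_
      gcongr
      have h2 := norm_add_le (ξ - ζ) ζ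
      rw [sub_add_cancel] at h2
      have : (1 / 2 : ℝ) ^ k ≤ 1 := pow_le_one₀ (by norm_num) (by norm_num)
      nlinarith [norm_nonneg ζ]
    have h0 := ge_of_tendsto (((tendsto_pow_atTop_atTop_of_one_lt hμ).inv_tendsto_atTop).mul_const
      (2 * ‖ζ‖)) hle
    rw [zero_mul] at h0
    linarith

end Basin

section FatouBieberbach

variable {N n : ℕ}

/-- A polynomial in fibre coordinates centred at the graph of `f`. -/
def recentredEval (f : EuclideanSpace ℂ (Fin N) → EuclideanSpace ℂ (Fin n))
    (p : MvPolynomial (Fin N ⊕ Fin n) ℂ) (q : EuclideanSpace ℂ (Fin N) × EuclideanSpace ℂ (Fin n)) :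
    ℂ :=
  eval (prodCoord N n (q.1, q.2 + f q.1)) p

theorem expApprox_recentredEval {U : Set (EuclideanSpace ℂ (Fin N))}
    {Q : Set (EuclideanSpace ℂ (Fin N) × EuclideanSpace ℂ (Fin n))} (hQ : IsCompact Q)
    (hQU : ∀ q ∈ Q, q.1 ∈ U) {f : EuclideanSpace ℂ (Fin N) → EuclideanSpace ℂ (Fin n)}
    (hf : DifferentiableOn ℂ f U) (p : MvPolynomial (Fin N ⊕ Fin n) ℂ) :
    ExpApprox U Q (recentredEval f p) := by
  refine ExpApprox.eval (g := fun q => prodCoord N n (q.1, q.2 + f q.1)) (fun i => ?_) p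
  simp only [prodCoord_apply]
  rcases i with i | j
  · exact expApprox_of_base hQ hQU (c := fun z => z i)
      (EuclideanSpace.proj (𝕜 := ℂ) i).differentiable.differentiableOn
  · exact (expApprox_linear hQ (EuclideanSpace.proj (𝕜 := ℂ) j)).add
      (expApprox_of_base hQ hQU (c := fun z => f z j)
        ((EuclideanSpace.proj (𝕜 := ℂ) j).differentiable.comp_differentiableOn hf))

theorem continuousOn_recentredEval {U : Set (EuclideanSpace ℂ (Fin N))}
    {f : EuclideanSpace ℂ (Fin N) → EuclideanSpace ℂ (Fin n)} (hf : ContinuousOn f U)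
    (p : MvPolynomial (Fin N ⊕ Fin n) ℂ) : ContinuousOn (recentredEval f p) (U ×ˢ univ) := by
  have h1 : ContinuousOn (fun q : EuclideanSpace ℂ (Fin N) × EuclideanSpace ℂ (Fin n) =>
      prodCoord N n (q.1, q.2 + f q.1)) (U ×ˢ univ) :=
    (prodCoord N n).continuous.comp_continuousOn (continuousOn_fst.prodMk
      (continuousOn_snd.add (hf.comp continuousOn_fst fun q hq => hq.1)))
  exact (continuous_eval p).comp_continuousOn h1

theorem exists_cthickening_prod_closedBall_subset {E W : Type*} [NormedAddCommGroup E]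
    [NormedAddCommGroup W] {L : Set E} (hL : IsCompact L) {A : Set (E × W)} (hA : IsOpen A)
    (hLA : ∀ z ∈ L, (z, 0) ∈ A) : ∃ δ > 0, cthickening δ L ×ˢ closedBall 0 δ ⊆ A := by
  obtain ⟨δ, hδ, hsub⟩ := (hL.prod (isCompact_singleton (x := (0 : W)))).exists_cthickening_subset_open
    hA (fun q hq => by
      obtain ⟨z, ζ⟩ := q
      obtain ⟨hz, rfl⟩ := hq
      exact hLA z hz)
  refine ⟨δ, hδ, fun q hq => hsub ?_⟩
  have h1 := hq.1
  rw [hL.cthickening_eq_biUnion_closedBall hδ.le, mem_iUnion₂] at h1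
  obtain ⟨y, hy, hqy⟩ := h1
  exact mem_cthickening_of_dist_le q (y, 0) δ _ ⟨hy, rfl⟩ (by
    rw [Prod.dist_eq]; exact max_le hqy hq.2)

theorem exists_fibreThickening_subset {E W : Type*} [NormedAddCommGroup E]
    [NormedAddCommGroup W] {K : Set (E × W)} (hK : IsCompact K) {A : Set (E × W)} (hA : IsOpen A)
    (hKA : K ⊆ A) : ∃ δ > 0, fibreThickening K δ ⊆ A := by
  obtain ⟨δ, hδ, hsub⟩ := hK.exists_cthickening_subset_open hA hKA
  refine ⟨δ, hδ, fun q ⟨ζ, hζ, hq⟩ => hsub (mem_cthickening_of_dist_le q (q.1, ζ) δ _ hζ ?_)⟩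
  rw [Prod.dist_eq, dist_self, dist_eq_norm]
  exact max_le hδ.le hq

theorem exists_fatouBieberbach_of_recentredEval (hn : 1 < n) {L : Set (EuclideanSpace ℂ (Fin N))}
    (hL : IsCompact L) {U : Set (EuclideanSpace ℂ (Fin N))} (hU : IsOpen U) (hLU : L ⊆ U)
    {f : EuclideanSpace ℂ (Fin N) → EuclideanSpace ℂ (Fin n)} (hf : DifferentiableOn ℂ f U)
    {K : Set (EuclideanSpace ℂ (Fin N) × EuclideanSpace ℂ (Fin n))} (hK : IsCompact K)
    (hKL : ∀ q ∈ K, q.1 ∈ L) {p : MvPolynomial (Fin N ⊕ Fin n) ℂ}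
    (hpL : ∀ z ∈ L, ‖recentredEval f p (z, 0) - 1‖ < 1 / 4)
    (hpK : ∀ q ∈ K, ‖recentredEval f p q‖ < 1 / 4) :
    ∃ V ⊆ U, IsOpen V ∧ L ⊆ V ∧
      ∃ F : EuclideanSpace ℂ (Fin N) × EuclideanSpace ℂ (Fin n) → EuclideanSpace ℂ (Fin n),
        DifferentiableOn ℂ F (V ×ˢ univ) ∧ ∀ z ∈ V, F (z, 0) = 0 ∧
          Function.Injective (fun ζ => F (z, ζ)) ∧ ∀ ζ, (z, F (z, ζ)) ∉ K := by
  have hcont := continuousOn_recentredEval hf.continuousOn p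
  have hopen : IsOpen (U ×ˢ (univ : Set (EuclideanSpace ℂ (Fin n)))) := hU.prod isOpen_univ
  obtain ⟨δ₁, hδ₁, hsub₁⟩ := exists_cthickening_prod_closedBall_subset hL
    ((hcont.sub continuousOn_const).norm.isOpen_inter_preimage hopen (isOpen_gt' (1 / 4 : ℝ)))
    (fun z hz => ⟨⟨hLU hz, mem_univ _⟩, hpL z hz⟩)
  obtain ⟨δ₂, hδ₂, hsub₂⟩ := exists_fibreThickening_subset hK
    (hcont.norm.isOpen_inter_preimage hopen (isOpen_gt' (1 / 4 : ℝ)))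
    (fun q hq => ⟨⟨hLU (hKL q hq), mem_univ _⟩, hpK q hq⟩)
  obtain ⟨r, rfl⟩ : ∃ r, δ₁ = 2 * r := ⟨δ₁ / 2, by ring⟩
  obtain ⟨ρ, rfl⟩ : ∃ ρ, δ₂ = 2 * ρ := ⟨δ₂ / 2, by ring⟩
  have hr : 0 < r := by linarith
  have hρ : 0 < ρ := by linarith
  set V := cthickening (2 * r) L with hV
  have hVc : IsCompact V := hL.cthickening
  have hVU : V ⊆ U := fun z hz =>
    (hsub₁ (a := (z, 0)) ⟨hz, mem_closedBall_self hδ₁.le⟩).1.1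
  have hLV : L ⊆ V := self_subset_cthickening L
  set Q₁ := V ×ˢ closedBall (0 : EuclideanSpace ℂ (Fin n)) (2 * r)
  set Q₂ := fibreThickening K (2 * ρ)
  have hQ : IsCompact (Q₁ ∪ Q₂) :=
    (hVc.prod (isCompact_closedBall _ _)).union (isCompact_fibreThickening hK _)
  have hQU : ∀ q ∈ Q₁ ∪ Q₂, q.1 ∈ U := fun q hq => hq.elim (fun h => (hsub₁ h).1.1)
    fun h => (hsub₂ h).1.1
  have h₁ : ∀ q ∈ Q₁, ‖recentredEval f p q - 1‖ < 1 / 4 := fun q hq => (hsub₁ hq).2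
  have h₂ : ∀ q ∈ Q₂, ‖recentredEval f p q‖ < 1 / 4 := fun q hq => (hsub₂ hq).2
  have he : 1 < Real.exp 1 := Real.one_lt_exp_iff.2 one_pos
  have hthick : thickening (2 * r) L ⊆ V := thickening_subset_cthickening _ _
  refine ⟨thickening (2 * r) L, hthick.trans hVU, isOpen_thickening,
    self_subset_thickening hδ₁ L, ?_⟩
  refine exists_fatouBieberbach (r := r / (2 * Real.exp 1)) (ρ := ρ / 4) isOpen_thickening
    (hthick.trans hVU) (by positivity) (by positivity) he (fun q hq => ?_) (fun δ hδ => ?_)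
  · by_contra! hlt
    have hle : r / (2 * Real.exp 1) ≤ 2 * r := by
      rw [div_le_iff₀ (by positivity)]
      nlinarith
    have hz : q.1 ∈ L := by obtain ⟨ζ, hζ, _⟩ := hq; exact hKL (q.1, ζ) hζ
    have h3 := h₁ q ⟨hLV hz, mem_closedBall_zero_iff.2 (hlt.le.trans hle)⟩
    have h4 := h₂ q (fibreThickening_mono (by linarith) hq)
    have h5 := norm_sub_le (recentredEval f p q) (recentredEval f p q - 1)
    rw [sub_sub_cancel, norm_one] at h5
    linarith
  · obtain ⟨Φ, Ψ, hA, h0, hΨ, hΦ⟩ := exists_expanding_aut_fixing_zero hVc hVU hK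
      (fun q hq => hLV (hKL q hq)) hr hρ
      (fun ε hε => exists_radial_field hn hU hr hρ hK (fun ε hε k =>
        (expApprox_recentredEval hQ hQU hf p).exists_cutoff (fun q hq => (h₁ q hq).le)
          (fun q hq => (h₂ q hq).le) (expApprox_linear hQ (EuclideanSpace.proj (𝕜 := ℂ) k)) hε) hε)
      hδ
    exact ⟨Φ, Ψ, hA, h0, fun z hz => hΨ z (hthick hz), hΦ⟩

end FatouBieberbach

/-- Variable-fibre version of the main theorem. Let `n > 1`, `L ⊆ ℂᴺ` compact polynomially
convex, and `K̃ ⊆ ℂ^{N+n}` a compact polynomially convex set whose projection to `ℂᴺ` is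
contained in `L`, with fibres `K_z = {ζ : (z,ζ) ∈ K̃}`. Let `f` be holomorphic on a neighbourhood
of `L` with `f(z) ∉ K_z` for all `z ∈ L`. Then there exist a neighbourhood `V` of `L` and a
holomorphic map `F : V × ℂⁿ → ℂⁿ` such that for each `z ∈ V ∩ L`: `F(z,0) = f(z)`,
`ζ ↦ F(z,ζ)` is injective, and `F({z} × ℂⁿ) ∩ K_z = ∅`. -/
theorem stmt_18 (n N : ℕ) (hn : 1 < n)
    (L : Set (EuclideanSpace ℂ (Fin N))) (hLc : IsCompact L) (hLpc : IsPolyConvex L)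
    (Kt : Set (EuclideanSpace ℂ (Fin N) × EuclideanSpace ℂ (Fin n)))
    (hKtc : IsCompact Kt) (hKtpc : IsPolyConvex2 Kt) (hproj : ∀ q ∈ Kt, q.1 ∈ L)
    (U : Set (EuclideanSpace ℂ (Fin N))) (hU : IsOpen U) (hLU : L ⊆ U)
    (f : EuclideanSpace ℂ (Fin N) → EuclideanSpace ℂ (Fin n))
    (hf : DifferentiableOn ℂ f U) (hfK : ∀ z ∈ L, (z, f z) ∉ Kt) :
    ∃ V : Set (EuclideanSpace ℂ (Fin N)), IsOpen V ∧ L ⊆ V ∧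
      ∃ F : EuclideanSpace ℂ (Fin N) × EuclideanSpace ℂ (Fin n) → EuclideanSpace ℂ (Fin n),
        DifferentiableOn ℂ F (V ×ˢ univ) ∧
        ∀ z ∈ V ∩ L, F (z, 0) = f z ∧
          Function.Injective (fun ζ => F (z, ζ)) ∧
          ∀ ζ : EuclideanSpace ℂ (Fin n), (z, F (z, ζ)) ∉ Kt := by
  have hL : ∀ z ∉ L, ∃ p : MvPolynomial (Fin N) ℂ, (∀ w ∈ L, ‖eval (fun i => w i) p‖ ≤ 1) ∧
      1 < ‖eval (fun i => z i) p‖ := fun z hz =>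
    exists_polynomial_of_not_mem_hull (ev := fun (w : EuclideanSpace ℂ (Fin N)) i => w i)
      (by fun_prop) hLc fun h => hz (hLpc.subset h)
  have hK : ∀ q ∉ Kt, ∃ p : MvPolynomial (Fin N ⊕ Fin n) ℂ,
      (∀ w ∈ Kt, ‖eval (prodCoord N n w) p‖ ≤ 1) ∧ 1 < ‖eval (prodCoord N n q) p‖ := fun q hq =>
    exists_polynomial_of_not_mem_hull (prodCoord N n).continuous hKtc fun h => hq (hKtpc.subset
      (by simp only [prodCoord_apply] at h; exact h))
  have hfhol : ∀ z ∈ L, HolAt f z := fun z hz => by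
    filter_upwards [hU.mem_nhds (hLU hz)] with w hw using hf.differentiableAt (hU.mem_nhds hw)
  obtain ⟨p, hpL, hpK⟩ := exists_separating_polynomial hLc hL hKtc hK hproj hfhol hfK
  set K : Set (EuclideanSpace ℂ (Fin N) × EuclideanSpace ℂ (Fin n)) :=
    (fun q => (q.1, q.2 - f q.1)) '' Kt with hKdef
  have hKc : IsCompact K := hKtc.image_of_continuousOn (continuousOn_fst.prodMk
    (continuousOn_snd.sub (hf.continuousOn.comp continuousOn_fst fun q hq => hLU (hproj q hq))))
  obtain ⟨V, hVU, hV, hLV, F, hF, hFV⟩ := exists_fatouBieberbach_of_recentredEval hn hLc hU hLU hf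
    hKc (by rintro _ ⟨q, hq, rfl⟩; exact hproj q hq) (p := p)
    (fun z hz => by
      simp only [recentredEval, zero_add]
      exact (hpL z hz).trans_lt (by norm_num))
    (by
      rintro _ ⟨q, hq, rfl⟩
      simp only [recentredEval, sub_add_cancel]
      exact (hpK q hq).trans_lt (by norm_num))
  refine ⟨V, hV, hLV, fun q => F q + f q.1,
    hF.add (hf.comp differentiableOn_fst fun q hq => hVU hq.1), fun z hz => ?_⟩
  obtain ⟨h0, hinj, havoid⟩ := hFV z hz.1
  refine ⟨by simp only [h0, zero_add], fun ζ ζ' h => hinj (add_right_cancel h), fun ζ hmem => ?_⟩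
  exact havoid ζ ⟨_, hmem, by simp only [add_sub_cancel_right]⟩
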